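/- Let q be a prime power, let G = PSL(2, 𝔽_q) be the quotient of SL(2, 𝔽_q) by its center, let p be any prime, and let P be a Sylow p-subgroup of G. Then for every irreducible complex character χ of G, the restriction χ_P is a sum of characters of the form λ^P induced from irreducible characters λ of subgroups Q ≤ P with χ(1)_p = |P : Q|. -/

import Mathlib

open scoped Classical

/-- The induced character (as a class function formula): for `f` a function on a
subgroup `H` of a finite group `G`, `inducedChar H f g = (1/|H|) ∑_{x ∈ G, xgx⁻¹ ∈ H} f (xgx⁻¹)`. -/
noncomputable def inducedChar {G : Type*} [Group G] [Fintype G] (H : Subgroup G)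
    (f : H → ℂ) : G → ℂ :=
  fun g => (Fintype.card H : ℂ)⁻¹ *
    ∑ x : G, if h : x * g * x⁻¹ ∈ H then f ⟨x * g * x⁻¹, h⟩ else 0

/-- `χ` is the character of an irreducible complex representation of `G`. -/
def IsIrreducibleCharacter {G : Type} [Group G] (χ : G → ℂ) : Prop :=
  ∃ V : FDRep ℂ G, CategoryTheory.Simple V ∧ χ = FDRep.character V

/-- The restriction of `χ` (a character of degree `d` of the ambient group `G`) to the
subgroup `P` is a sum of characters `λ^P` induced from irreducible characters `λ` of
subgroups `Q ≤ P` satisfying `d_p = |P : Q|` (the `p`-part of the degree equals the index). -/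
def SumInducedProperty (p : ℕ) {G : Type} [Group G] [Fintype G] (P : Subgroup G)
    (χ : G → ℂ) (d : ℕ) : Prop :=
  ∃ (n : ℕ) (Q : Fin n → Subgroup ↥P) (lam : (i : Fin n) → ↥(Q i) → ℂ),
    (∀ i, IsIrreducibleCharacter (lam i)) ∧
    (∀ i, p ^ (d.factorization p) = (Q i).index) ∧
    (∀ x : ↥P, χ ↑x = ∑ i, inducedChar (Q i) (lam i) x)

/-!
Let `ρ` be an irreducible representation of `SL(2, F)`, trivial on the center, with character `χ`.
Gelfand's trick, applied to the anti-automorphism `antitranspose`, shows that each nontrivial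
character of the unipotent subgroup `U` occurs in `ρ` at most once, and the diagonal torus permutes
these characters with at most two orbits. With `a` the dimension of the `U`-invariants, this
determines the contribution of the non-elliptic classes to `∑ ‖χ‖ ^ 2 = |G|` well enough to leave
only `a ≤ 2` and the shapes listed in `SeriesType`.

Let `P` be a Sylow `p`-subgroup of `PSL(2, F)`. If `p ∤ χ(1)`, take `Q = P` for each irreducible
constituent of `χ_P`. If `χ` vanishes on the nontrivial elements of `P` and `χ(1)` divides the
group order, then `χ_P` is a multiple of the regular character and `χ(1)_p = |P|`, so `Q = 1`
works. In the remaining cases `p = 2`, `P` is dihedral and `χ(1)_2 = 2`: there `χ` is constant, of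
absolute value at most `2`, on the reflections, and `χ_P` is a sum of characters induced from
subgroups of index two.
-/

noncomputable section

namespace PSL2Restriction

open LinearMap (trace)
open scoped MatrixGroups

/-! ### Isotypic projections and irreducible characters -/

lemma exists_trace_eq_natCast {V : Type*} [AddCommGroup V] [Module ℂ V] [FiniteDimensional ℂ V]
    {E : Module.End ℂ V} (hE : IsIdempotentElem E) : ∃ n : ℕ, trace ℂ V E = n :=
  ⟨_, (LinearMap.IsIdempotentElem.isProj_range E hE).trace⟩

section AbelianGroup

variable {V : Type*} [AddCommGroup V] [Module ℂ V] {A : Type*} [AddCommGroup A] [Fintype A]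

/-- The projection of `V` onto the `ψ`-isotypic part of a finite abelian group `A` acting by `r`. -/
def isotypicProj (r : AddChar A (Module.End ℂ V)) (ψ : AddChar A ℂ) : Module.End ℂ V :=
  (Fintype.card A : ℂ)⁻¹ • ∑ x, ψ (-x) • r x

lemma apply_mul_isotypicProj (r : AddChar A (Module.End ℂ V)) (ψ : AddChar A ℂ) (y : A) :
    r y * isotypicProj r ψ = ψ y • isotypicProj r ψ := by
  simp only [isotypicProj, mul_smul_comm, Finset.mul_sum, smul_comm (ψ y), Finset.smul_sum]
  refine Fintype.sum_equiv (Equiv.addLeft y) _ _ fun x => ?_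
  simp [← r.map_add_eq_mul, smul_smul, ← ψ.map_add_eq_mul]

lemma commute_isotypicProj {r : AddChar A (Module.End ℂ V)} {X : Module.End ℂ V}
    (hX : ∀ x, Commute (r x) X) (ψ : AddChar A ℂ) : Commute (isotypicProj r ψ) X :=
  (Commute.sum_left _ _ _ fun x _ => (hX x).smul_left _).smul_left _

lemma isotypicProj_mul_apply (r : AddChar A (Module.End ℂ V)) (ψ : AddChar A ℂ) (y : A) :
    isotypicProj r ψ * r y = ψ y • isotypicProj r ψ := by
  rw [← apply_mul_isotypicProj]
  refine commute_isotypicProj (fun x => ?_) ψ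
  rw [commute_iff_eq, ← r.map_add_eq_mul, ← r.map_add_eq_mul, add_comm]

lemma isIdempotentElem_isotypicProj (r : AddChar A (Module.End ℂ V)) (ψ : AddChar A ℂ) :
    IsIdempotentElem (isotypicProj r ψ) := by
  have hterm : ∀ x, ψ (-x) • r x * isotypicProj r ψ = isotypicProj r ψ := fun x => by
    rw [smul_mul_assoc, apply_mul_isotypicProj, smul_smul, ← ψ.map_add_eq_mul]
    simp
  change (_ • ∑ x, ψ (-x) • r x) * isotypicProj r ψ = _
  rw [smul_mul_assoc, Finset.sum_mul, Finset.sum_congr rfl fun x _ => hterm x, Finset.sum_const,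
    Finset.card_univ, ← Nat.cast_smul_eq_nsmul ℂ, smul_smul, inv_mul_cancel₀ (by simp), one_smul]

lemma sum_isotypicProj (r : AddChar A (Module.End ℂ V)) : ∑ ψ, isotypicProj r ψ = 1 := by
  simp only [isotypicProj]
  rw [← Finset.smul_sum, Finset.sum_comm]
  simp [← Finset.sum_smul, AddChar.sum_apply_eq_ite, ite_smul]

lemma sum_norm_sq_sum_mul_addChar (m : AddChar A ℂ → ℕ) :
    ∑ x, ‖∑ ψ, (m ψ : ℂ) * ψ x‖ ^ 2 = Fintype.card A * ∑ ψ, (m ψ : ℝ) ^ 2 := by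
  have expand : ∀ x : A, ((‖∑ ψ : AddChar A ℂ, (m ψ : ℂ) * ψ x‖ : ℂ)) ^ 2 =
      ∑ ψ : AddChar A ℂ, ∑ φ : AddChar A ℂ, (m ψ : ℂ) * m φ * (φ - ψ) x := fun x => by
    rw [← Complex.conj_mul', map_sum, Finset.sum_mul_sum]
    refine Finset.sum_congr rfl fun ψ _ => Finset.sum_congr rfl fun φ _ => ?_
    rw [AddChar.sub_apply, map_mul, ← AddChar.map_neg_eq_conj, map_natCast]
    ring
  have key : ∑ x, ((‖∑ ψ, (m ψ : ℂ) * ψ x‖ : ℂ)) ^ 2 = Fintype.card A * ∑ ψ, (m ψ : ℂ) ^ 2 := by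
    simp only [expand]
    rw [Finset.sum_comm, Finset.mul_sum]
    refine Finset.sum_congr rfl fun ψ _ => ?_
    rw [Finset.sum_comm]
    simp only [← Finset.mul_sum, AddChar.sum_eq_ite, sub_eq_zero]
    simp
    ring
  exact_mod_cast key

lemma norm_sum_mul_addChar_le {A : Type*} [AddCommGroup A] [Finite A] (m : AddChar A ℂ → ℕ)
    (x : A) : ‖∑ ψ, (m ψ : ℂ) * ψ x‖ ≤ ∑ ψ, (m ψ : ℝ) :=
  (norm_sum_le _ _).trans (Finset.sum_le_sum fun ψ _ => by simp)

variable [FiniteDimensional ℂ V]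

lemma exists_trace_mul_eq_sum (r : AddChar A (Module.End ℂ V)) {E : Module.End ℂ V}
    (hE : IsIdempotentElem E) (hrE : ∀ x, Commute (r x) E) :
    ∃ m : AddChar A ℂ → ℕ, (∀ ψ, (m ψ : ℂ) = trace ℂ V (isotypicProj r ψ * E)) ∧
      ∀ x, trace ℂ V (r x * E) = ∑ ψ, (m ψ : ℂ) * ψ x := by
  have hcomm := commute_isotypicProj hrE
  choose m hm using fun ψ =>
    exists_trace_eq_natCast ((isIdempotentElem_isotypicProj r ψ).mul_of_commute (hcomm ψ) hE)
  refine ⟨m, fun ψ => (hm ψ).symm, fun x => ?_⟩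
  have decomp : r x * E = ∑ ψ, ψ x • (isotypicProj r ψ * E) := by
    conv_lhs => rw [← mul_one (r x), ← sum_isotypicProj r, Finset.mul_sum, Finset.sum_mul]
    simp only [apply_mul_isotypicProj, smul_mul_assoc]
  rw [decomp, map_sum]
  refine Finset.sum_congr rfl fun ψ _ => ?_
  rw [map_smul, ← hm, smul_eq_mul, mul_comm]

end AbelianGroup

section CharacterTheory

variable {V : Type*} [AddCommGroup V] [Module ℂ V] [FiniteDimensional ℂ V]

/-- A homomorphism from a multiplicative abelian group, seen as an additive character so that
Mathlib's duality for finite abelian groups applies to it. -/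
def additiveAction {B : Type*} [CommGroup B] (f : B →* Module.End ℂ V) :
    AddChar (Additive B) (Module.End ℂ V) :=
  ⟨fun x => f x.toMul, by simp, by simp⟩

open scoped IsMulCommutative in
lemma character_inv {G : Type*} [Group G] [Finite G] (ρ : Representation ℂ G V) (g : G) :
    ρ.character g⁻¹ = starRingEnd ℂ (ρ.character g) := by
  have : Fintype (Additive (Subgroup.zpowers g)) := Fintype.ofFinite _
  obtain ⟨m, -, hm⟩ := exists_trace_mul_eq_sum
    (additiveAction (MonoidHom.comp ρ (Subgroup.zpowers g).subtype)) IsIdempotentElem.one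
    fun _ => Commute.one_right _
  let y : Additive (Subgroup.zpowers g) := Additive.ofMul ⟨g, Subgroup.mem_zpowers g⟩
  have hg := hm y
  have hginv := hm (-y)
  simp only [additiveAction, AddChar.coe_mk, mul_one] at hg hginv
  change trace ℂ V (ρ g⁻¹) = starRingEnd ℂ (trace ℂ V (ρ g))
  rw [show trace ℂ V (ρ g⁻¹) = _ from hginv, show trace ℂ V (ρ g) = _ from hg, map_sum]
  refine Finset.sum_congr rfl fun ψ _ => ?_
  rw [map_mul, ← AddChar.map_neg_eq_conj, map_natCast]

lemma exists_sum_character_mul_eq {G : Type*} [Group G] [Fintype G] (ρ : Representation ℂ G V)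
    (Λ : G →* ℂ) : ∃ n : ℕ, ∑ g, ρ.character g * Λ g⁻¹ = Fintype.card G * n := by
  let twist : Representation ℂ G V :=
    { toFun := fun g => Λ g⁻¹ • ρ g
      map_one' := by simp
      map_mul' := fun a b => by simp [smul_smul, mul_comm] }
  have : Invertible (Nat.card G : ℂ) := invertibleOfNonzero (by simp)
  refine ⟨Module.finrank ℂ twist.invariants, ?_⟩
  rw [← Representation.card_inv_mul_sum_char_eq_finrank (ρ := twist), Nat.card_eq_fintype_card,
    mul_inv_cancel_left₀ (by simp)]
  exact Finset.sum_congr rfl fun g _ => by simp [Representation.character, twist, mul_comm]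

variable {G : Type*} [Group G] [Fintype G]

/-- Irreducibility of a complex representation, in the form `⟨χ, χ⟩ = 1`, which passes to inflations
without effort; compare `FDRep.simple_iff_char_is_norm_one`. -/
def NormOne (ρ : Representation ℂ G V) : Prop :=
  ∑ g, ρ.character g * ρ.character g⁻¹ = Fintype.card G

namespace NormOne

variable {ρ : Representation ℂ G V}

lemma finrank_ne_zero (h : NormOne ρ) : (Module.finrank ℂ V : ℂ) ≠ 0 := by
  intro hzero
  have : Subsingleton V := Module.finrank_zero_iff.1 (by exact_mod_cast hzero)
  have hχ : ∀ g, ρ.character g = 0 := fun g => by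
    rw [Representation.character, Subsingleton.elim (ρ g) 0, map_zero]
  simp only [NormOne, hχ, mul_zero, Finset.sum_const_zero] at h
  exact absurd h.symm (by simp)

lemma eq_smul_one_of_commute (h : NormOne ρ) {X : Module.End ℂ V} (hX : ∀ g, Commute (ρ g) X) :
    X = (trace ℂ V X / Module.finrank ℂ V) • 1 := by
  have : Invertible (Nat.card G : ℂ) := invertibleOfNonzero (by simp)
  have hrank : Module.finrank ℂ (Representation.IntertwiningMap ρ ρ) = 1 := by
    have hdim := Representation.card_inv_mul_sum_char_mul_char_eq_finrank ρ ρ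
    rw [show ∑ g, ρ.character g * ρ.character g⁻¹ = (Fintype.card G : ℂ) from h,
      Nat.card_eq_fintype_card, inv_mul_cancel₀ (by simp)] at hdim
    exact_mod_cast hdim.symm
  have hid : Representation.IntertwiningMap.id ρ ≠ 0 := fun h0 => by
    have hend : (1 : Module.End ℂ V) = 0 :=
      congrArg Representation.IntertwiningMap.toLinearMap h0
    apply h.finrank_ne_zero
    rw [← LinearMap.trace_one ℂ V, hend, map_zero]
  obtain ⟨c, hc⟩ := (finrank_eq_one_iff_of_nonzero' _ hid).1 hrank
    (LinearMap.intertwiningMap_of_isIntertwiningMap ρ ρ X fun g v =>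
      (LinearMap.congr_fun (hX g).eq v).symm)
  obtain rfl : c • (1 : Module.End ℂ V) = X :=
    congrArg Representation.IntertwiningMap.toLinearMap hc
  simp [h.finrank_ne_zero]

lemma sum_conj_eq (h : NormOne ρ) (X : Module.End ℂ V) :
    ∑ g, ρ g * X * ρ g⁻¹ = (Fintype.card G * trace ℂ V X / Module.finrank ℂ V) • 1 := by
  have htrace : ∀ g, trace ℂ V (ρ g * X * ρ g⁻¹) = trace ℂ V X := fun g => by
    rw [LinearMap.trace_mul_comm, ← mul_assoc, ← map_mul]
    simp
  rw [h.eq_smul_one_of_commute (X := ∑ g, ρ g * X * ρ g⁻¹), map_sum]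
  · simp [htrace]
  · intro k
    rw [commute_iff_eq, Finset.mul_sum, Finset.sum_mul]
    refine Fintype.sum_equiv (Equiv.mulLeft k) _ _ fun x => ?_
    simp only [Equiv.coe_mulLeft, mul_inv_rev, map_mul, mul_assoc]
    rw [← map_mul ρ k⁻¹ k, inv_mul_cancel, map_one, mul_one]

lemma sum_trace_mul_smul_eq (h : NormOne ρ) (X : Module.End ℂ V) :
    ∑ g, trace ℂ V (ρ g⁻¹ * X) • ρ g = ((Fintype.card G : ℂ) / Module.finrank ℂ V) • X := by
  let b := Module.finBasis ℂ V
  have rankOne : ∀ (φ : V →ₗ[ℂ] ℂ) (v w : V),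
      ∑ g, φ (ρ g⁻¹ w) • ρ g v = (Fintype.card G / Module.finrank ℂ V * φ v : ℂ) • w := by
    intro φ v w
    have := LinearMap.congr_fun (h.sum_conj_eq (φ.smulRight v)) w
    simpa [LinearMap.trace_smulRight, mul_div_right_comm] using this
  ext v
  have htrace : ∀ g, trace ℂ V (ρ g⁻¹ * X) = ∑ i, b.coord i (ρ g⁻¹ (X (b i))) := fun g => by
    simp [LinearMap.trace_eq_matrix_trace ℂ b, Matrix.trace, LinearMap.toMatrix_apply]
  simp only [htrace, LinearMap.sum_apply, LinearMap.smul_apply, Finset.sum_smul]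
  rw [Finset.sum_comm]
  simp only [rankOne, mul_smul]
  rw [← Finset.smul_sum]
  conv_rhs => rw [← b.sum_repr v, map_sum]
  simp

lemma span_range_eq_top (h : NormOne ρ) : Submodule.span ℂ (Set.range ρ) = ⊤ := by
  refine eq_top_iff.2 fun X _ => ?_
  have hne : (Fintype.card G : ℂ) / Module.finrank ℂ V ≠ 0 :=
    div_ne_zero (by simp) h.finrank_ne_zero
  rw [← inv_smul_smul₀ hne X, ← h.sum_trace_mul_smul_eq X]
  exact Submodule.smul_mem _ _ (Submodule.sum_mem _ fun g _ =>
    Submodule.smul_mem _ _ (Submodule.subset_span ⟨g, rfl⟩))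

/-- Gelfand's trick: a commutative Hecke algebra `E ℂ[G] E` forces `E` to have rank at most one. -/
lemma trace_eq_zero_or_one_of_commute (h : NormOne ρ) {E : Module.End ℂ V}
    (hE : IsIdempotentElem E) (hcomm : ∀ g k, Commute (E * ρ g * E) (E * ρ k * E)) :
    trace ℂ V E = 0 ∨ trace ℂ V E = 1 := by
  have hcommAll : ∀ X Y : Module.End ℂ V, Commute (E * X * E) (E * Y * E) := by
    intro X Y
    have hX : X ∈ Submodule.span ℂ (Set.range ρ) := h.span_range_eq_top ▸ Submodule.mem_top
    have hY : Y ∈ Submodule.span ℂ (Set.range ρ) := h.span_range_eq_top ▸ Submodule.mem_top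
    induction hX, hY using Submodule.span_induction₂ with
    | mem_mem X Y hX hY => obtain ⟨g, rfl⟩ := hX; obtain ⟨k, rfl⟩ := hY; exact hcomm g k
    | zero_left => simp
    | zero_right => simp
    | add_left X X' Y _ _ _ hX hX' => simpa [mul_add, add_mul] using hX.add_left hX'
    | add_right X Y Y' _ _ _ hY hY' => simpa [mul_add, add_mul] using hY.add_right hY'
    | smul_left c X Y _ _ hXY => simpa using hXY.smul_left c
    | smul_right c X Y _ _ hXY => simpa using hXY.smul_right c
  have hproj := LinearMap.IsIdempotentElem.isProj_range E hE
  have hrank : Module.finrank ℂ (LinearMap.range E) ≤ 1 := by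
    by_contra! hlt
    have : Nontrivial (LinearMap.range E) := Module.nontrivial_of_finrank_pos (R := ℂ) (by omega)
    obtain ⟨⟨v, hv⟩, hv0⟩ := exists_ne (0 : LinearMap.range E)
    obtain ⟨φ, hφ⟩ := Module.Projective.exists_dual_eq_one ℂ (by simpa using hv0 : v ≠ 0)
    refine hlt.not_ge (finrank_le_one ⟨v, hv⟩ fun w => ⟨φ w, Subtype.ext ?_⟩)
    have hw : E w = w := hproj.map_id w w.2
    have key := LinearMap.congr_fun (hcommAll (φ.smulRight (w : V)) (φ.smulRight v)).eq v
    simpa [hproj.map_id v hv, hw, hφ] using key.symm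
  rw [hproj.trace]
  exact_mod_cast Nat.le_one_iff_eq_zero_or_eq_one.1 hrank

end NormOne

end CharacterTheory

/-! ### The unipotent Hecke algebra of `SL(2, F)` -/

section SL2

variable {F : Type*} [Field F]

lemma SL2_ext {g h : SL(2, F)} (h00 : g 0 0 = h 0 0) (h01 : g 0 1 = h 0 1) (h10 : g 1 0 = h 1 0)
    (h11 : g 1 1 = h 1 1) : g = h := by
  ext i j
  fin_cases i <;> fin_cases j <;> assumption

lemma SL2_det (g : SL(2, F)) : g 0 0 * g 1 1 - g 0 1 * g 1 0 = 1 := by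
  rw [← Matrix.det_fin_two, g.det_coe]

lemma SL2_inv_apply (g : SL(2, F)) :
    g⁻¹ 0 0 = g 1 1 ∧ g⁻¹ 0 1 = -g 0 1 ∧ g⁻¹ 1 0 = -g 1 0 ∧ g⁻¹ 1 1 = g 0 0 := by
  simp [Matrix.SpecialLinearGroup.SL2_inv_expl]

lemma SL2_mul_apply (g h : SL(2, F)) (i j : Fin 2) :
    (g * h) i j = g i 0 * h 0 j + g i 1 * h 1 j := by
  simp [Matrix.mul_apply, Fin.sum_univ_two]

/-- The element of `SL(2, F)` with rows `(a, b)` and `(c, d)`. -/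
def mkSL2 (a b c d : F) (hdet : a * d - b * c = 1) : SL(2, F) :=
  ⟨!![a, b; c, d], by rw [Matrix.det_fin_two_of, hdet]⟩

@[simp] lemma coe_mkSL2 (a b c d : F) (hdet : a * d - b * c = 1) :
    (mkSL2 a b c d hdet : Matrix (Fin 2) (Fin 2) F) = !![a, b; c, d] := rfl

/-- The upper unitriangular matrices, as a one-parameter subgroup of `SL(2, F)`. -/
def unip : AddChar F SL(2, F) where
  toFun x := mkSL2 1 x 0 1 (by ring)
  map_zero_eq_one' := SL2_ext rfl rfl rfl rfl
  map_add_eq_mul' x y := by apply SL2_ext <;> simp [add_comm]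

/-- The diagonal torus `a ↦ diag(a, a⁻¹)` of `SL(2, F)`. -/
def diag : Fˣ →* SL(2, F) where
  toFun a := mkSL2 a 0 0 (a⁻¹ : Fˣ) (by simp)
  map_one' := by apply SL2_ext <;> simp
  map_mul' a b := by apply SL2_ext <;> simp [mul_comm]

@[simp] lemma coe_unip (x : F) : (unip x : Matrix (Fin 2) (Fin 2) F) = !![1, x; 0, 1] := rfl

@[simp] lemma coe_diag (a : Fˣ) :
    (diag a : Matrix (Fin 2) (Fin 2) F) = !![(a : F), 0; 0, ((a⁻¹ : Fˣ) : F)] := rfl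

lemma diag_mul_unip (a : Fˣ) (x : F) : diag a * unip x = unip (a ^ 2 * x) * diag a := by
  apply SL2_ext <;> simp [pow_two, mul_right_comm]

/-- The anti-automorphism of `SL(2, F)` exchanging the diagonal entries. -/
def antitranspose (g : SL(2, F)) : SL(2, F) :=
  mkSL2 (g 1 1) (g 0 1) (g 1 0) (g 0 0) (by linear_combination SL2_det g)

@[simp] lemma coe_antitranspose (g : SL(2, F)) :
    (antitranspose g : Matrix (Fin 2) (Fin 2) F) = !![g 1 1, g 0 1; g 1 0, g 0 0] := rfl

lemma antitranspose_mul (g h : SL(2, F)) :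
    antitranspose (g * h) = antitranspose h * antitranspose g := by
  apply SL2_ext <;> simp [Matrix.mul_apply, Fin.sum_univ_two] <;> ring

lemma antitranspose_unip (x : F) : antitranspose (unip x) = unip x := by
  apply SL2_ext <;> simp

end SL2

section Hecke

variable {V : Type*} [AddCommGroup V] [Module ℂ V] {F : Type*} [Field F] [Fintype F]
  (ρ : Representation ℂ SL(2, F) V)

/-- The projection onto the `ψ`-isotypic part of `V` for the upper unitriangular subgroup. -/
def unipProj (ψ : AddChar F ℂ) : Module.End ℂ V :=
  isotypicProj (MonoidHom.compAddChar ρ unip) ψ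

lemma isIdempotentElem_unipProj (ψ : AddChar F ℂ) : IsIdempotentElem (unipProj ρ ψ) :=
  isIdempotentElem_isotypicProj _ ψ

/-- The Hecke operator of `g` on the `ψ`-isotypic part for the upper unitriangular subgroup. -/
def heckeOp (ψ : AddChar F ℂ) (g : SL(2, F)) : Module.End ℂ V :=
  unipProj ρ ψ * ρ g * unipProj ρ ψ

variable (ψ : AddChar F ℂ)

lemma heckeOp_unip_mul (x : F) (g : SL(2, F)) :
    heckeOp ρ ψ (unip x * g) = ψ x • heckeOp ρ ψ g := by
  have := isotypicProj_mul_apply (MonoidHom.compAddChar ρ unip) ψ x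
  rw [heckeOp, map_mul, ← mul_assoc, show unipProj ρ ψ * ρ (unip x) = _ from this]
  simp only [smul_mul_assoc, heckeOp, unipProj]

lemma heckeOp_mul_unip (x : F) (g : SL(2, F)) :
    heckeOp ρ ψ (g * unip x) = ψ x • heckeOp ρ ψ g := by
  have := apply_mul_isotypicProj (MonoidHom.compAddChar ρ unip) ψ x
  rw [heckeOp, map_mul, mul_assoc, mul_assoc (ρ g), show ρ (unip x) * unipProj ρ ψ = _ from this]
  simp only [mul_smul_comm, mul_assoc, heckeOp, unipProj]

lemma heckeOp_mul_heckeOp (g h : SL(2, F)) : heckeOp ρ ψ g * heckeOp ρ ψ h =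
    (Fintype.card F : ℂ)⁻¹ • ∑ x, ψ (-x) • heckeOp ρ ψ (g * unip x * h) := by
  have hE := isIdempotentElem_unipProj ρ ψ
  calc heckeOp ρ ψ g * heckeOp ρ ψ h
      = unipProj ρ ψ * ρ g * (unipProj ρ ψ * unipProj ρ ψ) * ρ h * unipProj ρ ψ := by
        simp only [heckeOp, mul_assoc]
    _ = unipProj ρ ψ * ρ g *
          ((Fintype.card F : ℂ)⁻¹ • ∑ x, ψ (-x) • ρ (unip x)) * ρ h * unipProj ρ ψ := by
        rw [hE.eq]; rfl
    _ = _ := by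
        simp only [heckeOp, mul_smul_comm, smul_mul_assoc, Finset.mul_sum, Finset.sum_mul, map_mul,
          mul_assoc]

variable {ψ}

lemma heckeOp_eq_zero (hψ : ψ ≠ 0) {g : SL(2, F)} (hlower : g 1 0 = 0)
    (hdiag : g 0 0 ≠ g 1 1) : heckeOp ρ ψ g = 0 := by
  obtain ⟨z, hz⟩ := AddChar.ne_zero_iff.1 hψ
  have hsub : g 0 0 - g 1 1 ≠ 0 := sub_ne_zero.2 hdiag
  let x := g 0 0 * z / (g 0 0 - g 1 1)
  have hconj : unip x * g = g * unip (x - z) := by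
    apply SL2_ext <;> simp [Matrix.mul_apply, Fin.sum_univ_two, hlower]
    simp only [x]
    field_simp
    ring
  have hψz : ψ x - ψ (x - z) ≠ 0 := by
    have hx : ψ (x - z) * ψ z = ψ x := by rw [← ψ.map_add_eq_mul, sub_add_cancel]
    rw [← hx, ← mul_sub_one]
    refine mul_ne_zero (norm_ne_zero_iff.1 ?_) (sub_ne_zero.2 hz)
    rw [AddChar.norm_apply]
    exact one_ne_zero
  have := congrArg (heckeOp ρ ψ) hconj
  rw [heckeOp_unip_mul, heckeOp_mul_unip, ← sub_eq_zero, ← sub_smul] at this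
  exact (smul_eq_zero.1 this).resolve_left hψz

lemma heckeOp_antitranspose (hψ : ψ ≠ 0) (g : SL(2, F)) :
    heckeOp ρ ψ (antitranspose g) = heckeOp ρ ψ g := by
  by_cases hlower : g 1 0 = 0
  · by_cases hdiag : g 0 0 = g 1 1
    · congr 1
      apply SL2_ext <;> simp [hdiag]
    · rw [heckeOp_eq_zero ρ hψ hlower hdiag,
        heckeOp_eq_zero ρ hψ (by simpa using hlower) (by simpa using Ne.symm hdiag)]
  · obtain ⟨x, hx⟩ : ∃ x, x * g 1 0 = g 1 1 - g 0 0 := ⟨_, div_mul_cancel₀ _ hlower⟩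
    have hconj : antitranspose g = unip x * (g * unip (-x)) := by
      apply SL2_ext <;> simp [Matrix.mul_apply, Fin.sum_univ_two]
      · linear_combination -hx
      · linear_combination x * hx
      · linear_combination hx
    rw [hconj, heckeOp_unip_mul, heckeOp_mul_unip, smul_smul, ← ψ.map_add_eq_mul]
    simp

/-- The Hecke algebra is commutative because the anti-automorphism `antitranspose` acts trivially
on it. -/
lemma commute_heckeOp (hψ : ψ ≠ 0) (g h : SL(2, F)) :
    Commute (heckeOp ρ ψ g) (heckeOp ρ ψ h) := by
  have hτ := heckeOp_antitranspose ρ hψ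
  rw [commute_iff_eq, ← hτ g, ← hτ h, heckeOp_mul_heckeOp, hτ, hτ, heckeOp_mul_heckeOp]
  congr 1
  refine Finset.sum_congr rfl fun x _ => ?_
  rw [← hτ (h * unip x * g), antitranspose_mul, antitranspose_mul, antitranspose_unip, mul_assoc]

end Hecke

lemma exists_index_mul_sum_eq {A : Type*} [Group A] [Fintype A] {H : Subgroup A} {n : A → ℕ}
    (hn : ∀ c, ∀ h ∈ H, n (c * h) = n c) (hle : ∀ c, n c ≤ 1) :
    ∃ s ≤ H.index, H.index * ∑ c, n c = s * Fintype.card A ∧ (s = H.index → ∀ c, n c = 1) := by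
  have hout : ∀ c : A, n (c : A ⧸ H).out = n c := fun c => by
    obtain ⟨h, hh⟩ := QuotientGroup.mk_out_eq_mul H c
    rw [hh, hn _ _ h.2]
  have hindex : ∑ _x : A ⧸ H, 1 = H.index := by
    rw [Finset.sum_const, smul_eq_mul, mul_one, Finset.card_univ, ← Nat.card_eq_fintype_card,
      Subgroup.index_eq_card]
  have hsum : ∑ c, n c = (∑ x : A ⧸ H, n x.out) * Nat.card H := by
    calc ∑ c, n c = ∑ z : (A ⧸ H) × H, n z.1.out :=
          Fintype.sum_equiv Subgroup.groupEquivQuotientProdSubgroup _ _ fun c => (hout c).symm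
      _ = _ := by
          rw [Fintype.sum_prod_type]
          simp [← Finset.mul_sum, mul_comm]
  refine ⟨∑ x : A ⧸ H, n x.out, hindex ▸ Finset.sum_le_sum fun x _ => hle _, ?_, fun hs c => ?_⟩
  · rw [hsum, ← Nat.card_eq_fintype_card, ← H.index_mul_card]
    ring
  · rw [← hout c]
    exact (Finset.sum_eq_sum_iff_of_le fun x _ => hle x.out).1 (hs.trans hindex.symm) _
      (Finset.mem_univ _)

lemma sum_eq_zero_add_sum_units {F : Type*} [Field F] [Fintype F] {M : Type*} [AddCommMonoid M]
    (f : F → M) : ∑ c, f c = f 0 + ∑ c : Fˣ, f c := by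
  rw [Fintype.sum_eq_add_sum_compl 0]
  congr 1
  exact (Finset.sum_bij (fun (c : Fˣ) _ => (c : F)) (by simp) (fun a _ b _ h => Units.ext h)
    (fun b hb => ⟨Units.mk0 b (by simpa using hb), by simp⟩) fun a _ => rfl).symm

lemma exists_bijective_mulShift (F : Type*) [Field F] [Finite F] :
    ∃ ψ : AddChar F ℂ, Function.Bijective ψ.mulShift := by
  have := Fintype.ofFinite F
  have : Nontrivial (AddChar F ℂ) := by
    rw [← Fintype.one_lt_card_iff_nontrivial, AddChar.card_eq]
    exact Fintype.one_lt_card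
  obtain ⟨ψ, hψ⟩ := exists_ne (0 : AddChar F ℂ)
  refine ⟨ψ, (Fintype.bijective_iff_injective_and_card _).2 ⟨?_, AddChar.card_eq.symm⟩⟩
  exact AddChar.to_mulShift_inj_of_isPrimitive (AddChar.IsPrimitive.of_ne_one hψ)

/-- The order of the center of `SL(2, F)`, which is isomorphic to the group of square roots of
unity. -/
def centerOrder (F : Type*) [Field F] : ℕ := Nat.card (rootsOfUnity 2 F)

lemma centerOrder_pos {F : Type*} [Field F] : 0 < centerOrder F := Nat.card_pos

lemma centerOrder_eq_one_or_two {F : Type*} [Field F] : centerOrder F = 1 ∨ centerOrder F = 2 := by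
  have hpos := centerOrder_pos (F := F)
  have hle : centerOrder F ≤ 2 := card_rootsOfUnity F 2
  omega

section Weights

variable {V : Type*} [AddCommGroup V] [Module ℂ V] {F : Type*} [Field F] [Fintype F]
  (ρ : Representation ℂ SL(2, F) V)

/-- The multiplicity of the character `ψ` of the upper unitriangular subgroup in `ρ`. -/
def unipMult (ψ : AddChar F ℂ) : ℕ := Module.finrank ℂ (LinearMap.range (unipProj ρ ψ))

variable [FiniteDimensional ℂ V]

lemma coe_unipMult (ψ : AddChar F ℂ) : (unipMult ρ ψ : ℂ) = trace ℂ V (unipProj ρ ψ) :=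
  (LinearMap.IsIdempotentElem.isProj_range _ (isIdempotentElem_unipProj ρ ψ)).trace.symm

lemma character_unip (x : F) : ρ.character (unip x) = ∑ ψ, (unipMult ρ ψ : ℂ) * ψ x := by
  obtain ⟨m, hm, hx⟩ := exists_trace_mul_eq_sum (MonoidHom.compAddChar ρ unip)
    IsIdempotentElem.one fun _ => Commute.one_right _
  simp only [mul_one] at hm hx
  simp only [coe_unipMult, unipProj, ← hm]
  exact hx x

lemma finrank_eq_sum_unipMult : Module.finrank ℂ V = ∑ ψ, unipMult ρ ψ := by
  have := character_unip ρ 0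
  simp only [AddChar.map_zero_eq_one, Representation.char_one, mul_one] at this
  exact_mod_cast this

lemma sum_norm_sq_character_unip :
    ∑ x : F, ‖ρ.character (unip x)‖ ^ 2 = Fintype.card F * ∑ ψ, (unipMult ρ ψ : ℝ) ^ 2 := by
  simp only [character_unip, sum_norm_sq_sum_mul_addChar]

lemma character_unip_eq_zero (h : ∀ ψ, unipMult ρ ψ = 1) {x : F} (hx : x ≠ 0) :
    ρ.character (unip x) = 0 := by
  simp [character_unip, h, AddChar.sum_apply_eq_ite, hx]

lemma unipMult_mulShift_mul_sq (ψ : AddChar F ℂ) (c a : Fˣ) :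
    unipMult ρ (ψ.mulShift ↑(c * a ^ 2)) = unipMult ρ (ψ.mulShift c) := by
  have hchar : ∀ x : F, ρ.character (unip ((a : F) ^ 2 * x)) = ρ.character (unip x) := fun x => by
    rw [show unip ((a : F) ^ 2 * x) = diag a * unip x * (diag a)⁻¹ by rw [diag_mul_unip]; group]
    exact Representation.char_conj ρ _ _
  have htrace : trace ℂ V (unipProj ρ (ψ.mulShift ↑(c * a ^ 2))) =
      trace ℂ V (unipProj ρ (ψ.mulShift c)) := by
    simp only [unipProj, isotypicProj, map_smul, map_sum]
    congr 1
    refine Fintype.sum_equiv (Equiv.mulLeft₀ ((a : F) ^ 2) (by simp)) _ _ fun x => ?_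
    congr 1
    · simp only [AddChar.mulShift_apply, Equiv.mulLeft₀_apply]
      congr 1
      push_cast
      ring
    · exact (hchar x).symm
  exact_mod_cast (coe_unipMult ρ _).trans (htrace.trans (coe_unipMult ρ _).symm)

variable {ρ}

lemma NormOne.unipMult_le_one (hρ : NormOne ρ) {ψ : AddChar F ℂ} (hψ : ψ ≠ 0) :
    unipMult ρ ψ ≤ 1 := by
  have := hρ.trace_eq_zero_or_one_of_commute (isIdempotentElem_unipProj ρ ψ)
    (commute_heckeOp ρ hψ)
  rw [← coe_unipMult] at this
  exact Nat.le_one_iff_eq_zero_or_eq_one.2 (by exact_mod_cast this)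

lemma NormOne.exists_finrank_eq_unipMult_add (hρ : NormOne ρ) :
    ∃ s D : ℕ, Module.finrank ℂ V = unipMult ρ 0 + D ∧ s ≤ centerOrder F ∧
      centerOrder F * D = s * (Fintype.card F - 1) ∧
      ∑ ψ, unipMult ρ ψ ^ 2 = unipMult ρ 0 ^ 2 + D ∧
      (s = centerOrder F → ∀ ψ ≠ 0, unipMult ρ ψ = 1) := by
  obtain ⟨ψ, hψ⟩ := exists_bijective_mulShift F
  have hzero : ψ.mulShift 0 = 0 := ψ.mulShift_zero
  have hne : ∀ c : Fˣ, ψ.mulShift c ≠ 0 := fun c hc => c.ne_zero (hψ.1 (hc.trans hzero.symm))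
  have hle : ∀ c : Fˣ, unipMult ρ (ψ.mulShift c) ≤ 1 := fun c => hρ.unipMult_le_one (hne c)
  have hsum : ∀ f : AddChar F ℂ → ℕ, ∑ φ, f φ = f 0 + ∑ c : Fˣ, f (ψ.mulShift c) := fun f => by
    rw [← hψ.sum_comp, sum_eq_zero_add_sum_units, hzero]
  have hindex : (powMonoidHom 2 : Fˣ →* Fˣ).range.index = centerOrder F := by
    rw [Subgroup.index_range, ← rootsOfUnity_eq_ker, centerOrder]
  obtain ⟨s, hs, hsD, hs1⟩ := exists_index_mul_sum_eq (H := (powMonoidHom 2 : Fˣ →* Fˣ).range)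
    (n := fun c => unipMult ρ (ψ.mulShift c))
    (by rintro c _ ⟨a, rfl⟩; exact unipMult_mulShift_mul_sq ρ ψ c a) hle
  rw [hindex] at hs hsD hs1
  refine ⟨s, ∑ c : Fˣ, unipMult ρ (ψ.mulShift c), ?_, hs, ?_, ?_, fun h φ hφ => ?_⟩
  · rw [finrank_eq_sum_unipMult ρ, hsum]
  · rw [hsD, Fintype.card_units]
  · rw [hsum]
    congr 1
    refine Finset.sum_congr rfl fun c _ => ?_
    rcases Nat.le_one_iff_eq_zero_or_eq_one.1 (hle c) with h | h <;> rw [h] <;> rfl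
  · obtain ⟨c, rfl⟩ := hψ.2 φ
    exact hs1 h (Units.mk0 c (by rintro rfl; exact hφ hzero))

variable (ρ)

lemma exists_character_diag_eq : ∃ m : AddChar (Additive Fˣ) ℂ → ℕ, ∑ ψ, m ψ = unipMult ρ 0 ∧
    ∀ b : Fˣ, b ^ 2 ≠ 1 → ρ.character (diag b) = ∑ ψ, (m ψ : ℂ) * ψ (Additive.ofMul b) := by
  have hcomm : ∀ b : Additive Fˣ,
      Commute (additiveAction (MonoidHom.comp ρ diag) b) (unipProj ρ 0) := fun b => by
    rw [commute_iff_eq, unipProj, isotypicProj, mul_smul_comm, smul_mul_assoc, Finset.mul_sum,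
      Finset.sum_mul]
    congr 1
    refine Fintype.sum_equiv (Equiv.mulLeft₀ ((b.toMul : F) ^ 2) (by simp)) _ _ fun x => ?_
    have := congrArg ρ (diag_mul_unip b.toMul x)
    simpa [additiveAction] using this
  obtain ⟨m, -, hm⟩ := exists_trace_mul_eq_sum _ (isIdempotentElem_unipProj ρ 0) hcomm
  refine ⟨m, ?_, fun b hb => ?_⟩
  · have := hm 0
    simp only [AddChar.map_zero_eq_one, mul_one, one_mul, ← coe_unipMult] at this
    exact_mod_cast this.symm
  · have hoff : ∀ ψ ≠ 0, trace ℂ V (ρ (diag b) * unipProj ρ ψ) = 0 := fun ψ hψ => by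
      rw [← (isIdempotentElem_unipProj ρ ψ).eq, ← mul_assoc, LinearMap.trace_mul_comm, ← mul_assoc]
      have hdiag : (b : F) ≠ ((b⁻¹ : Fˣ) : F) := fun h =>
        hb (by rw [sq, mul_eq_one_iff_eq_inv]; exact Units.ext h)
      rw [← heckeOp, heckeOp_eq_zero ρ hψ (by simp) (by simpa using hdiag), map_zero]
    rw [← hm (Additive.ofMul b), Representation.character, ← mul_one (ρ (diag b)),
      ← sum_isotypicProj (MonoidHom.compAddChar ρ unip), Finset.mul_sum, map_sum]
    exact Finset.sum_eq_single 0 (fun ψ _ hψ => hoff ψ hψ) (by simp)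

end Weights

/-! ### Subgroups and conjugacy classes of `SL(2, F)` -/

lemma card_eq_two_mul_card_of_mul_mem {G : Type*} [Group G] {T N : Subgroup G} (hle : T ≤ N)
    {s : G} (hsN : s ∈ N) (hsT : s ∉ T) (hmul : ∀ x ∈ N, ∀ y ∈ N, x ∉ T → y ∉ T → x * y ∈ T) :
    Nat.card N = 2 * Nat.card T := by
  have hindex : T.relIndex N = 2 := Subgroup.relIndex_eq_two_iff.2 ⟨s, hsN, fun b hb => by
    by_cases hbT : b ∈ T
    · exact Or.inr ⟨hbT, fun h => hsT ((T.mul_mem_cancel_left hbT).1 h)⟩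
    · exact Or.inl ⟨hmul b hb s hsN hbT hsT, hbT⟩⟩
  rw [← hindex, mul_comm, ← T.relIndex_bot_left, Subgroup.relIndex_mul_relIndex _ _ _ bot_le hle,
    Subgroup.relIndex_bot_left]

section Subgroups

variable {F : Type*} [Field F]

lemma mem_center_SL2 {g : SL(2, F)} :
    g ∈ Subgroup.center SL(2, F) ↔ g 0 1 = 0 ∧ g 1 0 = 0 ∧ g 0 0 = g 1 1 := by
  rw [Matrix.SpecialLinearGroup.mem_center_iff]
  constructor
  · rintro ⟨r, -, hr⟩
    simp [← hr]
  · rintro ⟨h01, h10, hdiag⟩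
    refine ⟨g 0 0, ?_, ?_⟩
    · have := SL2_det g
      simp only [Fintype.card_fin]
      linear_combination this + g 0 1 * h10 + g 0 0 * hdiag
    · ext i j
      fin_cases i <;> fin_cases j <;> simp [h01, h10, hdiag]

lemma card_center_SL2 : Nat.card (Subgroup.center SL(2, F)) = centerOrder F :=
  Nat.card_congr
    (Matrix.SpecialLinearGroup.center_equiv_rootsOfUnity (n := Fin 2) (R := F)).toEquiv

lemma diag_mem_center_iff {a : Fˣ} : diag a ∈ Subgroup.center SL(2, F) ↔ a ^ 2 = 1 := by
  have hdiag : (a : F) = ((a⁻¹ : Fˣ) : F) ↔ a ^ 2 = 1 := by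
    rw [← Units.ext_iff, eq_inv_iff_mul_eq_one, pow_two]
  simpa [mem_center_SL2] using hdiag

lemma diag_injective : Function.Injective (diag : Fˣ → SL(2, F)) := fun a b h => by
  simpa [Units.ext_iff] using congrArg (fun g : SL(2, F) => g 0 0) h

/-- The subgroup of diagonal matrices. -/
def torus (F : Type*) [Field F] : Subgroup SL(2, F) := diag.range

lemma mem_torus {g : SL(2, F)} :
    g ∈ torus F ↔ g 0 1 = 0 ∧ g 1 0 = 0 := by
  constructor
  · rintro ⟨a, rfl⟩
    simp
  · rintro ⟨h01, h10⟩
    have hdet : g 0 0 * g 1 1 = 1 := by linear_combination SL2_det g + g 0 1 * h10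
    refine ⟨⟨g 0 0, g 1 1, hdet, by rw [mul_comm, hdet]⟩, ?_⟩
    apply SL2_ext <;> simp [h01, h10]

/-- The subgroup of monomial matrices, which is the normalizer of the diagonal torus. -/
def monomial (F : Type*) [Field F] : Subgroup SL(2, F) where
  carrier := {g | (g 0 1 = 0 ∧ g 1 0 = 0) ∨ (g 0 0 = 0 ∧ g 1 1 = 0)}
  one_mem' := by simp
  mul_mem' := by
    rintro g h (⟨hg, hg'⟩ | ⟨hg, hg'⟩) (⟨hh, hh'⟩ | ⟨hh, hh'⟩) <;>
      simp [Matrix.mul_apply, Fin.sum_univ_two, *]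
  inv_mem' := by
    rintro g (⟨hg, hg'⟩ | ⟨hg, hg'⟩) <;> simp [Set.mem_ofPred_eq, SL2_inv_apply, *]

lemma mem_monomial {g : SL(2, F)} :
    g ∈ monomial F ↔ (g 0 1 = 0 ∧ g 1 0 = 0) ∨ (g 0 0 = 0 ∧ g 1 1 = 0) := Iff.rfl

lemma torus_le_monomial : torus F ≤ monomial F :=
  fun _ hg => Or.inl (mem_torus.1 hg)

lemma diag_eq_zero_of_mem_monomial {g : SL(2, F)} (hg : g ∈ monomial F)
    (hgT : g ∉ torus F) : g 0 0 = 0 ∧ g 1 1 = 0 :=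
  (mem_monomial.1 hg).resolve_left (mt mem_torus.2 hgT)

lemma mul_mem_torus {g h : SL(2, F)} (hg : g ∈ monomial F) (hh : h ∈ monomial F)
    (hgT : g ∉ torus F) (hhT : h ∉ torus F) :
    g * h ∈ torus F := by
  obtain ⟨hg, hg'⟩ := diag_eq_zero_of_mem_monomial hg hgT
  obtain ⟨hh, hh'⟩ := diag_eq_zero_of_mem_monomial hh hhT
  simp [mem_torus, Matrix.mul_apply, Fin.sum_univ_two, hg, hg', hh, hh']

/-- The Weyl element, with rows `(0, -1)` and `(1, 0)`. -/
def weyl (F : Type*) [Field F] : SL(2, F) := mkSL2 0 (-1) 1 0 (by ring)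

@[simp] lemma coe_weyl : (weyl F : Matrix (Fin 2) (Fin 2) F) = !![0, -1; 1, 0] := rfl

/-- The subgroup of upper triangular matrices. -/
def borel (F : Type*) [Field F] : Subgroup SL(2, F) where
  carrier := {g | g 1 0 = 0}
  one_mem' := by simp
  mul_mem' {g h} hg hh := by simp_all [Matrix.mul_apply, Fin.sum_univ_two]
  inv_mem' {g} hg := by simpa [Set.mem_ofPred_eq, SL2_inv_apply] using hg

lemma mem_borel {g : SL(2, F)} : g ∈ borel F ↔ g 1 0 = 0 := Iff.rfl

/-- Every upper triangular matrix is uniquely `diag a * unip x`. -/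
def borelEquiv (F : Type*) [Field F] : Fˣ × F ≃ borel F where
  toFun z := ⟨diag z.1 * unip z.2, by simp [mem_borel, Matrix.mul_apply, Fin.sum_univ_two]⟩
  invFun g := (⟨g.1 0 0, g.1 1 1, by linear_combination SL2_det g.1 + g.1 0 1 * mem_borel.1 g.2,
    by linear_combination SL2_det g.1 + g.1 0 1 * mem_borel.1 g.2⟩, g.1 1 1 * g.1 0 1)
  left_inv z := by ext <;> simp
  right_inv g := by
    have hdet := SL2_det g.1
    have hlower := mem_borel.1 g.2
    rw [hlower] at hdet
    refine Subtype.ext (SL2_ext ?_ ?_ ?_ ?_) <;> simp [hlower]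
    linear_combination g.1 0 1 * hdet

section Card

variable [Fintype F]

lemma centerOrder_eq : centerOrder F = (Fintype.card F - 1).gcd 2 := by
  rw [centerOrder, rootsOfUnity_eq_ker, IsCyclic.card_powMonoidHom_ker, Nat.card_eq_fintype_card,
    Fintype.card_units]

lemma card_torus : Nat.card (torus F) = Fintype.card F - 1 := by
  rw [← Fintype.card_units, ← Nat.card_eq_fintype_card]
  exact (Nat.card_congr (MonoidHom.ofInjective diag_injective).toEquiv).symm

lemma card_monomial : Nat.card (monomial F) = 2 * (Fintype.card F - 1) := by
  rw [← card_torus]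
  exact card_eq_two_mul_card_of_mul_mem torus_le_monomial (s := weyl F)
    (by simp [mem_monomial]) (by simp [mem_torus])
    fun _ hg _ hh hgT hhT => mul_mem_torus hg hh hgT hhT

lemma card_borel : Nat.card (borel F) = (Fintype.card F - 1) * Fintype.card F := by
  rw [← Nat.card_congr (borelEquiv F)]
  simp [Fintype.card_units]

lemma card_SL2 : Nat.card SL(2, F) =
    Fintype.card F * (Fintype.card F - 1) * (Fintype.card F + 1) := by
  have hcardDet : Nat.card Fˣ = Fintype.card F - 1 := by simp [Fintype.card_units]
  have hker : Nat.card SL(2, F) =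
      Nat.card (Matrix.GeneralLinearGroup.det : GL (Fin 2) F →* Fˣ).ker := by
    have hrange : Matrix.SpecialLinearGroup.toGL.range =
        (Matrix.GeneralLinearGroup.det : GL (Fin 2) F →* Fˣ).ker :=
      SetLike.coe_injective Matrix.SpecialLinearGroup.range_toGL
    rw [← hrange]
    exact Nat.card_congr
      (MonoidHom.ofInjective Matrix.SpecialLinearGroup.toGL_injective).toEquiv
  have hindex := Subgroup.card_mul_index (Matrix.GeneralLinearGroup.det : GL (Fin 2) F →* Fˣ).ker
  rw [Subgroup.index_ker, MonoidHom.range_eq_top.2 Matrix.GeneralLinearGroup.det_surjective,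
    Subgroup.card_top, ← hker, hcardDet, Matrix.card_GL_field, Fin.prod_univ_two] at hindex
  obtain ⟨k, hk⟩ : ∃ k, Fintype.card F = k + 2 :=
    Nat.exists_eq_add_of_le' (Fintype.one_lt_card (α := F))
  refine Nat.eq_of_mul_eq_mul_right (m := Fintype.card F - 1) (by omega) (hindex.trans ?_)
  simp only [hk, Fin.val_zero, Fin.val_one, pow_zero, pow_one]
  have h1 : (k + 2) ^ 2 - 1 = (k + 1) * (k + 3) := Nat.sub_eq_of_eq_add (by ring)
  have h2 : (k + 2) ^ 2 - (k + 2) = (k + 1) * (k + 2) := Nat.sub_eq_of_eq_add (by ring)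
  rw [h1, h2, Nat.add_sub_cancel_right (n := k + 1) (m := 1)]
  ring

lemma index_borel : (borel F).index = Fintype.card F + 1 := by
  have h := (borel F).card_mul_index
  have hq : 1 < Fintype.card F := Fintype.one_lt_card
  rw [card_SL2, card_borel, mul_comm (Fintype.card F)] at h
  exact Nat.eq_of_mul_eq_mul_left (Nat.mul_pos (by omega) (by omega)) h

lemma two_mul_index_monomial :
    2 * (monomial F).index = Fintype.card F * (Fintype.card F + 1) := by
  have h := (monomial F).card_mul_index
  have hq : 1 < Fintype.card F := Fintype.one_lt_card
  rw [card_SL2, card_monomial] at h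
  refine Nat.eq_of_mul_eq_mul_left (show 0 < Fintype.card F - 1 by omega) ?_
  linear_combination h

end Card

end Subgroups

lemma card_filter_conj_mem_le {G : Type*} [Group G] [Fintype G] {X : Set G} {N : Subgroup G}
    (hN : ∀ h ∈ X, ∀ x, x * h * x⁻¹ ∈ X → x ∈ N) (g : G) :
    (Finset.univ.filter fun x => x * g * x⁻¹ ∈ X).card ≤ Nat.card N := by
  rcases (Finset.univ.filter fun x => x * g * x⁻¹ ∈ X).eq_empty_or_nonempty with hempty | ⟨x₀, hx₀⟩
  · simp [hempty]
  rw [Nat.card_eq_fintype_card, Fintype.card_subtype]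
  refine Finset.card_le_card_of_injOn (· * x₀⁻¹) (fun x hx => ?_) (mul_left_injective _).injOn
  simp only [Finset.coe_filter, Finset.mem_filter, Finset.mem_univ, true_and,
    Set.mem_ofPred_eq] at hx hx₀ ⊢
  refine hN _ hx₀ _ ?_
  convert hx using 1
  group

lemma index_mul_sum_le_sum_conjugatesOfSet {G : Type*} [Group G] [Fintype G] {f : G → ℝ}
    (hf0 : ∀ g, 0 ≤ f g) (hf : ∀ x g, f (x * g * x⁻¹) = f g) {X : Set G} {N : Subgroup G}
    (hN : ∀ h ∈ X, ∀ x, x * h * x⁻¹ ∈ X → x ∈ N) :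
    N.index * ∑ g with g ∈ X, f g ≤ ∑ g with g ∈ Group.conjugatesOfSet X, f g := by
  have hmem : ∀ g, g ∈ Group.conjugatesOfSet X ↔ ∃ x, x * g * x⁻¹ ∈ X := fun g => by
    simp only [Group.mem_conjugatesOfSet_iff, isConj_comm, isConj_iff]
    grind
  have hconj : ∀ x : G, ∑ g with x * g * x⁻¹ ∈ X, f g = ∑ h with h ∈ X, f h := fun x => by
    simp only [Finset.sum_filter]
    exact Fintype.sum_equiv (MulAut.conj x).toEquiv _ _ fun g => by simp [hf]
  refine le_of_mul_le_mul_left ?_ (Nat.cast_pos.2 (Nat.card_pos (α := N)))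
  calc (Nat.card N : ℝ) * (N.index * ∑ g with g ∈ X, f g)
      = ∑ x : G, ∑ g with x * g * x⁻¹ ∈ X, f g := by
        simp only [hconj, Finset.sum_const, Finset.card_univ, nsmul_eq_mul, ← mul_assoc]
        rw [← Nat.card_eq_fintype_card, ← N.card_mul_index, Nat.cast_mul]
    _ = ∑ g, (Finset.univ.filter fun x => x * g * x⁻¹ ∈ X).card * f g := by
        simp only [Finset.sum_filter]
        rw [Finset.sum_comm]
        simp only [← Finset.sum_filter, Finset.sum_const, nsmul_eq_mul]
    _ ≤ ∑ g, if g ∈ Group.conjugatesOfSet X then (Nat.card N : ℝ) * f g else 0 := by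
        refine Finset.sum_le_sum fun g _ => ?_
        split_ifs with hg
        · exact mul_le_mul_of_nonneg_right (mod_cast card_filter_conj_mem_le hN g) (hf0 g)
        · have hempty : (Finset.univ.filter fun x => x * g * x⁻¹ ∈ X) = ∅ := by
            simpa [hmem, Finset.filter_eq_empty_iff] using hg
          simp [hempty]
    _ = _ := by rw [← Finset.sum_filter, Finset.mul_sum]

lemma NormOne.sum_norm_sq {V : Type*} [AddCommGroup V] [Module ℂ V] [FiniteDimensional ℂ V]
    {G : Type*} [Group G] [Fintype G] {ρ : Representation ℂ G V} (h : NormOne ρ) :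
    ∑ g, ‖ρ.character g‖ ^ 2 = Fintype.card G := by
  have hterm : ∀ g, ρ.character g * ρ.character g⁻¹ = ((‖ρ.character g‖ ^ 2 : ℝ) : ℂ) := fun g => by
    rw [character_inv, Complex.mul_conj, Complex.normSq_eq_norm_sq]
  have := h
  simp only [NormOne, hterm] at this
  exact_mod_cast this

section ConjugacyClasses

variable {F : Type*} [Field F]

lemma trace_eq_of_isConj {g h : SL(2, F)} (hgh : IsConj g h) :
    (g : Matrix (Fin 2) (Fin 2) F).trace = (h : Matrix (Fin 2) (Fin 2) F).trace := by
  obtain ⟨x, rfl⟩ := isConj_iff.1 hgh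
  rw [Matrix.SpecialLinearGroup.coe_mul, Matrix.trace_mul_comm,
    ← Matrix.SpecialLinearGroup.coe_mul, inv_mul_cancel_left]

/-- An element of `SL(2, F)` is elliptic if its characteristic polynomial has no root in `F`. -/
def IsElliptic (g : SL(2, F)) : Prop :=
  ∀ l : F, l ^ 2 - (g : Matrix (Fin 2) (Fin 2) F).trace * l + 1 ≠ 0

lemma not_isElliptic_of_isConj {g h : SL(2, F)} (hgh : IsConj g h) (hg : g ∈ borel F) :
    ¬IsElliptic h := fun hell => hell (g 0 0) <| by
  rw [← trace_eq_of_isConj hgh, Matrix.trace_fin_two]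
  linear_combination -SL2_det g - g 0 1 * mem_borel.1 hg

/-- The noncentral elements of the product of the center with the upper unitriangular subgroup. -/
def unipotentSet (F : Type*) [Field F] : Set SL(2, F) :=
  {g | g 1 0 = 0 ∧ g 0 0 = g 1 1 ∧ g 0 1 ≠ 0}

/-- The noncentral diagonal matrices. -/
def hyperbolicSet (F : Type*) [Field F] : Set SL(2, F) :=
  {g | g 0 1 = 0 ∧ g 1 0 = 0 ∧ g 0 0 ≠ g 1 1}

lemma mem_unipotentSet {g : SL(2, F)} :
    g ∈ unipotentSet F ↔ g 1 0 = 0 ∧ g 0 0 = g 1 1 ∧ g 0 1 ≠ 0 := Iff.rfl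

lemma mem_hyperbolicSet {g : SL(2, F)} :
    g ∈ hyperbolicSet F ↔ g 0 1 = 0 ∧ g 1 0 = 0 ∧ g 0 0 ≠ g 1 1 := Iff.rfl

lemma mem_borel_of_conj_mem_unipotentSet {h x : SL(2, F)} (hh : h ∈ unipotentSet F)
    (hx : x * h * x⁻¹ ∈ unipotentSet F) : x ∈ borel F := by
  obtain ⟨h10, hdiag, h01⟩ := hh
  have hlower := hx.1
  simp only [Matrix.SpecialLinearGroup.coe_mul, Matrix.mul_apply, Fin.sum_univ_two,
    SL2_inv_apply, h10, hdiag] at hlower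
  have : x 1 0 ^ 2 * h 0 1 = 0 := by linear_combination -hlower
  simpa [mem_borel, h01] using this

lemma mem_monomial_of_conj_mem_hyperbolicSet {h x : SL(2, F)} (hh : h ∈ hyperbolicSet F)
    (hx : x * h * x⁻¹ ∈ hyperbolicSet F) : x ∈ monomial F := by
  obtain ⟨h01, h10, hdiag⟩ := hh
  obtain ⟨hupper, hlower, -⟩ := hx
  have hdiag' := sub_ne_zero.2 hdiag
  simp only [Matrix.SpecialLinearGroup.coe_mul, Matrix.mul_apply, Fin.sum_univ_two,
    SL2_inv_apply, h10, h01] at hupper hlower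
  have hrow0 : x 0 0 = 0 ∨ x 0 1 = 0 := by
    have : x 0 0 * x 0 1 * (h 0 0 - h 1 1) = 0 := by linear_combination -hupper
    simpa [hdiag'] using this
  have hrow1 : x 1 0 = 0 ∨ x 1 1 = 0 := by
    have : x 1 0 * x 1 1 * (h 0 0 - h 1 1) = 0 := by linear_combination hlower
    simpa [hdiag'] using this
  have hdet := SL2_det x
  rw [mem_monomial]
  rcases hrow0 with h0 | h0 <;> rcases hrow1 with h1 | h1 <;> simp_all

lemma disjoint_center_unipotentSet : Disjoint (Subgroup.center SL(2, F) : Set SL(2, F))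
    (Group.conjugatesOfSet (unipotentSet F)) := by
  refine Set.disjoint_left.2 fun g hcenter hg => ?_
  obtain ⟨h, hh, hconj⟩ := Group.mem_conjugatesOfSet_iff.1 hg
  obtain ⟨x, rfl⟩ := isConj_iff.1 hconj
  have hcenter' : h ∈ Subgroup.center SL(2, F) := by
    simpa [mul_assoc] using Subgroup.Normal.conj_mem inferInstance _ hcenter x⁻¹
  exact hh.2.2 (mem_center_SL2.1 hcenter').1

lemma trace_sq_sub_four_eq {g h : SL(2, F)} (hgh : IsConj g h) (hg : g ∈ borel F) :
    (h : Matrix (Fin 2) (Fin 2) F).trace ^ 2 - 4 = (g 0 0 - g 1 1) ^ 2 := by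
  rw [← trace_eq_of_isConj hgh, Matrix.trace_fin_two]
  linear_combination 4 * SL2_det g + 4 * g 0 1 * mem_borel.1 hg

lemma disjoint_hyperbolicSet {X : Set SL(2, F)} (hX : ∀ g ∈ X, g ∈ borel F ∧ g 0 0 = g 1 1) :
    Disjoint (Group.conjugatesOfSet X) (Group.conjugatesOfSet (hyperbolicSet F)) := by
  refine Set.disjoint_left.2 fun g hgX hgT => ?_
  obtain ⟨h, hh, hconj⟩ := Group.mem_conjugatesOfSet_iff.1 hgX
  obtain ⟨k, ⟨-, hk10, hk⟩, hconj'⟩ := Group.mem_conjugatesOfSet_iff.1 hgT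
  have := (trace_sq_sub_four_eq hconj (hX h hh).1).symm.trans (trace_sq_sub_four_eq hconj' hk10)
  rw [(hX h hh).2, sub_self, zero_pow two_ne_zero] at this
  exact hk (sub_eq_zero.1 (pow_eq_zero_iff two_ne_zero |>.1 this.symm))

variable [Fintype F]

lemma sum_classes_le {f : SL(2, F) → ℝ} (hf : ∀ g, 0 ≤ f g) :
    ∑ g with g ∈ Subgroup.center SL(2, F), f g +
      ∑ g with g ∈ Group.conjugatesOfSet (unipotentSet F), f g +
      ∑ g with g ∈ Group.conjugatesOfSet (hyperbolicSet F), f g + ∑ g with IsElliptic g, f g ≤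
    ∑ g, f g := by
  have hZU := Set.disjoint_left.1 (disjoint_center_unipotentSet (F := F))
  have hZT := Set.disjoint_left.1 (disjoint_hyperbolicSet
    (X := (Subgroup.center SL(2, F) : Set SL(2, F))) fun g hg => (mem_center_SL2.1 hg).2)
  have hUT := Set.disjoint_left.1 (disjoint_hyperbolicSet (X := unipotentSet F)
    fun g hg => ⟨hg.1, hg.2.1⟩)
  have hell : ∀ {X : Set SL(2, F)} (g), X ⊆ borel F → g ∈ Group.conjugatesOfSet X →
      ¬IsElliptic g := fun g hX hg => by
    obtain ⟨h, hh, hconj⟩ := Group.mem_conjugatesOfSet_iff.1 hg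
    exact not_isElliptic_of_isConj hconj (hX hh)
  have hZ : ∀ g ∈ Subgroup.center SL(2, F),
      g ∈ Group.conjugatesOfSet (Subgroup.center SL(2, F) : Set SL(2, F)) :=
    fun g hg => Group.subset_conjugatesOfSet hg
  have hellZ : ∀ g ∈ Subgroup.center SL(2, F), ¬IsElliptic g :=
    fun g hg => hell g (fun h hh => (mem_center_SL2.1 hh).2.1) (hZ g hg)
  have hellU := fun g => hell (X := unipotentSet F) g fun h hh => hh.1
  have hellT := fun g => hell (X := hyperbolicSet F) g fun h hh => hh.2.1
  simp only [SetLike.mem_coe] at hZU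
  rw [← Finset.sum_union (by grind [Finset.disjoint_filter]),
    ← Finset.sum_union (by grind [Finset.disjoint_left]),
    ← Finset.sum_union (by grind [Finset.disjoint_left])]
  exact Finset.sum_le_sum_of_subset_of_nonneg (Finset.subset_univ _) fun g _ _ => hf g

end ConjugacyClasses

section Classification

variable {F : Type*} [Field F] [Fintype F]

lemma sum_hyperbolicSet {M : Type*} [AddCommMonoid M] (f : SL(2, F) → M) :
    ∑ g with g ∈ hyperbolicSet F, f g = ∑ b : Fˣ with b ^ 2 ≠ 1, f (diag b) := by
  refine (Finset.sum_nbij diag (fun b hb => ?_) diag_injective.injOn (fun g hg => ?_)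
    fun _ _ => rfl).symm
  · simp only [Finset.mem_filter, Finset.mem_univ, true_and, ne_eq, ← diag_mem_center_iff,
      mem_center_SL2, mem_hyperbolicSet] at hb ⊢
    simpa using hb
  · obtain ⟨h01, h10, hdiag⟩ : g 0 1 = 0 ∧ g 1 0 = 0 ∧ g 0 0 ≠ g 1 1 := by
      simpa [mem_hyperbolicSet] using hg
    obtain ⟨b, rfl⟩ := mem_torus.2 ⟨h01, h10⟩
    refine ⟨b, ?_, rfl⟩
    simpa [← diag_mem_center_iff, mem_center_SL2] using hdiag

lemma sum_unipotentSet {M : Type*} [AddCommMonoid M] (f : SL(2, F) → M) :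
    ∑ g with g ∈ unipotentSet F, f g =
      ∑ z with z ∈ Subgroup.center SL(2, F), ∑ x with x ≠ 0, f (z * unip x) := by
  rw [← Finset.sum_product']
  refine (Finset.sum_nbij (fun z : SL(2, F) × F => z.1 * unip z.2) (fun z hz => ?_)
    (fun z hz w hw h => ?_) (fun g hg => ?_) fun _ _ => rfl).symm
  · simp only [Finset.mem_product, Finset.mem_filter, Finset.mem_univ, true_and,
      mem_center_SL2] at hz
    obtain ⟨⟨h01, h10, hdiag⟩, hx⟩ := hz
    have hne : z.1 1 1 ≠ 0 := fun h => by simpa [h, h10] using SL2_det z.1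
    simp [mem_unipotentSet, Matrix.mul_apply, Fin.sum_univ_two, h01, h10, hdiag, hx, hne]
  · simp only [Finset.coe_product, Set.mem_prod, Finset.coe_filter, Set.mem_ofPred_eq,
      Finset.mem_univ, true_and, mem_center_SL2] at hz hw
    have hdiag : z.1 0 0 = w.1 0 0 := by
      simpa [Matrix.mul_apply, Fin.sum_univ_two] using congrArg (fun g : SL(2, F) => g 0 0) h
    have hcenter : z.1 = w.1 := by apply SL2_ext <;> simp_all
    simp only [hcenter, mul_right_inj] at h
    have hunip : z.2 = w.2 := by simpa using congrArg (fun g : SL(2, F) => g 0 1) h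
    exact Prod.ext hcenter hunip
  · obtain ⟨h10, hdiag, h01⟩ : g 1 0 = 0 ∧ g 0 0 = g 1 1 ∧ g 0 1 ≠ 0 := by
      simpa [mem_unipotentSet] using hg
    have hdet := SL2_det g
    rw [h10, hdiag] at hdet
    have hne : g 1 1 ≠ 0 := fun h => by simp [h] at hdet
    refine ⟨(mkSL2 (g 1 1) 0 0 (g 1 1) (by linear_combination hdet), g 0 1 / g 1 1), ?_, ?_⟩
    · simp [mem_center_SL2, h01, hne]
    · apply SL2_ext <;> simp [h10, hdiag, mul_div_cancel₀ _ hne]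

variable {V : Type*} [AddCommGroup V] [Module ℂ V] [FiniteDimensional ℂ V]
  {ρ : Representation ℂ SL(2, F) V}

lemma sum_norm_sq_character_center (hZ : ∀ z ∈ Subgroup.center SL(2, F), ρ z = 1) :
    ∑ g with g ∈ Subgroup.center SL(2, F), ‖ρ.character g‖ ^ 2 =
      centerOrder F * (Module.finrank ℂ V : ℝ) ^ 2 := by
  have hterm : ∀ z ∈ Finset.univ.filter (· ∈ Subgroup.center SL(2, F)),
      ‖ρ.character z‖ ^ 2 = (Module.finrank ℂ V : ℝ) ^ 2 := fun z hz => by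
    simp [Representation.character, hZ z (by simpa using hz)]
  rw [Finset.sum_congr rfl hterm, Finset.sum_const, nsmul_eq_mul, ← card_center_SL2,
    Nat.card_eq_fintype_card, Fintype.card_subtype]

lemma sum_norm_sq_character_unipotentSet (hZ : ∀ z ∈ Subgroup.center SL(2, F), ρ z = 1) :
    ∑ g with g ∈ unipotentSet F, ‖ρ.character g‖ ^ 2 = centerOrder F *
      (∑ x, ‖ρ.character (unip x)‖ ^ 2 - (Module.finrank ℂ V : ℝ) ^ 2) := by
  have hterm : ∀ z ∈ Finset.univ.filter (· ∈ Subgroup.center SL(2, F)),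
      ∑ x with x ≠ 0, ‖ρ.character (z * unip x)‖ ^ 2 =
        ∑ x, ‖ρ.character (unip x)‖ ^ 2 - (Module.finrank ℂ V : ℝ) ^ 2 := fun z hz => by
    simp only [Representation.character, map_mul, hZ z (by simpa using hz), one_mul]
    rw [Finset.filter_ne', ← Finset.sum_erase_add _ _ (Finset.mem_univ 0)]
    simp
  rw [sum_unipotentSet, Finset.sum_congr rfl hterm, Finset.sum_const, nsmul_eq_mul,
    ← card_center_SL2, Nat.card_eq_fintype_card, Fintype.card_subtype]

lemma NormOne.sum_norm_sq_classes_le (hρ : NormOne ρ)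
    (hZ : ∀ z ∈ Subgroup.center SL(2, F), ρ z = 1) :
    centerOrder F * (Module.finrank ℂ V : ℝ) ^ 2 +
      (Fintype.card F + 1) * (centerOrder F *
        (∑ x, ‖ρ.character (unip x)‖ ^ 2 - (Module.finrank ℂ V : ℝ) ^ 2)) +
      Fintype.card F * (Fintype.card F + 1) / 2 *
        ∑ b : Fˣ with b ^ 2 ≠ 1, ‖ρ.character (diag b)‖ ^ 2 +
      ∑ g with IsElliptic g, ‖ρ.character g‖ ^ 2 ≤
    Fintype.card F * (Fintype.card F - 1) * (Fintype.card F + 1) := by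
  have hnonneg : ∀ g, 0 ≤ ‖ρ.character g‖ ^ 2 := fun g => by positivity
  have hconj : ∀ x g, ‖ρ.character (x * g * x⁻¹)‖ ^ 2 = ‖ρ.character g‖ ^ 2 := fun x g => by
    rw [ρ.char_conj]
  have hU := index_mul_sum_le_sum_conjugatesOfSet hnonneg hconj (X := unipotentSet F)
    (N := borel F) fun h hh x => mem_borel_of_conj_mem_unipotentSet hh
  have hT := index_mul_sum_le_sum_conjugatesOfSet hnonneg hconj (X := hyperbolicSet F)
    (N := monomial F) fun h hh x => mem_monomial_of_conj_mem_hyperbolicSet hh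
  have htotal := sum_classes_le hnonneg
  have hindex : ((monomial F).index : ℝ) = Fintype.card F * (Fintype.card F + 1) / 2 := by
    have : (2 * (monomial F).index : ℝ) = Fintype.card F * (Fintype.card F + 1) :=
      mod_cast two_mul_index_monomial
    linarith
  rw [index_borel, sum_norm_sq_character_unipotentSet hZ] at hU
  rw [hindex, sum_hyperbolicSet] at hT
  rw [hρ.sum_norm_sq, ← Nat.card_eq_fintype_card, card_SL2,
    sum_norm_sq_character_center hZ] at htotal
  push_cast [Fintype.card_pos (α := F)] at hU htotal
  linarith

lemma sum_norm_sq_sum_mul_addChar_units (m : AddChar (Additive Fˣ) ℂ → ℕ) :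
    ∑ b : Fˣ, ‖∑ ψ, (m ψ : ℂ) * ψ (Additive.ofMul b)‖ ^ 2 =
      ((Fintype.card F : ℝ) - 1) * ∑ ψ, (m ψ : ℝ) ^ 2 := by
  have hcard : (Fintype.card (Additive Fˣ) : ℝ) = Fintype.card F - 1 := by
    rw [Fintype.card_congr Additive.toMul, Fintype.card_units]
    push_cast [Fintype.card_pos (α := F)]
    rfl
  rw [← hcard, ← sum_norm_sq_sum_mul_addChar]
  exact Fintype.sum_equiv Additive.ofMul _ _ fun b => rfl

lemma sum_sq_eq_one_norm_sq_sum_mul_addChar_le (m : AddChar (Additive Fˣ) ℂ → ℕ) :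
    ∑ b : Fˣ with b ^ 2 = 1, ‖∑ ψ, (m ψ : ℂ) * ψ (Additive.ofMul b)‖ ^ 2 ≤
      centerOrder F * (∑ ψ, (m ψ : ℝ)) ^ 2 := by
  have hcard : (Finset.univ.filter fun b : Fˣ => b ^ 2 = 1).card = centerOrder F := by
    rw [centerOrder, Nat.card_eq_fintype_card, Fintype.card_subtype]
    simp only [mem_rootsOfUnity]
  rw [← hcard, ← nsmul_eq_mul]
  exact Finset.sum_le_card_nsmul _ _ _ fun b _ =>
    pow_le_pow_left₀ (norm_nonneg _) (norm_sum_mul_addChar_le m (Additive.ofMul b)) 2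

lemma le_sum_norm_sq_character_diag : ((Fintype.card F : ℝ) - 1) * unipMult ρ 0 -
    centerOrder F * (unipMult ρ 0 : ℝ) ^ 2 ≤
      ∑ b : Fˣ with b ^ 2 ≠ 1, ‖ρ.character (diag b)‖ ^ 2 := by
  obtain ⟨m, hm, hχ⟩ := exists_character_diag_eq ρ
  have hm' : ∑ ψ, (m ψ : ℝ) = unipMult ρ 0 := mod_cast hm
  have hparseval := sum_norm_sq_sum_mul_addChar_units m
  have hcenter := sum_sq_eq_one_norm_sq_sum_mul_addChar_le m
  have hsq : (unipMult ρ 0 : ℝ) ≤ ∑ ψ, (m ψ : ℝ) ^ 2 := by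
    rw [← hm']
    exact Finset.sum_le_sum fun ψ _ => mod_cast Nat.le_self_pow two_ne_zero _
  have hne : ∑ b : Fˣ with b ^ 2 ≠ 1, ‖ρ.character (diag b)‖ ^ 2 =
      ∑ b : Fˣ with b ^ 2 ≠ 1, ‖∑ ψ, (m ψ : ℂ) * ψ (Additive.ofMul b)‖ ^ 2 :=
    Finset.sum_congr rfl fun b hb => by rw [hχ b (by simpa using hb)]
  have hq : (0 : ℝ) ≤ Fintype.card F - 1 :=
    sub_nonneg.2 (mod_cast Fintype.card_pos (α := F))
  rw [← Finset.sum_filter_add_sum_filter_not _ fun b : Fˣ => b ^ 2 = 1] at hparseval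
  rw [hm'] at hcenter
  rw [hne]
  linarith [mul_le_mul_of_nonneg_left hsq hq]

end Classification

/-! ### Shapes of the irreducible representations -/

section Series

variable {V : Type*} [AddCommGroup V] [Module ℂ V] {F : Type*} [Field F] [Fintype F]

/-- The possible shapes of an irreducible representation of `PSL(2, F)`, recording the part of the
character table that determines the restrictions to Sylow subgroups. -/
inductive SeriesType (ρ : Representation ℂ SL(2, F) V) : Prop
  | linear (hd : Module.finrank ℂ V = 1)
  | steinberg (hd : Module.finrank ℂ V = Fintype.card F)
      (hunip : ∀ x ≠ 0, ρ.character (unip x) = 0)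
  | halfPrincipal (hcenter : centerOrder F = 2) (hd : 2 * Module.finrank ℂ V = Fintype.card F + 1)
      (hell : ∀ g, IsElliptic g → ρ.character g = 0)
  | principal (hd : Module.finrank ℂ V = Fintype.card F + 1)
      (hell : ∀ g, IsElliptic g → ρ.character g = 0) (m : AddChar (Additive Fˣ) ℂ → ℕ)
      (hm : ∑ ψ, m ψ = 2)
      (hdiag : ∀ b : Fˣ, b ^ 2 ≠ 1 → ρ.character (diag b) = ∑ ψ, (m ψ : ℂ) * ψ (Additive.ofMul b))
  | discrete (s : ℕ) (hd : centerOrder F * Module.finrank ℂ V = s * (Fintype.card F - 1))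
      (hs : s ≤ centerOrder F) (hdiag : ∀ b : Fˣ, b ^ 2 ≠ 1 → ρ.character (diag b) = 0)
      (hell : s = 2 → ∑ g with IsElliptic g, ‖ρ.character g‖ ^ 2 ≤
        (Fintype.card F : ℝ) * (Fintype.card F - 1) * (Fintype.card F - 3))

variable [FiniteDimensional ℂ V] {ρ : Representation ℂ SL(2, F) V}

/-- The bound is what remains of `∑ ‖χ‖ ^ 2 = |G|` after the contributions of the center, the
unipotent and the hyperbolic elements. -/
lemma NormOne.sum_norm_sq_elliptic_le (hρ : NormOne ρ)
    (hZ : ∀ z ∈ Subgroup.center SL(2, F), ρ z = 1) {s D : ℕ}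
    (hd : Module.finrank ℂ V = unipMult ρ 0 + D)
    (hD : centerOrder F * D = s * (Fintype.card F - 1))
    (hsq : ∑ ψ, unipMult ρ ψ ^ 2 = unipMult ρ 0 ^ 2 + D) :
    ∑ g with IsElliptic g, ‖ρ.character g‖ ^ 2 ≤
      Fintype.card F * (Fintype.card F - 1) * (Fintype.card F + 1 -
        (centerOrder F * (unipMult ρ 0 : ℝ) ^ 2 / 2 +
          unipMult ρ 0 * ((Fintype.card F + 1) / 2 - 2 * s) +
          (s * (Fintype.card F + 1) - (s : ℝ) ^ 2 * (Fintype.card F - 1) / centerOrder F))) := by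
  have htotal := hρ.sum_norm_sq_classes_le hZ
  have hdiag := mul_le_mul_of_nonneg_left (le_sum_norm_sq_character_diag (ρ := ρ))
    (show (0 : ℝ) ≤ Fintype.card F * (Fintype.card F + 1) / 2 by positivity)
  have hD' : (centerOrder F : ℝ) * D = s * (Fintype.card F - 1) := by
    have : ((centerOrder F * D : ℕ) : ℝ) = ((s * (Fintype.card F - 1) : ℕ) : ℝ) := by rw [hD]
    push_cast [Fintype.card_pos (α := F)] at this
    exact this
  have hsq' : ∑ ψ, (unipMult ρ ψ : ℝ) ^ 2 = (unipMult ρ 0 : ℝ) ^ 2 + D := mod_cast hsq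
  rw [sum_norm_sq_character_unip, hsq', hd] at htotal
  push_cast at htotal
  rcases centerOrder_eq_one_or_two (F := F) with hε | hε <;>
    simp only [hε, Nat.cast_one, Nat.cast_ofNat] at htotal hdiag hD' ⊢
  · rw [(one_mul (D : ℝ)).symm.trans hD'] at htotal
    linarith
  · have hD'' : (D : ℝ) = s * (Fintype.card F - 1) / 2 := by linarith
    rw [hD''] at htotal
    linarith

lemma unipMult_cases {q a s e : ℕ} (hq : 2 ≤ q) (he : e = 1 ∨ e = 2 ∧ 3 ≤ q) (hs : s ≤ e)
    (hle : (e * (a : ℝ) ^ 2 / 2 + a * ((q + 1) / 2 - 2 * s) +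
      (s * (q + 1) - (s : ℝ) ^ 2 * (q - 1) / e)) ≤ q + 1) :
    a = 0 ∨ a = 1 ∧ s = 0 ∨ e = 2 ∧ a = 1 ∧ s = 1 ∨ (a = 1 ∨ a = 2) ∧ s = e := by
  have hq' : (2 : ℝ) ≤ q := mod_cast hq
  have ha_nonneg : (0 : ℝ) ≤ a := a.cast_nonneg
  have hlt_two : ¬2 ≤ a → a = 0 ∨ a = 1 := by omega
  have hlt_three : ¬3 ≤ a → a = 0 ∨ a = 1 ∨ a = 2 := by omega
  obtain rfl | ⟨rfl, hq3⟩ := he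
  · interval_cases s
    · have := hlt_two fun ha => by
        have ha' : (2 : ℝ) ≤ a := mod_cast ha
        push_cast at hle
        nlinarith
      tauto
    · have := hlt_three fun ha => by
        have ha' : (3 : ℝ) ≤ a := mod_cast ha
        push_cast at hle
        nlinarith
      tauto
  · have hq3' : (3 : ℝ) ≤ q := mod_cast hq3
    interval_cases s
    · have := hlt_two fun ha => by
        have ha' : (2 : ℝ) ≤ a := mod_cast ha
        push_cast at hle
        nlinarith
      tauto
    · have := hlt_two fun ha => by
        have ha' : (2 : ℝ) ≤ a := mod_cast ha
        push_cast at hle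
        nlinarith
      tauto
    · have := hlt_three fun ha => by
        have ha' : (3 : ℝ) ≤ a := mod_cast ha
        push_cast at hle
        nlinarith [mul_nonneg (sub_nonneg.2 ha') ha_nonneg,
          mul_nonneg (sub_nonneg.2 ha') (sub_nonneg.2 hq3')]
      tauto

lemma centerOrder_eq_one_or_two_and_three_le_card :
    centerOrder F = 1 ∨ centerOrder F = 2 ∧ 3 ≤ Fintype.card F := by
  have hgcd := centerOrder_eq (F := F)
  have hcard : 2 ≤ Fintype.card F := Fintype.one_lt_card
  refine centerOrder_eq_one_or_two.imp_right fun h => ⟨h, ?_⟩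
  by_contra hlt
  rw [h, show Fintype.card F = 2 by omega] at hgcd
  norm_num at hgcd

lemma eq_zero_of_sum_norm_sq_nonpos {ι E : Type*} [Fintype ι] [NormedAddCommGroup E]
    {p : ι → Prop} {f : ι → E} (h : ∑ i with p i, ‖f i‖ ^ 2 ≤ 0) (i : ι) (hi : p i) : f i = 0 := by
  have hsum := le_antisymm h (Finset.sum_nonneg fun i _ => by positivity)
  simpa using (Finset.sum_eq_zero_iff_of_nonneg fun i _ => by positivity).1 hsum i
    (by simpa using hi)

lemma NormOne.seriesType (hρ : NormOne ρ) (hZ : ∀ z ∈ Subgroup.center SL(2, F), ρ z = 1) :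
    SeriesType ρ := by
  obtain ⟨s, D, hd, hs, hD, hsq, hone⟩ := hρ.exists_finrank_eq_unipMult_add
  obtain ⟨m, hm, hdiag⟩ := exists_character_diag_eq ρ
  have hle := hρ.sum_norm_sq_elliptic_le hZ hd hD hsq
  have hq : 2 ≤ Fintype.card F := Fintype.one_lt_card
  have hq' : (2 : ℝ) ≤ Fintype.card F := mod_cast hq
  have hε := centerOrder_eq_one_or_two_and_three_le_card (F := F)
  have hnonneg : 0 ≤ ∑ g : SL(2, F) with IsElliptic g, ‖ρ.character g‖ ^ 2 := by positivity
  have hcases := unipMult_cases (a := unipMult ρ 0) hq hε hs <| by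
    have := hnonneg.trans hle
    have hpos : (0 : ℝ) < Fintype.card F * (Fintype.card F - 1) := by nlinarith
    linarith [(mul_nonneg_iff_of_pos_left hpos).1 this]
  rcases hcases with ha | ⟨ha, rfl⟩ | ⟨hε2, ha, rfl⟩ | ⟨ha | ha, rfl⟩ <;> rw [ha] at hd hle hm
  · refine .discrete s (by rw [hd, zero_add, hD]) hs (fun b hb => ?_) fun hs2 => ?_
    · rw [hdiag b hb]
      exact Finset.sum_eq_zero fun ψ _ => by
        simp [Finset.sum_eq_zero_iff.1 hm ψ (Finset.mem_univ _)]
    · rw [hs2, show centerOrder F = 2 by omega] at hle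
      push_cast at hle
      linarith
  · refine .linear ?_
    rcases hε with hε | hε <;> simp_all
  · rw [hε2] at hle hD
    refine .halfPrincipal hε2 (by omega) (eq_zero_of_sum_norm_sq_nonpos ?_)
    push_cast at hle
    linarith
  · have hDq : D = Fintype.card F - 1 := by rcases hε with hε | hε <;> simp_all
    refine .steinberg (by omega) fun x hx => character_unip_eq_zero ρ (fun ψ => ?_) hx
    by_cases hψ : ψ = 0
    · rw [hψ, ha]
    · exact hone rfl ψ hψ
  · have hDq : D = Fintype.card F - 1 := by rcases hε with hε | hε <;> simp_all
    refine .principal (by omega) (eq_zero_of_sum_norm_sq_nonpos ?_) m hm hdiag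
    rcases hε with hε | ⟨hε, -⟩ <;> rw [hε] at hle <;> push_cast at hle <;> linarith

end Series

/-! ### Sums of induced characters -/

section InducedSums

/-- The functions on `P` that are sums of characters induced from irreducible characters of
subgroups of index `k`. -/
def inducedSums (P : Type) [Group P] [Fintype P] (k : ℕ) : AddSubmonoid (P → ℂ) :=
  AddSubmonoid.closure {f | ∃ (Q : Subgroup P) (lam : Q → ℂ),
    IsIrreducibleCharacter lam ∧ k = Q.index ∧ f = inducedChar Q lam}

lemma sumInducedProperty_of_mem_inducedSums {p : ℕ} {G : Type} [Group G] [Fintype G]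
    {P : Subgroup G} {χ : G → ℂ} {d : ℕ}
    (h : (fun x : P => χ x) ∈ inducedSums P (p ^ d.factorization p)) :
    SumInducedProperty p P χ d := by
  obtain ⟨l, hl, hsum⟩ := AddSubmonoid.exists_list_of_mem_closure h
  choose Q lam hirr hindex hlam using fun i : Fin l.length => hl l[i] (by simp)
  refine ⟨l.length, Q, lam, hirr, hindex, fun x => ?_⟩
  rw [← congrFun hsum x, ← Fin.sum_univ_getElem, Finset.sum_apply]
  exact Finset.sum_congr rfl fun i _ => congrFun (hlam i) x

variable {V : Type} [AddCommGroup V] [Module ℂ V] [FiniteDimensional ℂ V]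
  {P : Type} [Group P]

section Fintype

variable [Fintype P]

lemma NormOne.isIrreducibleCharacter {ρ : Representation ℂ P V} (h : NormOne ρ) :
    IsIrreducibleCharacter ρ.character :=
  ⟨FDRep.of ρ, (FDRep.simple_iff_char_is_norm_one _).2 (Nat.card_eq_fintype_card (α := P) ▸ h), rfl⟩

lemma normOne_of_isIrreducible (ρ : Representation ℂ P V) [ρ.IsIrreducible] : NormOne ρ := by
  have h := Representation.char_orthonormal ρ ρ
  rw [if_pos ⟨Representation.Equiv.refl _⟩, inv_mul_eq_one₀ (by simp)] at h
  rw [NormOne, ← Nat.card_eq_fintype_card, h]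

end Fintype

lemma isIrreducibleCharacter_monoidHom [Finite P] (Λ : P →* ℂ) : IsIrreducibleCharacter Λ := by
  have := Fintype.ofFinite P
  let ρ : Representation ℂ P ℂ :=
    { toFun := fun g => Λ g • 1
      map_one' := by simp
      map_mul' := fun a b => by simp [smul_smul, mul_comm] }
  have hρ : ρ.character = Λ := by
    ext g
    simp [Representation.character, ρ]
  rw [← hρ]
  refine NormOne.isIrreducibleCharacter ?_
  simp only [NormOne, hρ, ← map_mul, mul_inv_cancel, map_one]
  simp

lemma character_eq_add_of_isCompl {ρ : Representation ℂ P V} {W W' : Subrepresentation ρ}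
    (h : IsCompl W.toSubmodule W'.toSubmodule) :
    ρ.character = W.toRepresentation.character + W'.toRepresentation.character := by
  ext g
  have hinternal := (DirectSum.isInternal_submodule_iff_isCompl
    (fun b : Bool => if b then W.toSubmodule else W'.toSubmodule) (i := true) (j := false)
    (by simp) (by ext b; cases b <;> simp)).2 (by simpa using h)
  have hmaps : ∀ b : Bool, Set.MapsTo (ρ g)
      (if b then W.toSubmodule else W'.toSubmodule : Submodule ℂ V)
      (if b then W.toSubmodule else W'.toSubmodule : Submodule ℂ V) := by
    rintro (_ | _)
    exacts [fun _ hv => W'.apply_mem_toSubmodule g hv, fun _ hv => W.apply_mem_toSubmodule g hv]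
  rw [Representation.character, LinearMap.trace_eq_sum_trace_restrict hinternal hmaps,
    Fintype.sum_bool]
  rfl

lemma exists_isCompl_subrepresentation [Finite P] [Nontrivial V] {ρ : Representation ℂ P V}
    (h : ¬ ρ.IsIrreducible) :
    ∃ W W' : Subrepresentation ρ, IsCompl W.toSubmodule W'.toSubmodule ∧
      Module.finrank ℂ W.toSubmodule < Module.finrank ℂ V ∧
      Module.finrank ℂ W'.toSubmodule < Module.finrank ℂ V := by
  obtain ⟨W, hbot, htop⟩ : ∃ W : Subrepresentation ρ, W ≠ ⊥ ∧ W ≠ ⊤ := by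
    by_contra! htrivial
    have : Nontrivial (Subrepresentation ρ) :=
      ⟨⊥, ⊤, fun h => bot_ne_top (α := Submodule ℂ V) (congrArg Subrepresentation.toSubmodule h)⟩
    exact h { eq_bot_or_eq_top := fun W => or_iff_not_imp_left.2 (htrivial W) }
  obtain ⟨W', hcompl⟩ := exists_isCompl W
  have hcompl' : IsCompl W.toSubmodule W'.toSubmodule :=
    ⟨disjoint_iff.2 (congrArg Subrepresentation.toSubmodule (disjoint_iff.1 hcompl.1)),
      codisjoint_iff.2 (congrArg Subrepresentation.toSubmodule (codisjoint_iff.1 hcompl.2))⟩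
  have hW : Module.finrank ℂ W.toSubmodule ≠ 0 := fun h0 =>
    hbot (Subrepresentation.toSubmodule_injective (Submodule.finrank_eq_zero.1 h0))
  have hlt : Module.finrank ℂ W.toSubmodule < Module.finrank ℂ V :=
    Submodule.finrank_lt fun h => htop (Subrepresentation.toSubmodule_injective h)
  have hadd := Submodule.finrank_add_eq_of_isCompl hcompl'
  exact ⟨W, W', hcompl', hlt, by omega⟩

lemma character_mem_closure_isIrreducibleCharacter [Finite P] (ρ : Representation ℂ P V) :
    ρ.character ∈ AddSubmonoid.closure {f : P → ℂ | IsIrreducibleCharacter f} := by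
  have := Fintype.ofFinite P
  induction hn : Module.finrank ℂ V using Nat.strong_induction_on generalizing V with
  | _ n ih =>
  by_cases hirr : ρ.IsIrreducible
  · exact AddSubmonoid.subset_closure (normOne_of_isIrreducible ρ).isIrreducibleCharacter
  rcases subsingleton_or_nontrivial V with _ | _
  · convert zero_mem (AddSubmonoid.closure {f : P → ℂ | IsIrreducibleCharacter f})
    ext g
    rw [Representation.character, Subsingleton.elim (ρ g) 0, map_zero, Pi.zero_apply]
  obtain ⟨W, W', hcompl, hW, hW'⟩ := exists_isCompl_subrepresentation hirr
  rw [character_eq_add_of_isCompl hcompl]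
  exact add_mem (ih _ (hn ▸ hW) _ rfl) (ih _ (hn ▸ hW') _ rfl)

lemma exists_finrank_eq_card_mul [Finite P] {ρ : Representation ℂ P V}
    (h : ∀ g ≠ 1, ρ.character g = 0) :
    ∃ n, Module.finrank ℂ V = Nat.card P * n := by
  have := Fintype.ofFinite P
  obtain ⟨n, hn⟩ := exists_sum_character_mul_eq ρ 1
  rw [Finset.sum_eq_single 1 (fun g _ hg => by rw [h g hg, zero_mul]) (by simp)] at hn
  refine ⟨n, ?_⟩
  rw [Nat.card_eq_fintype_card]
  exact_mod_cast (by simpa using hn : (Module.finrank ℂ V : ℂ) = Fintype.card P * n)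

variable [Fintype P]

lemma mem_inducedSums_one {f : P → ℂ} (h : IsIrreducibleCharacter f) : f ∈ inducedSums P 1 := by
  obtain ⟨W, hW, rfl⟩ := h
  refine AddSubmonoid.subset_closure ⟨⊤, fun x => W.character x, ?_, by simp, ?_⟩
  · let ρ : Representation ℂ (⊤ : Subgroup P) W := MonoidHom.comp W.ρ (⊤ : Subgroup P).subtype
    refine NormOne.isIrreducibleCharacter (ρ := ρ) ?_
    rw [NormOne, ← Nat.card_eq_fintype_card, Subgroup.card_top,
      ← (FDRep.simple_iff_char_is_norm_one W).1 hW]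
    exact Fintype.sum_equiv Subgroup.topEquiv.toEquiv _ _ fun x => rfl
  · ext g
    simp [inducedChar, FDRep.char_conj]

lemma character_mem_inducedSums_one (ρ : Representation ℂ P V) :
    ρ.character ∈ inducedSums P 1 :=
  AddSubmonoid.closure_le.2 (fun _ => mem_inducedSums_one)
    (character_mem_closure_isIrreducibleCharacter ρ)

lemma character_mem_inducedSums_card {ρ : Representation ℂ P V}
    (h : ∀ g ≠ 1, ρ.character g = 0) : ρ.character ∈ inducedSums P (Nat.card P) := by
  obtain ⟨n, hn⟩ := exists_finrank_eq_card_mul h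
  have hregular : inducedChar (⊥ : Subgroup P) (1 : _ →* ℂ) ∈
      inducedSums P (Nat.card P) :=
    AddSubmonoid.subset_closure ⟨⊥, _, isIrreducibleCharacter_monoidHom 1, by simp, rfl⟩
  convert nsmul_mem hregular n
  ext g
  by_cases hg : g = 1
  · simp [hg, inducedChar, hn, mul_comm]
  · simp [inducedChar, h g hg, hg]

end InducedSums

lemma sum_nsmul_mem_of_involutive {X M : Type*} [Fintype X] [AddCommMonoid M] {S : AddSubmonoid M}
    {inv : X → X} (hinv : Function.Involutive inv) {m : X → ℕ} (hm : ∀ x, m (inv x) = m x)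
    (heven : ∀ x, inv x = x → Even (m x)) {f : X → M} (hf : ∀ x, f x + f (inv x) ∈ S) :
    ∑ x, m x • f x ∈ S := by
  let e := Fintype.equivFin X
  have hsplit : ∑ x, m x • f x = ∑ x with e x < e (inv x), m x • f x +
      (∑ x with e (inv x) < e x, m x • f x + ∑ x with inv x = x, m x • f x) := by
    simp only [Finset.sum_filter, ← Finset.sum_add_distrib]
    refine Finset.sum_congr rfl fun x _ => ?_
    rw [← e.apply_eq_iff_eq (x := inv x)]
    rcases lt_trichotomy (e x) (e (inv x)) with h | h | h
    · rw [if_pos h, if_neg h.asymm, if_neg h.ne', add_zero, add_zero]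
    · rw [if_neg h.not_lt, if_neg h.not_gt, if_pos h.symm, zero_add, zero_add]
    · rw [if_neg h.asymm, if_pos h, if_neg h.ne, zero_add, add_zero]
  have hreindex : ∑ x with e (inv x) < e x, m x • f x =
      ∑ x with e x < e (inv x), m x • f (inv x) :=
    Finset.sum_nbij' inv inv (by simp [hinv _]) (by simp [hinv _]) (by simp [hinv _])
      (by simp [hinv _]) (by simp [hm, hinv _])
  rw [hsplit, hreindex, ← add_assoc, ← Finset.sum_add_distrib]
  refine add_mem (sum_mem fun x _ => ?_) (sum_mem fun x hx => ?_)
  · rw [← nsmul_add]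
    exact nsmul_mem (hf x) _
  · have hfix : inv x = x := (Finset.mem_filter.1 hx).2
    obtain ⟨n, hn⟩ := heven x hfix
    rw [hn, add_nsmul, ← nsmul_add]
    nth_rewrite 2 [← hfix]
    exact nsmul_mem (hf x) n

section IndexTwo

variable {P : Type*} [Group P]

lemma monoidHom_apply_conj {M : Type*} [CommMonoid M] (f : P →* M) (x g : P) :
    f (x * g * x⁻¹) = f g := by
  rw [map_mul, map_mul, mul_right_comm, ← map_mul, mul_inv_cancel, map_one, one_mul]

lemma index_ker_eq_two {ε : P →* ℂ} (hε : ∀ x, ε x = 1 ∨ ε x = -1) {c : P} (hc : ε c = -1) :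
    ε.ker.index = 2 := by
  refine Subgroup.index_eq_two_iff.2 ⟨c, fun x => ?_⟩
  rcases hε x with hx | hx <;> norm_num [MonoidHom.mem_ker, hx, hc, Xor]

variable {H : Subgroup P}

lemma conj_mem_iff_of_index_eq_two (hH : H.index = 2) {x g : P} : x * g * x⁻¹ ∈ H ↔ g ∈ H :=
  (Subgroup.normal_of_index_eq_two hH).mem_comm_iff.trans (by simp)

lemma exists_notMem_of_index_eq_two (hH : H.index = 2) : ∃ s, s ∉ H := by
  by_contra! h
  simp [(Subgroup.eq_top_iff' H).2 h] at hH

/-- The linear character of `P` with kernel `H`. -/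
def signHom (hH : H.index = 2) : P →* ℂ where
  toFun x := if x ∈ H then 1 else -1
  map_one' := if_pos H.one_mem
  map_mul' x y := by
    by_cases hx : x ∈ H <;> by_cases hy : y ∈ H <;>
      simp [Subgroup.mul_mem_iff_of_index_two hH, hx, hy]

lemma signHom_apply (hH : H.index = 2) (x : P) : signHom hH x = if x ∈ H then 1 else -1 := rfl

variable [Fintype P]

lemma sum_eq_sum_add_sum_mul_of_index_eq_two (hH : H.index = 2) {s : P} (hs : s ∉ H) (f : P → ℂ) :
    ∑ x, f x = ∑ c : H, f c + ∑ c : H, f (c * s) := by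
  have hmul : ∀ x, x * s ∈ H ↔ x ∉ H := fun x => by
    rw [Subgroup.mul_mem_iff_of_index_two hH]
    tauto
  rw [← Finset.sum_filter_add_sum_filter_not Finset.univ (· ∈ H)]
  congr 1
  · exact Finset.sum_subtype _ (by simp) _
  · rw [← Finset.sum_subtype (p := (· ∈ H)) (F := inferInstance) {x | x ∈ H} (by simp)
      fun x => f (x * s)]
    refine (Finset.sum_bij' (fun x _ => x * s) (fun x _ => x * s⁻¹) ?_ ?_ ?_ ?_ ?_).symm
    all_goals simp +contextual [hmul, Subgroup.mul_mem_iff_of_index_two hH, hs]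

lemma inducedChar_apply_of_index_eq_two (hH : H.index = 2) {s : P} (hs : s ∉ H) (θ : H →* ℂ)
    (g : P) :
    inducedChar H θ g = if h : g ∈ H then
      θ ⟨g, h⟩ + θ ⟨s * g * s⁻¹, (conj_mem_iff_of_index_eq_two hH).2 h⟩ else 0 := by
  simp only [inducedChar, conj_mem_iff_of_index_eq_two hH]
  split_ifs with hg
  · have hself : ∀ c : H, θ ⟨c * g * (c : P)⁻¹, (conj_mem_iff_of_index_eq_two hH).2 hg⟩ =
        θ ⟨g, hg⟩ := fun c => monoidHom_apply_conj θ c ⟨g, hg⟩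
    have hcoset : ∀ c : H, θ ⟨c * s * g * (c * s)⁻¹, (conj_mem_iff_of_index_eq_two hH).2 hg⟩ =
        θ ⟨s * g * s⁻¹, (conj_mem_iff_of_index_eq_two hH).2 hg⟩ := fun c => by
      rw [← monoidHom_apply_conj θ c ⟨s * g * s⁻¹, _⟩]
      exact congrArg θ (Subtype.ext (by simp [mul_assoc]))
    rw [sum_eq_sum_add_sum_mul_of_index_eq_two hH hs]
    simp only [hself, hcoset]
    simp [← mul_add]
  · simp

end IndexTwo

section InducedFromIndexTwo

variable {P : Type} [Group P] [Fintype P]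

lemma inducedChar_mem_inducedSums_two {H : Subgroup P} (hH : H.index = 2) (θ : H →* ℂ) :
    inducedChar H θ ∈ inducedSums P 2 :=
  AddSubmonoid.subset_closure ⟨H, θ, isIrreducibleCharacter_monoidHom θ, hH.symm, rfl⟩

lemma one_add_mul_mem_inducedSums_two {ε : P →* ℂ} (hε : ∀ x, ε x = 1 ∨ ε x = -1) {c : P}
    (hc : ε c = -1) (Λ : P →* ℂ) : (fun g => (1 + ε g) * Λ g) ∈ inducedSums P 2 := by
  have hker := index_ker_eq_two hε hc
  convert inducedChar_mem_inducedSums_two hker (Λ.comp ε.ker.subtype) using 1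
  ext g
  have hcker : c ∉ ε.ker := by norm_num [MonoidHom.mem_ker, hc]
  rw [inducedChar_apply_of_index_eq_two hker hcker]
  rcases hε g with hg | hg
  · rw [dif_pos (by exact hg)]
    simp only [MonoidHom.comp_apply, Subgroup.subtype_apply, monoidHom_apply_conj, hg]
    ring
  · rw [dif_neg (by norm_num [MonoidHom.mem_ker, hg]), hg]
    ring

end InducedFromIndexTwo

/-! ### Dihedral groups -/

/-- `P` is a generalized dihedral group with rotation subgroup `C`. Commutativity of `C` follows
from the two conditions. -/
structure IsDihedral {P : Type*} [Group P] (C : Subgroup P) : Prop where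
  index_eq_two : C.index = 2
  mul_self_eq_one : ∀ x ∉ C, x * x = 1

/-- An additive character of `Additive C` as a linear character of `C`. -/
def linearHom {C : Type*} [CommGroup C] (ψ : AddChar (Additive C) ℂ) : C →* ℂ :=
  ⟨⟨fun c => ψ (Additive.ofMul c), ψ.map_zero_eq_one⟩, fun _ _ => ψ.map_add_eq_mul _ _⟩

lemma linearHom_zero {C : Type*} [CommGroup C] :
    linearHom (0 : AddChar (Additive C) ℂ) = 1 := rfl

lemma linearHom_neg_apply {C : Type*} [CommGroup C] (ψ : AddChar (Additive C) ℂ) (c : C) :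
    linearHom (-ψ) c = linearHom ψ c⁻¹ := rfl

lemma exists_linearHom_eq {C : Type*} [CommGroup C] (κ : C →* ℂ) : ∃ ψ, linearHom ψ = κ :=
  ⟨⟨fun c => κ c.toMul, map_one κ, fun _ _ => map_mul κ _ _⟩, rfl⟩

lemma exists_character_eq_sum_linearHom {V : Type*} [AddCommGroup V] [Module ℂ V]
    [FiniteDimensional ℂ V] {C : Type*} [CommGroup C] [Fintype C] (ρ : Representation ℂ C V) :
    ∃ m : AddChar (Additive C) ℂ → ℕ,
      (∀ ψ, ∑ c, ρ.character c * linearHom ψ c⁻¹ = Fintype.card C * m ψ) ∧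
      ∀ c, ρ.character c = ∑ ψ, m ψ * linearHom ψ c := by
  obtain ⟨m, hm, hsum⟩ := exists_trace_mul_eq_sum (additiveAction ρ) IsIdempotentElem.one
    fun _ => Commute.one_right _
  refine ⟨m, fun ψ => ?_, fun c => ?_⟩
  · rw [hm, isotypicProj, mul_one, map_smul, map_sum, smul_eq_mul, Fintype.card_additive,
      mul_inv_cancel_left₀ (by simp)]
    refine Fintype.sum_equiv Additive.ofMul _ _ fun c => ?_
    rw [map_smul, smul_eq_mul, mul_comm]
    rfl
  · have hc := hsum (Additive.ofMul c)
    rwa [mul_one] at hc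

lemma exists_character_eq_finrank_sub {V : Type*} [AddCommGroup V] [Module ℂ V]
    [FiniteDimensional ℂ V] {G : Type*} [Group G] (ρ : Representation ℂ G V) {s : G}
    (hs : s * s = 1) : ∃ n : ℕ, ρ.character s = Module.finrank ℂ V - 2 * n := by
  have hE : IsIdempotentElem ((2⁻¹ : ℂ) • (1 - ρ s)) := by
    have hsq : ρ s * ρ s = 1 := by rw [← map_mul, hs, map_one]
    rw [IsIdempotentElem, smul_mul_smul_comm, mul_sub, sub_mul, sub_mul, hsq]
    module
  obtain ⟨n, hn⟩ := exists_trace_eq_natCast hE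
  refine ⟨n, ?_⟩
  rw [← hn, map_smul, map_sub, LinearMap.trace_one, smul_eq_mul, Representation.character]
  ring

namespace IsDihedral

section Group

variable {P : Type*} [Group P] {C : Subgroup P}

lemma inv_eq_self (hC : IsDihedral C) {s : P} (hs : s ∉ C) : s⁻¹ = s :=
  inv_eq_of_mul_eq_one_left (hC.mul_self_eq_one s hs)

lemma conj_eq_inv (hC : IsDihedral C) {c s : P} (hs : s ∉ C) (hc : c ∈ C) :
    s * c * s⁻¹ = c⁻¹ := by
  have h := hC.mul_self_eq_one _ ((C.mul_mem_cancel_left hc).not.2 hs)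
  refine eq_inv_of_mul_eq_one_right ?_
  rwa [hC.inv_eq_self hs, mul_assoc s, ← mul_assoc]

lemma isMulCommutative (hC : IsDihedral C) : IsMulCommutative C := by
  obtain ⟨s, hs⟩ := exists_notMem_of_index_eq_two hC.index_eq_two
  refine ⟨⟨fun a b => Subtype.ext ?_⟩⟩
  have hab : s * ((b : P)⁻¹ * (a : P)⁻¹) * s⁻¹ =
      (s * (b : P)⁻¹ * s⁻¹) * (s * (a : P)⁻¹ * s⁻¹) := by group
  rw [hC.conj_eq_inv hs (mul_mem (inv_mem b.2) (inv_mem a.2)), hC.conj_eq_inv hs (inv_mem b.2),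
    hC.conj_eq_inv hs (inv_mem a.2)] at hab
  simpa using hab

lemma exists_extension (hC : IsDihedral C) {κ : C →* ℂ} (hκ : ∀ c, κ c⁻¹ = κ c) {s : P}
    (hs : s ∉ C) : ∃ ε : P →* ℂ, (∀ c : C, ε c = κ c) ∧ ∀ c : C, ε (c * s) = κ c := by
  have hmul : ∀ x ∉ C, x * s ∈ C := fun x hx =>
    (Subgroup.mul_mem_iff_of_index_two hC.index_eq_two).2 (by simp [hs, hx])
  let f : P → ℂ := fun x => if h : x ∈ C then κ ⟨x, h⟩ else κ ⟨x * s, hmul x h⟩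
  have hf : ∀ c : C, f c = κ c := fun c => dif_pos c.2
  have hfs : ∀ c : C, f (c * s) = κ c := fun c => by
    rw [show f (c * s) = _ from dif_neg ((C.mul_mem_cancel_left c.2).not.2 hs)]
    exact congrArg κ (Subtype.ext (by simp [mul_assoc, hC.mul_self_eq_one s hs]))
  have hcases : ∀ x : P, (∃ c : C, x = c) ∨ ∃ c : C, x = c * s := fun x => by
    by_cases hx : x ∈ C
    · exact .inl ⟨⟨x, hx⟩, rfl⟩
    · exact .inr ⟨⟨x * s, hmul x hx⟩, by simp [mul_assoc, hC.mul_self_eq_one s hs]⟩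
  have hsc : ∀ c : C, s * (c : P) = (c⁻¹ : C) * s := fun c =>
    mul_inv_eq_iff_eq_mul.1 (hC.conj_eq_inv hs c.2)
  have hfmul : ∀ x y, f (x * y) = f x * f y := fun x y => by
    rcases hcases x with ⟨a, rfl⟩ | ⟨a, rfl⟩ <;> rcases hcases y with ⟨b, rfl⟩ | ⟨b, rfl⟩
    · exact (hf (a * b)).trans (by rw [map_mul, hf, hf])
    · rw [← mul_assoc]
      exact (hfs (a * b)).trans (by rw [map_mul, hf, hfs])
    · rw [mul_assoc, hsc, ← mul_assoc]
      exact (hfs (a * b⁻¹)).trans (by rw [map_mul, hκ, hf, hfs])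
    · rw [mul_assoc, ← mul_assoc s, hsc, mul_assoc, hC.mul_self_eq_one s hs, mul_one]
      exact (hf (a * b⁻¹)).trans (by rw [map_mul, hκ, hfs, hfs])
  exact ⟨⟨⟨f, by simpa using hf 1⟩, hfmul⟩, hf, hfs⟩

variable [Fintype P]

lemma inducedChar_apply (hC : IsDihedral C) (θ : C →* ℂ) (g : P) :
    inducedChar C θ g = if h : g ∈ C then θ ⟨g, h⟩ + θ ⟨g, h⟩⁻¹ else 0 := by
  obtain ⟨s, hs⟩ := exists_notMem_of_index_eq_two hC.index_eq_two
  rw [inducedChar_apply_of_index_eq_two hC.index_eq_two hs]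
  split_ifs with hg
  · exact congrArg (θ _ + θ ·) (Subtype.ext (hC.conj_eq_inv hs hg))
  · rfl

lemma exists_sum_rotation_add_sum_reflection_eq {V : Type*} [AddCommGroup V] [Module ℂ V]
    [FiniteDimensional ℂ V] (hC : IsDihedral C) {ρ : Representation ℂ P V} {v : ℂ}
    (hv : ∀ x ∉ C, ρ.character x = v) {s : P} (hs : s ∉ C) (Λ : P →* ℂ) :
    ∃ n : ℕ, ∑ c : C, ρ.character c * Λ (c : P)⁻¹ + v * ∑ c : C, Λ (c * s) =
      Fintype.card C * (2 * n) := by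
  obtain ⟨n, hn⟩ := exists_sum_character_mul_eq ρ Λ
  refine ⟨n, ?_⟩
  have hreflection : ∀ c : C, ρ.character (c * s) * Λ (c * s)⁻¹ = v * Λ (c * s) := fun c => by
    have hcs : c * s ∉ C := (C.mul_mem_cancel_left c.2).not.2 hs
    rw [hv _ hcs, hC.inv_eq_self hcs]
  have hcard : Fintype.card P = Fintype.card C * 2 := by
    simp only [← Nat.card_eq_fintype_card, ← hC.index_eq_two, C.card_mul_index]
  rw [sum_eq_sum_add_sum_mul_of_index_eq_two hC.index_eq_two hs, hcard,
    Finset.sum_congr rfl fun c _ => hreflection c, ← Finset.mul_sum] at hn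
  rw [hn]
  push_cast
  ring

end Group

end IsDihedral

namespace IsDihedral

section CharacterMultiplicities

open scoped IsMulCommutative

variable {V : Type*} [AddCommGroup V] [Module ℂ V] {P : Type*} [Group P] {C : Subgroup P}
  {ρ : Representation ℂ P V} {v : ℂ}

lemma reflection_value_eq [FiniteDimensional ℂ V] (hC : IsDihedral C)
    (hv : ∀ x ∉ C, ρ.character x = v) (hv2 : ‖v‖ ≤ 2)
    (hd : Even (Module.finrank ℂ V)) : v = 0 ∨ v = 2 ∨ v = -2 := by
  obtain ⟨s, hs⟩ := exists_notMem_of_index_eq_two hC.index_eq_two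
  obtain ⟨n, hn⟩ := exists_character_eq_finrank_sub ρ (hC.mul_self_eq_one s hs)
  obtain ⟨r, hr⟩ := hd
  obtain ⟨k, rfl⟩ : ∃ k : ℤ, v = (2 * k : ℤ) := ⟨r - n, by rw [← hv s hs, hn, hr]; push_cast; ring⟩
  have hk : |2 * k| ≤ 2 := by
    rw [Complex.norm_intCast] at hv2
    exact_mod_cast hv2
  rw [abs_le] at hk
  obtain rfl | rfl | rfl : k = 0 ∨ k = 1 ∨ k = -1 := by omega
  all_goals norm_num

variable [Fintype P] [IsMulCommutative C] {m : AddChar (Additive C) ℂ → ℕ}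

lemma mult_neg (hC : IsDihedral C)
    (hm : ∀ ψ, ∑ c : C, ρ.character c * linearHom ψ c⁻¹ = Fintype.card C * m ψ)
    (ψ : AddChar (Additive C) ℂ) : m (-ψ) = m ψ := by
  obtain ⟨s, hs⟩ := exists_notMem_of_index_eq_two hC.index_eq_two
  have h : (Fintype.card C : ℂ) * m (-ψ) = Fintype.card C * m ψ := by
    rw [← hm, ← hm]
    refine Fintype.sum_equiv (Equiv.inv C) _ _ fun c => ?_
    rw [linearHom_neg_apply, Equiv.inv_apply, Subgroup.coe_inv, ← hC.conj_eq_inv hs c.2,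
      Representation.char_conj]
  exact_mod_cast mul_left_cancel₀ (by simp) h

variable [FiniteDimensional ℂ V]

lemma even_mult_of_neg_eq_self (hC : IsDihedral C) (hv : ∀ x ∉ C, ρ.character x = v)
    (hm : ∀ ψ, ∑ c : C, ρ.character c * linearHom ψ c⁻¹ = Fintype.card C * m ψ)
    {ψ : AddChar (Additive C) ℂ} (hψ : -ψ = ψ) (hne : ψ ≠ 0) : Even (m ψ) := by
  obtain ⟨s, hs⟩ := exists_notMem_of_index_eq_two hC.index_eq_two
  have hinv : ∀ c, linearHom ψ c⁻¹ = linearHom ψ c := fun c => by rw [← linearHom_neg_apply, hψ]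
  obtain ⟨ε, hε, hεs⟩ := hC.exists_extension hinv hs
  obtain ⟨n, hn⟩ := hC.exists_sum_rotation_add_sum_reflection_eq hv hs ε
  have hsum : ∑ c : C, linearHom ψ c = 0 :=
    (Fintype.sum_equiv Additive.ofMul _ _ fun _ => rfl).trans
      (AddChar.sum_eq_zero_iff_ne_zero.2 hne)
  simp only [hεs, hsum, mul_zero, add_zero, ← Subgroup.coe_inv, hε, hm] at hn
  have h : (m ψ : ℂ) = 2 * n := mul_left_cancel₀ (by simp) hn
  exact ⟨n, by rw [← two_mul]; exact_mod_cast h⟩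

lemma exists_mult_zero_add_eq (hC : IsDihedral C) (hv : ∀ x ∉ C, ρ.character x = v)
    (hm : ∀ ψ, ∑ c : C, ρ.character c * linearHom ψ c⁻¹ = Fintype.card C * m ψ) :
    ∃ a b : ℕ, (m 0 : ℂ) + v = 2 * a ∧ (m 0 : ℂ) - v = 2 * b := by
  obtain ⟨s, hs⟩ := exists_notMem_of_index_eq_two hC.index_eq_two
  have hm0 := hm 0
  simp only [linearHom_zero, MonoidHom.one_apply, mul_one] at hm0
  obtain ⟨a, ha⟩ := hC.exists_sum_rotation_add_sum_reflection_eq hv hs 1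
  obtain ⟨b, hb⟩ :=
    hC.exists_sum_rotation_add_sum_reflection_eq hv hs (signHom hC.index_eq_two)
  have hcs : ∀ c : C, (c : P) * s ∉ C := fun c => (C.mul_mem_cancel_left c.2).not.2 hs
  simp only [MonoidHom.one_apply, mul_one, hm0] at ha
  simp only [signHom_apply, inv_mem_iff, SetLike.coe_mem, if_true, hcs, if_false, mul_one,
    hm0] at hb
  refine ⟨a, b, mul_left_cancel₀ (a := (Fintype.card C : ℂ)) (by simp) ?_,
    mul_left_cancel₀ (a := (Fintype.card C : ℂ)) (by simp) ?_⟩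
  · rw [← ha]
    simp
    ring
  · rw [← hb]
    simp
    ring

end CharacterMultiplicities

lemma exists_sum_mul_eq_add_two {A : Type*} [AddCommGroup A] [Fintype A] {m : A → ℕ}
    (hm : ∀ a, m (-a) = m a) (heven : ∀ a, -a = a → Even (m a)) {k : A} (hne : k ≠ 0)
    (hk : -k = k) (hm0 : m 0 ≠ 0) (hmk : m k ≠ 0) :
    ∃ n : A → ℕ, (∀ a, n (-a) = n a) ∧ (∀ a, -a = a → Even (n a)) ∧
      ∀ f : A → ℂ, ∑ a, m a * f a = ∑ a, n a * f a + (2 * f 0 + 2 * f k) := by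
  obtain ⟨n, hn⟩ : ∃ n : A → ℕ, ∀ a, m a = n a + if a = 0 ∨ a = k then 2 else 0 := by
    suffices h : ∀ a, ∃ l : ℕ, m a = l + if a = 0 ∨ a = k then 2 else 0 from
      Classical.skolem.1 h
    intro a
    split_ifs with h
    · obtain ⟨r, hr⟩ : Even (m a) := by
        rcases h with rfl | rfl
        exacts [heven 0 neg_zero, heven a hk]
      have hpos : m a ≠ 0 := by rcases h with rfl | rfl <;> assumption
      exact ⟨m a - 2, by omega⟩
    · exact ⟨m a, rfl⟩
  have hiff : ∀ a, (-a = 0 ∨ -a = k) ↔ (a = 0 ∨ a = k) := fun a => by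
    rw [neg_eq_zero, neg_eq_iff_eq_neg, hk]
  refine ⟨n, fun a => ?_, fun a ha => ?_, fun f => ?_⟩
  · have h := hm a
    simp only [hn, hiff] at h
    omega
  · have h := heven a ha
    rw [hn, Nat.even_add] at h
    exact h.2 (by split_ifs <;> decide)
  · have htwo : ∑ a, (if a = 0 ∨ a = k then 2 else 0 : ℂ) * f a = 2 * f 0 + 2 * f k := by
      rw [Fintype.sum_eq_add 0 k hne.symm fun a h => by simp [h.1, h.2]]
      simp
    rw [← htwo, ← Finset.sum_add_distrib]
    refine Finset.sum_congr rfl fun a _ => ?_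
    rw [hn, ← add_mul]
    push_cast
    rfl

lemma neg_eq_self_of_linearHom_eq_one_or {C : Type*} [CommGroup C] {κ : AddChar (Additive C) ℂ}
    (hκ : ∀ c, linearHom κ c = 1 ∨ linearHom κ c = -1) : -κ = κ := DFunLike.ext _ _ fun c => by
  rw [AddChar.neg_apply, AddChar.map_neg_eq_inv]
  rcases hκ c.toMul with h | h <;>
  · change κ c = _ at h
    norm_num [h]

section InducedSums

open scoped IsMulCommutative

variable {P : Type} [Group P] [Fintype P] {C : Subgroup P}

/-- Extension by zero to `P` of a function on the subgroup `C`. -/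
def extendZero (f : C → ℂ) (g : P) : ℂ := if h : g ∈ C then f ⟨g, h⟩ else 0

lemma sum_mult_extendZero_mem [IsMulCommutative C] (hC : IsDihedral C)
    {m : AddChar (Additive C) ℂ → ℕ} (hm : ∀ ψ, m (-ψ) = m ψ)
    (heven : ∀ ψ, -ψ = ψ → Even (m ψ)) :
    ∑ ψ, m ψ • extendZero (linearHom ψ) ∈ inducedSums P 2 := by
  refine sum_nsmul_mem_of_involutive neg_involutive hm heven fun ψ => ?_
  convert inducedChar_mem_inducedSums_two hC.index_eq_two (linearHom ψ) using 1
  ext g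
  rw [hC.inducedChar_apply, Pi.add_apply, extendZero, extendZero]
  split_ifs
  · rw [linearHom_neg_apply]
  · rw [add_zero]

lemma ite_two_add_mem_inducedSums_two (hC : IsDihedral C) {κ : C →* ℂ}
    (hκ : ∀ c, κ c = 1 ∨ κ c = -1) {c₀ : C} (hc₀ : κ c₀ = -1) {v : ℂ} (hv : v = 2 ∨ v = -2) :
    (fun g => if h : g ∈ C then 2 + 2 * κ ⟨g, h⟩ else v) ∈ inducedSums P 2 := by
  obtain ⟨s, hs⟩ := exists_notMem_of_index_eq_two hC.index_eq_two
  have hinv : ∀ c, κ c⁻¹ = κ c := fun c => by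
    rw [← mul_one (κ c⁻¹), ← mul_self_eq_one_iff.2 (hκ c), ← mul_assoc, ← map_mul, inv_mul_cancel,
      map_one, one_mul]
  obtain ⟨ε, hε, hεs⟩ := hC.exists_extension hinv hs
  have hmul : ∀ x ∉ C, x * s⁻¹ ∈ C := fun x hx =>
    (Subgroup.mul_mem_iff_of_index_two hC.index_eq_two).2 (by simp [hs, hx])
  have hεsign : ∀ x, ε x = 1 ∨ ε x = -1 := fun x => by
    by_cases hx : x ∈ C
    · exact hε ⟨x, hx⟩ ▸ hκ _
    · have h := hεs ⟨x * s⁻¹, hmul x hx⟩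
      rw [inv_mul_cancel_right] at h
      exact h ▸ hκ _
  let σ := signHom hC.index_eq_two
  have hσsign : ∀ x, (ε * σ) x = 1 ∨ (ε * σ) x = -1 := fun x => by
    rcases hεsign x with h | h <;> by_cases hx : x ∈ C <;> simp [σ, signHom_apply, h, hx]
  -- The function is `(1 + ε) + (1 + ε σ)` or its twist by `σ`.
  have hblock : ∀ Λ : P →* ℂ,
      (fun g => (1 + ε g) * Λ g + (1 + (ε * σ) g) * Λ g) ∈ inducedSums P 2 := fun Λ =>
    add_mem (one_add_mul_mem_inducedSums_two hεsign ((hε c₀).trans hc₀) Λ)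
      (one_add_mul_mem_inducedSums_two hσsign (c := c₀) (by simp [σ, signHom_apply, hε, hc₀]) Λ)
  rcases hv with rfl | rfl
  · convert hblock 1 using 2 with g
    split_ifs with hg
    · simp [σ, signHom_apply, hg, ← hε]; ring
    · simp [σ, signHom_apply, hg]; ring
  · convert hblock σ using 2 with g
    split_ifs with hg
    · simp [σ, signHom_apply, hg, ← hε]; ring
    · simp [σ, signHom_apply, hg]; ring

lemma ite_sum_mult_mem_inducedSums_two [IsMulCommutative C] (hC : IsDihedral C)
    {m : AddChar (Additive C) ℂ → ℕ} (hm : ∀ ψ, m (-ψ) = m ψ)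
    (heven : ∀ ψ, -ψ = ψ → Even (m ψ)) {κ : AddChar (Additive C) ℂ}
    (hκ : ∀ c, linearHom κ c = 1 ∨ linearHom κ c = -1) {c₀ : C} (hc₀ : linearHom κ c₀ = -1)
    (hm0 : m 0 ≠ 0) (hmκ : m κ ≠ 0) {v : ℂ} (hv : v = 2 ∨ v = -2) :
    (fun g => if h : g ∈ C then ∑ ψ, m ψ * linearHom ψ ⟨g, h⟩ else v) ∈ inducedSums P 2 := by
  have hne : κ ≠ 0 := by
    rintro rfl
    norm_num [linearHom_zero] at hc₀
  obtain ⟨n, hn, hneven, hsum⟩ :=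
    exists_sum_mul_eq_add_two hm heven hne (neg_eq_self_of_linearHom_eq_one_or hκ) hm0 hmκ
  convert add_mem (hC.sum_mult_extendZero_mem hn hneven)
    (hC.ite_two_add_mem_inducedSums_two hκ hc₀ hv) using 1
  ext g
  simp only [Pi.add_apply, Finset.sum_apply, Pi.smul_apply, extendZero]
  split_ifs with hg
  · rw [hsum fun ψ => linearHom ψ ⟨g, hg⟩]
    simp [linearHom_zero]
  · simp

lemma character_mem_inducedSums_two {V : Type} [AddCommGroup V] [Module ℂ V]
    [FiniteDimensional ℂ V] {ρ : Representation ℂ P V} {v : ℂ} (hC : IsDihedral C)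
    (hv : ∀ x ∉ C, ρ.character x = v) (hv2 : ‖v‖ ≤ 2) (hd : Even (Module.finrank ℂ V))
    {κ : C →* ℂ} (hκ : ∀ c, κ c = 1 ∨ κ c = -1) {c₀ : C} (hc₀ : κ c₀ = -1)
    (hmult : ∑ c : C, ρ.character c * κ c ≠ 0) : ρ.character ∈ inducedSums P 2 := by
  have := hC.isMulCommutative
  obtain ⟨ψ, rfl⟩ := exists_linearHom_eq κ
  obtain ⟨m, hm, hsum⟩ := exists_character_eq_sum_linearHom (MonoidHom.comp ρ C.subtype)
  obtain ⟨a, b, ha, hb⟩ := hC.exists_mult_zero_add_eq hv hm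
  have heven : Even (m 0) → ∀ ψ, -ψ = ψ → Even (m ψ) := fun h0 ψ hψ => by
    rcases eq_or_ne ψ 0 with rfl | hne
    exacts [h0, hC.even_mult_of_neg_eq_self hv hm hψ hne]
  have hχ : ρ.character = fun g => if h : g ∈ C then ∑ ψ, m ψ * linearHom ψ ⟨g, h⟩ else v := by
    ext g
    split_ifs with hg
    exacts [hsum ⟨g, hg⟩, hv g hg]
  rcases hC.reflection_value_eq hv hv2 hd with rfl | hv
  · have h0 : m 0 = 2 * a := by exact_mod_cast (add_zero _).symm.trans ha
    convert hC.sum_mult_extendZero_mem (hC.mult_neg hm) (heven ⟨a, by omega⟩) using 1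
    rw [hχ]
    ext g
    simp only [Finset.sum_apply, Pi.smul_apply, extendZero]
    split_ifs <;> simp
  · obtain ⟨r, hr⟩ : ∃ r, m 0 = r + r + 2 := by
      rcases hv with rfl | rfl
      · exact ⟨b, by rw [← Nat.cast_inj (R := ℂ)]; push_cast; linear_combination hb⟩
      · exact ⟨a, by rw [← Nat.cast_inj (R := ℂ)]; push_cast; linear_combination ha⟩
    have hmψ : m ψ ≠ 0 := fun h => hmult <| by
      have hψ := hm (-ψ)
      simp only [hC.mult_neg hm, h, Nat.cast_zero, mul_zero, linearHom_neg_apply, inv_inv] at hψ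
      exact hψ
    rw [hχ]
    exact hC.ite_sum_mult_mem_inducedSums_two (hC.mult_neg hm) (heven ⟨r + 1, by omega⟩) hκ hc₀
      (by omega) hmψ hv

end InducedSums

end IsDihedral

lemma exists_conj_mem_of_not_dvd_index {G : Type*} [Group G] [Finite G] {p : ℕ} [Fact p.Prime]
    {P : Subgroup G} (hP : IsPGroup p P) {H : Subgroup G} (hH : ¬ p ∣ H.index) :
    ∃ g : G, ∀ x ∈ P, g * x * g⁻¹ ∈ H := by
  obtain ⟨a, ha⟩ := hP.nonempty_fixed_point_of_prime_not_dvd_card (G ⧸ H) hH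
  obtain ⟨g, rfl⟩ := QuotientGroup.mk_surjective a
  refine ⟨g⁻¹, fun x hx => ?_⟩
  have hfix : ((x⁻¹ * g : G) : G ⧸ H) = g := ha ⟨x⁻¹, inv_mem hx⟩
  rw [QuotientGroup.eq] at hfix
  simpa [mul_assoc] using hfix

lemma exists_apply_notMem_of_mul_card_dvd {G : Type*} [Group G] [Finite G] {p : ℕ} [Fact p.Prime]
    (P : Sylow p G) {φ : (P : Subgroup G) →* G} (hφ : Function.Injective φ) {T : Subgroup G}
    (hT : p * Nat.card T ∣ Nat.card G) : ∃ x, φ x ∉ T := by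
  by_contra! hmem
  have hdvd : Nat.card (P : Subgroup G) ∣ Nat.card T :=
    Subgroup.card_dvd_of_injective (φ.codRestrict T hmem) (φ.injective_codRestrict T hmem |>.2 hφ)
  have hpow : p ^ ((Nat.card G).factorization p + 1) ∣ Nat.card G := by
    rw [pow_succ', ← P.card_eq_multiplicity]
    exact (mul_dvd_mul_left p hdvd).trans hT
  exact Nat.pow_succ_factorization_not_dvd Nat.card_pos.ne' Fact.out hpow

lemma exists_monoidHom_eq_neg_one {C : Type*} [Group C] [IsCyclic C] (hC : Even (Nat.card C)) :
    ∃ κ : C →* ℂ, (∀ c, κ c = 1 ∨ κ c = -1) ∧ ∃ c, κ c = -1 := by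
  obtain ⟨g, hg⟩ := IsCyclic.exists_generator (α := C)
  have hord : orderOf (-1 : ℂˣ) ∣ orderOf g := by
    rw [orderOf_eq_card_of_forall_mem_zpowers hg]
    exact (orderOf_dvd_of_pow_eq_one (by simp)).trans hC.two_dvd
  let κ := (Units.coeHom ℂ).comp (monoidHomOfForallMemZpowers hg hord)
  have hκ : κ g = -1 := by
    simp [κ, monoidHomOfForallMemZpowers_apply_gen hg hord]
  refine ⟨κ, fun c => ?_, g, hκ⟩
  rw [← mul_self_eq_one_iff, ← map_mul]
  obtain ⟨i, rfl⟩ := hg c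
  simp [κ, ← mul_zpow, monoidHomOfForallMemZpowers_apply_gen hg hord]

lemma isDihedral_comap {P G : Type*} [Group P] [Group G] {φ : P →* G}
    (hφ : Function.Injective φ) {T N : Subgroup G} (hφN : ∀ x, φ x ∈ N) (hφT : ∃ x, φ x ∉ T)
    (hmul : ∀ x ∈ N, ∀ y ∈ N, x ∉ T → y ∉ T → x * y ∈ T)
    (hinv : ∀ x ∈ N, x ∉ T → x * x = 1) : IsDihedral (T.comap φ) := by
  obtain ⟨s, hs⟩ := hφT
  refine ⟨Subgroup.index_eq_two_iff.2 ⟨s, fun b => ?_⟩, fun x hx => hφ ?_⟩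
  · by_cases hb : φ b ∈ T
    · exact .inr ⟨hb, fun h => hs ((mul_mem_cancel_left hb).1 (by simpa using h))⟩
    · exact .inl ⟨by simpa using hmul _ (hφN b) _ (hφN s) hb hs, hb⟩
  · rw [map_mul, hinv _ (hφN x) hx, map_one]

lemma factorization_two_eq_one {d : ℕ} (hd : d % 4 = 2) : d.factorization 2 = 1 := by
  have hd0 : d ≠ 0 := by omega
  refine le_antisymm (not_lt.1 fun h => ?_) ?_
  · have := (Nat.prime_two.pow_dvd_iff_le_factorization hd0 (k := 2)).2 h
    omega
  · exact (Nat.prime_two.pow_dvd_iff_le_factorization hd0 (k := 1)).1 (by omega)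

lemma sum_character_mul_ne_zero {V : Type*} [AddCommGroup V] [Module ℂ V]
    [FiniteDimensional ℂ V] {G : Type*} [Group G] [Fintype G] (ρ : Representation ℂ G V)
    {κ : G →* ℂ} (hκ : ∀ g, κ g = 1 ∨ κ g = -1)
    (hρ : ∑ g, ‖ρ.character g‖ < 2 * Module.finrank ℂ V) : ∑ g, ρ.character g * κ g ≠ 0 := by
  intro h
  have hnorm : ∀ g, ‖κ g‖ = 1 := fun g => by rcases hκ g with h | h <;> simp [h]
  rw [← Finset.add_sum_erase _ _ (Finset.mem_univ 1), map_one, mul_one, ρ.char_one] at h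
  rw [← Finset.add_sum_erase _ _ (Finset.mem_univ 1), ρ.char_one, Complex.norm_natCast] at hρ
  have hle : (Module.finrank ℂ V : ℝ) ≤ ∑ g ∈ Finset.univ.erase 1, ‖ρ.character g‖ :=
    calc (Module.finrank ℂ V : ℝ) = ‖∑ g ∈ Finset.univ.erase 1, ρ.character g * κ g‖ := by
          rw [eq_neg_of_add_eq_zero_right h, norm_neg, Complex.norm_natCast]
      _ ≤ ∑ g ∈ Finset.univ.erase 1, ‖ρ.character g * κ g‖ := norm_sum_le _ _
      _ = ∑ g ∈ Finset.univ.erase 1, ‖ρ.character g‖ := by simp only [norm_mul, hnorm, mul_one]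
  linarith

section Sylow

variable {V : Type} [AddCommGroup V] [Module ℂ V] [FiniteDimensional ℂ V]
  {G : Type} [Group G] [Fintype G] {p : ℕ}

lemma sumInducedProperty_of_not_dvd_finrank (P : Subgroup G) (ρ : Representation ℂ G V)
    (h : ¬ p ∣ Module.finrank ℂ V) :
    SumInducedProperty p P ρ.character (Module.finrank ℂ V) := by
  apply sumInducedProperty_of_mem_inducedSums
  rw [Nat.factorization_eq_zero_of_not_dvd h, pow_zero]
  exact character_mem_inducedSums_one (MonoidHom.comp ρ P.subtype)

lemma sumInducedProperty_of_vanishing [Fact p.Prime] (P : Sylow p G) (ρ : Representation ℂ G V)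
    (hd : Module.finrank ℂ V ∣ Nat.card G) (h : ∀ x ∈ P, x ≠ 1 → ρ.character x = 0) :
    SumInducedProperty p (P : Subgroup G) ρ.character (Module.finrank ℂ V) := by
  apply sumInducedProperty_of_mem_inducedSums
  let ρP : Representation ℂ P V := MonoidHom.comp ρ (P : Subgroup G).subtype
  have hρP : ∀ x ≠ 1, ρP.character x = 0 := fun x hx => h x x.2 (by simpa using hx)
  have hG : Nat.card G ≠ 0 := Nat.card_pos.ne'
  have hd0 : Module.finrank ℂ V ≠ 0 := ne_zero_of_dvd_ne_zero hG hd
  obtain ⟨n, hn⟩ := exists_finrank_eq_card_mul hρP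
  have hcard : (Module.finrank ℂ V).factorization p = (Nat.card G).factorization p :=
    le_antisymm ((Nat.factorization_le_iff_dvd hd0 hG).2 hd p) <|
      ((Fact.out : p.Prime).pow_dvd_iff_le_factorization hd0).1
        (P.card_eq_multiplicity ▸ Dvd.intro n hn.symm)
  rw [hcard, ← P.card_eq_multiplicity]
  exact character_mem_inducedSums_card hρP

lemma sumInducedProperty_of_dihedral (P : Sylow 2 G) (ρ : Representation ℂ G V)
    {T N : Subgroup G} [IsCyclic T] (hN : ¬ 2 ∣ N.index)
    (hmul : ∀ x ∈ N, ∀ y ∈ N, x ∉ T → y ∉ T → x * y ∈ T)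
    (hinv : ∀ x ∈ N, x ∉ T → x * x = 1) {v : ℂ} (hv : ∀ x ∈ N, x ∉ T → ρ.character x = v)
    (hv2 : ‖v‖ ≤ 2) (hT : 2 * Nat.card T ∣ Nat.card G) (hG : 4 ∣ Nat.card G)
    (hd : Module.finrank ℂ V % 4 = 2)
    (hsum : ∑ x : T, ‖ρ.character x‖ < 2 * Module.finrank ℂ V) :
    SumInducedProperty 2 (P : Subgroup G) ρ.character (Module.finrank ℂ V) := by
  apply sumInducedProperty_of_mem_inducedSums
  rw [factorization_two_eq_one hd, pow_one]
  obtain ⟨g, hg⟩ := exists_conj_mem_of_not_dvd_index P.isPGroup' hN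
  let φ : (P : Subgroup G) →* G := (MulAut.conj g).toMonoidHom.comp (P : Subgroup G).subtype
  have hφ : Function.Injective φ := (MulAut.conj g).injective.comp Subtype.val_injective
  have hχφ : ∀ x, ρ.character (φ x) = ρ.character x := fun x => ρ.char_conj _ _
  have hφN : ∀ x, φ x ∈ N := fun x => hg x x.2
  have hC := isDihedral_comap hφ hφN (exists_apply_notMem_of_mul_card_dvd P hφ hT) hmul hinv
  let j : T.comap φ →* T := φ.subgroupComap T
  have hj : Function.Injective j := fun a b h => Subtype.ext (hφ (congrArg Subtype.val h))
  have := isCyclic_of_injective j hj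
  have hcard : Even (Nat.card (T.comap φ)) := by
    have hP : 4 ∣ Nat.card (P : Subgroup G) := P.card_eq_multiplicity ▸ pow_dvd_pow 2
      ((Nat.prime_two.pow_dvd_iff_le_factorization Nat.card_pos.ne' (k := 2)).1 hG)
    have hindex := (T.comap φ).card_mul_index
    rw [hC.index_eq_two] at hindex
    exact even_iff_two_dvd.2 (by omega)
  obtain ⟨κ, hκ, c₀, hc₀⟩ := exists_monoidHom_eq_neg_one hcard
  let ρC : Representation ℂ (T.comap φ) V :=
    MonoidHom.comp ρ ((P : Subgroup G).subtype.comp (T.comap φ).subtype)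
  have hmult : ∑ c, ρC.character c * κ c ≠ 0 := by
    refine sum_character_mul_ne_zero ρC hκ (lt_of_le_of_lt ?_ hsum)
    calc ∑ c, ‖ρC.character c‖ = ∑ c, ‖ρ.character (j c)‖ :=
          Finset.sum_congr rfl fun c _ => congrArg norm (hχφ c).symm
      _ = ∑ x ∈ Finset.univ.map ⟨j, hj⟩, ‖ρ.character x‖ := by simp
      _ ≤ ∑ x : T, ‖ρ.character x‖ :=
          Finset.sum_le_univ_sum_of_nonneg fun _ => norm_nonneg _
  exact hC.character_mem_inducedSums_two (ρ := MonoidHom.comp ρ (P : Subgroup G).subtype)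
    (fun x hx => (hχφ x).symm.trans (hv _ (hφN x) hx)) hv2 (Nat.even_iff.2 (by omega)) hκ hc₀
    hmult

end Sylow

/-! ### From `SL(2, F)` to `PSL(2, F)` -/

section Quotient

variable {A B : Type*} [Group A] [Group B] {f : A →* B}

lemma sum_comp_eq_card_ker_nsmul_sum [Fintype A] [Fintype B] (hf : Function.Surjective f)
    {M : Type*} [AddCommMonoid M] (φ : B → M) : ∑ a, φ (f a) = Nat.card f.ker • ∑ b, φ b := by
  have hfiber : ∀ b, (Finset.univ.filter fun a => f a = b).card = Nat.card f.ker := fun b => by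
    rw [MonoidHom.card_fiber_eq_of_mem_range f (hf b) (hf 1), Nat.card_eq_fintype_card,
      Fintype.card_subtype]
    simp only [MonoidHom.mem_ker]
  rw [Finset.sum_comp φ f, Finset.image_univ_of_surjective hf, Finset.smul_sum]
  simp only [hfiber]

lemma card_ker_subgroupMap {H : Subgroup A} (hH : f.ker ≤ H) :
    Nat.card (f.subgroupMap H).ker = Nat.card f.ker := by
  rw [← Nat.card_congr (Subgroup.subgroupOfEquivOfLe hH).toEquiv]
  congr 2
  ext x
  simp [MonoidHom.mem_ker, Subgroup.mem_subgroupOf, Subtype.ext_iff]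

lemma sum_comp_eq_card_ker_nsmul_sum_map [Fintype A] [Fintype B] {H : Subgroup A} (hH : f.ker ≤ H)
    {M : Type*} [AddCommMonoid M] (φ : B → M) :
    ∑ h : H, φ (f h) = Nat.card f.ker • ∑ x : H.map f, φ x := by
  rw [← card_ker_subgroupMap hH]
  exact sum_comp_eq_card_ker_nsmul_sum (f.subgroupMap_surjective H) fun x => φ x

lemma card_ker_mul_card_map {H : Subgroup A} (hH : f.ker ≤ H) :
    Nat.card f.ker * Nat.card (H.map f) = Nat.card H := by
  rw [← Subgroup.relIndex_ker, ← f.ker.relIndex_bot_left,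
    Subgroup.relIndex_mul_relIndex _ _ _ bot_le hH, Subgroup.relIndex_bot_left]

lemma apply_mem_map_iff {H : Subgroup A} (hH : f.ker ≤ H) {a : A} : f a ∈ H.map f ↔ a ∈ H := by
  rw [← Subgroup.mem_comap, Subgroup.comap_map_eq_self hH]

variable {V : Type*} [AddCommGroup V] [Module ℂ V] {ρ : Representation ℂ B V}

lemma character_eq_of_isConj {a b : A} (h : IsConj a b) :
    ρ.character (f a) = ρ.character (f b) := by
  obtain ⟨c, rfl⟩ := isConj_iff.1 h
  rw [map_mul, map_mul, map_inv, ρ.char_conj]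

lemma NormOne.comp_surjective [Fintype A] [Fintype B] (hρ : NormOne ρ)
    (hf : Function.Surjective f) : NormOne (MonoidHom.comp ρ f) := by
  have hcard := card_ker_mul_card_map (f := f) (H := ⊤) le_top
  rw [Subgroup.map_top_of_surjective f hf, Subgroup.card_top, Subgroup.card_top] at hcard
  calc ∑ a, ρ.character (f a) * ρ.character (f a⁻¹)
      = ∑ a, ρ.character (f a) * ρ.character (f a)⁻¹ := by simp only [map_inv]
    _ = Nat.card f.ker • ∑ b, ρ.character b * ρ.character b⁻¹ :=
        sum_comp_eq_card_ker_nsmul_sum hf fun b => ρ.character b * ρ.character b⁻¹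
    _ = Fintype.card A := by
        rw [show ∑ b, ρ.character b * ρ.character b⁻¹ = _ from hρ, nsmul_eq_mul,
          ← Nat.card_eq_fintype_card, ← Nat.card_eq_fintype_card, ← Nat.cast_mul, hcard]

lemma character_eq_zero_of_mem_of_not_dvd_index [Finite B] (hf : Function.Surjective f) {p : ℕ}
    [Fact p.Prime] {P : Subgroup B} (hP : IsPGroup p P) {H : Subgroup A} (hH : ¬p ∣ H.index)
    (hχ : ∀ h ∈ H, f h ≠ 1 → ρ.character (f h) = 0) {x : B} (hx : x ∈ P) (hx1 : x ≠ 1) :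
    ρ.character x = 0 := by
  obtain ⟨g, hg⟩ := exists_conj_mem_of_not_dvd_index hP (H := H.map f)
    fun h => hH (h.trans (H.index_map_dvd hf))
  obtain ⟨h, hh, hconj⟩ := hg x hx
  rw [← ρ.char_conj x g, ← hconj]
  exact hχ h hh (by rw [hconj]; simpa using hx1)

end Quotient

section TraceZero

variable {F : Type*} [Field F]

lemma exists_conj_mem_borel {g : SL(2, F)} (hg : ¬IsElliptic g) :
    ∃ x, x * g * x⁻¹ ∈ borel F := by
  simp only [IsElliptic, Matrix.trace_fin_two, not_forall, not_not] at hg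
  obtain ⟨l, hl⟩ := hg
  by_cases hlower : g 1 0 = 0
  · exact ⟨1, by simpa [mem_borel] using hlower⟩
  refine ⟨(mkSL2 (l - g 1 1) (-(g 1 0)⁻¹) (g 1 0) 0 (by field_simp; ring))⁻¹, ?_⟩
  simp only [mem_borel, inv_inv, Matrix.SpecialLinearGroup.coe_mul, Matrix.mul_apply,
    Fin.sum_univ_two, SL2_inv_apply, coe_mkSL2, Matrix.of_apply, Matrix.cons_val]
  linear_combination g 1 0 * hl + g 1 0 * SL2_det g

lemma mul_self_mem_center {g : SL(2, F)} (hg : (g : Matrix (Fin 2) (Fin 2) F).trace = 0) :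
    g * g ∈ Subgroup.center SL(2, F) := by
  rw [Matrix.trace_fin_two] at hg
  simp only [mem_center_SL2, Matrix.SpecialLinearGroup.coe_mul, Matrix.mul_apply,
    Fin.sum_univ_two]
  refine ⟨?_, ?_, ?_⟩
  · linear_combination g 0 1 * hg
  · linear_combination g 1 0 * hg
  · linear_combination (g 0 0 - g 1 1) * hg

lemma trace_eq_zero_of_mem_monomial {g : SL(2, F)} (hg : g ∈ monomial F) (hgT : g ∉ torus F) :
    (g : Matrix (Fin 2) (Fin 2) F).trace = 0 := by
  obtain ⟨h00, h11⟩ := diag_eq_zero_of_mem_monomial hg hgT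
  rw [Matrix.trace_fin_two, h00, h11, add_zero]

lemma exists_sq_add_sq_eq [Finite F] (c : F) : ∃ x y : F, x ^ 2 + y ^ 2 = c := by
  have := Fintype.ofFinite F
  by_cases hF : ringChar F = 2
  · obtain ⟨x, hx⟩ := FiniteField.isSquare_of_char_two hF c
    exact ⟨x, 0, by rw [hx]; ring⟩
  · obtain ⟨x, y, h⟩ := FiniteField.exists_root_sum_quadratic (R := F) (f := Polynomial.X ^ 2)
      (g := Polynomial.X ^ 2 - Polynomial.C c) (by simp)
      (Polynomial.degree_X_pow_sub_C two_pos c) (FiniteField.odd_card_of_char_ne_two hF)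
    refine ⟨x, y, ?_⟩
    simp only [Polynomial.eval_pow, Polynomial.eval_X, Polynomial.eval_sub, Polynomial.eval_C] at h
    linear_combination h

lemma two_ne_zero_of_odd_card [Fintype F] (hF : Odd (Fintype.card F)) : (2 : F) ≠ 0 :=
  Ring.two_ne_zero fun h =>
    Nat.not_odd_iff_even.2 (Nat.even_iff.2 (FiniteField.even_card_iff_char_two.1 h)) hF

/-- The quadratic form `v ↦ v ∧ g v` attached to a trace zero `g` has determinant `1`, so it
represents `1`; a vector `v` with `v ∧ g v = 1` makes `(v, g v)` a basis in which `g` is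
`weyl F`. -/
lemma isConj_weyl [Fintype F] (hF : Odd (Fintype.card F)) {g : SL(2, F)}
    (hg : (g : Matrix (Fin 2) (Fin 2) F).trace = 0) : IsConj (weyl F) g := by
  rw [Matrix.trace_fin_two] at hg
  have hdet := SL2_det g
  obtain ⟨x, y, hxy⟩ : ∃ x y, g 1 0 * x ^ 2 - 2 * g 0 0 * x * y - g 0 1 * y ^ 2 = 1 := by
    by_cases hlower : g 1 0 = 0
    · have h00 : g 0 0 ≠ 0 := fun h => by simp [h, hlower] at hdet
      have h2 := two_ne_zero_of_odd_card hF
      refine ⟨-(1 + g 0 1) / (2 * g 0 0), 1, ?_⟩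
      rw [hlower]
      field_simp
      ring
    · obtain ⟨z, y, h⟩ := exists_sq_add_sq_eq (g 1 0)
      refine ⟨(z + g 0 0 * y) / g 1 0, y, ?_⟩
      field_simp
      linear_combination h + y ^ 2 * hdet - y ^ 2 * g 0 0 * hg
  rw [isConj_iff]
  refine ⟨mkSL2 x (g 0 0 * x + g 0 1 * y) y (g 1 0 * x - g 0 0 * y)
    (by linear_combination hxy), ?_⟩
  rw [mul_inv_eq_iff_eq_mul]
  apply SL2_ext <;> simp [Matrix.mul_apply, Fin.sum_univ_two]
  · linear_combination x * hdet - x * g 0 0 * hg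
  · linear_combination -y * hg
  · linear_combination y * hdet - x * g 1 0 * hg

end TraceZero

/-- The quotient map `SL(2, F) → PSL(2, F)`. -/
def toPSL (F : Type*) [Field F] : SL(2, F) →* PSL(2, F) := QuotientGroup.mk' _

section Card

variable {F : Type*} [Field F]

lemma toPSL_surjective : Function.Surjective (toPSL F) := QuotientGroup.mk'_surjective _

lemma ker_toPSL : (toPSL F).ker = Subgroup.center SL(2, F) := QuotientGroup.ker_mk' _

lemma toPSL_eq_one_iff {g : SL(2, F)} : toPSL F g = 1 ↔ g ∈ Subgroup.center SL(2, F) := by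
  rw [← MonoidHom.mem_ker, ker_toPSL]

lemma center_le_torus : Subgroup.center SL(2, F) ≤ torus F := fun g hg => by
  obtain ⟨h01, h10, -⟩ := mem_center_SL2.1 hg
  exact mem_torus.2 ⟨h01, h10⟩

lemma torus_le_borel : torus F ≤ borel F := fun _ hg => (mem_torus.1 hg).2

lemma centerOrder_mul_card_map {H : Subgroup SL(2, F)} (hH : Subgroup.center SL(2, F) ≤ H) :
    centerOrder F * Nat.card (H.map (toPSL F)) = Nat.card H := by
  have := card_ker_mul_card_map (ker_toPSL.trans_le hH)
  rwa [ker_toPSL, card_center_SL2] at this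

lemma centerOrder_mul_card_PSL2 : centerOrder F * Nat.card PSL(2, F) = Nat.card SL(2, F) := by
  have := centerOrder_mul_card_map (F := F) (H := ⊤) le_top
  rwa [Subgroup.map_top_of_surjective _ toPSL_surjective, Subgroup.card_top,
    Subgroup.card_top] at this

variable [Fintype F]

variable (F) in
lemma exists_card_eq_centerOrder_mul_add_one : ∃ k, Fintype.card F = centerOrder F * k + 1 := by
  obtain ⟨k, hk⟩ : centerOrder F ∣ Fintype.card F - 1 :=
    centerOrder_eq (F := F) ▸ Nat.gcd_dvd_left _ _
  exact ⟨k, by have := Fintype.card_pos (α := F); omega⟩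

lemma centerOrder_eq_two (hF : Odd (Fintype.card F)) : centerOrder F = 2 := by
  obtain ⟨m, hm⟩ := hF
  rw [centerOrder_eq, hm, Nat.add_sub_cancel, Nat.gcd_mul_right_left]

variable {k : ℕ}

lemma card_map_torus (hk : Fintype.card F = centerOrder F * k + 1) :
    Nat.card ((torus F).map (toPSL F)) = k := by
  refine Nat.eq_of_mul_eq_mul_left (centerOrder_pos (F := F)) ?_
  rw [centerOrder_mul_card_map center_le_torus, card_torus, hk, Nat.add_sub_cancel]

lemma card_map_borel (hk : Fintype.card F = centerOrder F * k + 1) :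
    Nat.card ((borel F).map (toPSL F)) = k * Fintype.card F := by
  refine Nat.eq_of_mul_eq_mul_left (centerOrder_pos (F := F)) ?_
  rw [centerOrder_mul_card_map (center_le_torus.trans torus_le_borel), card_borel, ← mul_assoc]
  conv_lhs => rw [hk, Nat.add_sub_cancel, ← hk]

lemma card_PSL2 (hk : Fintype.card F = centerOrder F * k + 1) :
    Nat.card PSL(2, F) = Fintype.card F * k * (Fintype.card F + 1) := by
  refine Nat.eq_of_mul_eq_mul_left (centerOrder_pos (F := F)) ?_
  rw [centerOrder_mul_card_PSL2, card_SL2]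
  conv_lhs => rw [show Fintype.card F - 1 = centerOrder F * k by omega]
  ring

end Card

section Sylow

variable {F : Type} [Field F] [Fintype F] {V : Type} [AddCommGroup V] [Module ℂ V]
  [FiniteDimensional ℂ V] {k : ℕ}

lemma sumInducedProperty_of_isElliptic {p : ℕ} [Fact p.Prime] (P : Sylow p PSL(2, F))
    (ρ : Representation ℂ PSL(2, F) V) (hk : Fintype.card F = centerOrder F * k + 1)
    (hd : Module.finrank ℂ V ∣ Nat.card PSL(2, F))
    (hell : ∀ g, IsElliptic g → ρ.character (toPSL F g) = 0) (hp : ¬p ∣ k * Fintype.card F) :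
    SumInducedProperty p (P : Subgroup PSL(2, F)) ρ.character (Module.finrank ℂ V) := by
  refine sumInducedProperty_of_vanishing P ρ hd fun x hx hx1 => ?_
  obtain ⟨g, rfl⟩ := toPSL_surjective x
  by_contra hg
  obtain ⟨y, hy⟩ := exists_conj_mem_borel fun h => hg (hell g h)
  have hconj : orderOf (toPSL F (y * g * y⁻¹)) = orderOf (toPSL F g) := by
    simpa using orderOf_injective (MulAut.conj (toPSL F y)).toMonoidHom
      (MulAut.conj (toPSL F y)).injective (toPSL F g)
  have hdvd : orderOf (toPSL F g) ∣ k * Fintype.card F := by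
    rw [← hconj, ← card_map_borel hk]
    exact Subgroup.orderOf_dvd_natCard _ (Subgroup.mem_map_of_mem _ hy)
  obtain ⟨n, hn⟩ := P.isPGroup'.exists_orderOf_eq_pow ⟨_, hx⟩
  rw [Subgroup.orderOf_mk] at hn
  have hn0 : n ≠ 0 := fun h => hx1 (by rwa [h, pow_zero, orderOf_eq_one_iff] at hn)
  exact hp ((dvd_pow_self p hn0).trans (hn ▸ hdvd))

lemma sumInducedProperty_of_dihedral_SL2 (P : Sylow 2 PSL(2, F)) (ρ : Representation ℂ PSL(2, F) V)
    {T N : Subgroup SL(2, F)} [IsCyclic T] (hF : Odd (Fintype.card F))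
    (hcenter : Subgroup.center SL(2, F) ≤ T) (hN : ¬2 ∣ N.index)
    (hmul : ∀ x ∈ N, ∀ y ∈ N, x ∉ T → y ∉ T → x * y ∈ T)
    (htrace : ∀ x ∈ N, x ∉ T → (x : Matrix (Fin 2) (Fin 2) F).trace = 0)
    (hcard : Nat.card N = 2 * Nat.card T) (hweyl : ‖ρ.character (toPSL F (weyl F))‖ ≤ 2)
    (hd : Module.finrank ℂ V % 4 = 2)
    (hsum : ∑ x : T.map (toPSL F), ‖ρ.character x‖ < 2 * Module.finrank ℂ V) :
    SumInducedProperty 2 (P : Subgroup PSL(2, F)) ρ.character (Module.finrank ℂ V) := by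
  have hmap : ∀ {g}, toPSL F g ∈ T.map (toPSL F) ↔ g ∈ T :=
    apply_mem_map_iff (ker_toPSL.trans_le hcenter)
  have := isCyclic_of_surjective _ ((toPSL F).subgroupMap_surjective T)
  refine sumInducedProperty_of_dihedral P ρ (T := T.map (toPSL F)) (N := N.map (toPSL F))
    (v := ρ.character (toPSL F (weyl F))) ?_ ?_ ?_ ?_ hweyl ?_ ?_ hd hsum
  · exact fun h => hN (h.trans (N.index_map_dvd toPSL_surjective))
  · rintro _ ⟨x, hx, rfl⟩ _ ⟨y, hy, rfl⟩ hxT hyT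
    rw [← map_mul, hmap]
    exact hmul x hx y hy (mt hmap.2 hxT) (mt hmap.2 hyT)
  · rintro _ ⟨x, hx, rfl⟩ hxT
    rw [← map_mul, toPSL_eq_one_iff]
    exact mul_self_mem_center (htrace x hx (mt hmap.2 hxT))
  · rintro _ ⟨x, hx, rfl⟩ hxT
    exact (character_eq_of_isConj (isConj_weyl hF (htrace x hx (mt hmap.2 hxT)))).symm
  · refine Nat.dvd_of_mul_dvd_mul_left (centerOrder_pos (F := F)) ?_
    rw [mul_left_comm, centerOrder_mul_card_map hcenter, centerOrder_mul_card_PSL2, ← hcard]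
    exact N.card_subgroup_dvd_card
  · have ⟨m, hm⟩ := hF
    obtain ⟨c, hc⟩ := Nat.even_mul_succ_self m
    have hε := centerOrder_eq_two hF
    rw [card_PSL2 (hε.symm ▸ hm), hm]
    exact ⟨(2 * m + 1) * c, by linear_combination (2 * m + 1) * 2 * hc⟩

end Sylow

/-! ### The nonsplit torus -/

section NearRegular

lemma sum_two_sub_sq_le_two {A : Type*} [AddCommGroup A] [Fintype A] {m : AddChar A ℂ → ℕ}
    (hm : ∑ ψ, m ψ + 2 = 2 * Fintype.card A)
    (hsum : ∑ x, ‖∑ ψ, (m ψ : ℂ) * ψ x‖ ^ 2 ≤ Fintype.card A * (4 * Fintype.card A - 6 : ℝ)) :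
    ∑ ψ, (2 - m ψ : ℤ) ^ 2 ≤ 2 := by
  rw [sum_norm_sq_sum_mul_addChar] at hsum
  have hsq := le_of_mul_le_mul_left hsum (by exact_mod_cast Fintype.card_pos (α := A))
  have hm' : ∑ ψ, (m ψ : ℤ) + 2 = 2 * Fintype.card A := by exact_mod_cast hm
  have hsq' : ∑ ψ, (m ψ : ℤ) ^ 2 + 6 ≤ 4 * Fintype.card A := by
    exact_mod_cast (show ∑ ψ, (m ψ : ℝ) ^ 2 + 6 ≤ 4 * Fintype.card A by linarith)
  calc ∑ ψ, (2 - m ψ : ℤ) ^ 2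
      = ∑ ψ, (4 - 4 * (m ψ : ℤ) + (m ψ : ℤ) ^ 2) := Finset.sum_congr rfl fun ψ _ => by ring
    _ = 4 * Fintype.card A - 4 * ∑ ψ, (m ψ : ℤ) + ∑ ψ, (m ψ : ℤ) ^ 2 := by
        rw [Finset.sum_add_distrib, Finset.sum_sub_distrib, ← Finset.mul_sum, Finset.sum_const,
          Finset.card_univ, AddChar.card_eq, nsmul_eq_mul, mul_comm]
    _ ≤ 2 := by linarith [hm', hsq']

lemma norm_sum_mul_addChar_le_two {A : Type*} [AddCommGroup A] [Fintype A] {m : AddChar A ℂ → ℕ}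
    (hm : ∑ ψ, m ψ + 2 = 2 * Fintype.card A)
    (hsum : ∑ x, ‖∑ ψ, (m ψ : ℂ) * ψ x‖ ^ 2 ≤ Fintype.card A * (4 * Fintype.card A - 6 : ℝ))
    {x : A} (hx : x ≠ 0) : ‖∑ ψ, (m ψ : ℂ) * ψ x‖ ≤ 2 := by
  have hregular : ∑ ψ : AddChar A ℂ, ψ x = 0 := AddChar.sum_apply_eq_zero_iff_ne_zero.2 hx
  have hval : ∑ ψ, (m ψ : ℂ) * ψ x = -∑ ψ : AddChar A ℂ, ((2 - m ψ : ℤ) : ℂ) * ψ x := by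
    push_cast
    simp only [sub_mul, Finset.sum_sub_distrib, ← Finset.mul_sum, hregular]
    ring
  calc ‖∑ ψ, (m ψ : ℂ) * ψ x‖
      ≤ ∑ ψ : AddChar A ℂ, ‖((2 - m ψ : ℤ) : ℂ) * ψ x‖ := by
        rw [hval, norm_neg]
        exact norm_sum_le _ _
    _ ≤ ∑ ψ, (((2 - m ψ : ℤ) ^ 2 : ℤ) : ℝ) := Finset.sum_le_sum fun ψ _ => by
        rw [norm_mul, AddChar.norm_apply, mul_one, Complex.norm_intCast, ← Int.cast_abs,
          Int.cast_le, ← sq_abs]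
        exact Int.le_self_sq _
    _ ≤ 2 := by exact_mod_cast sum_two_sub_sq_le_two hm hsum

variable {V : Type*} [AddCommGroup V] [Module ℂ V] [FiniteDimensional ℂ V]

/-- The character differs from twice the regular character by at most two linear characters. -/
lemma norm_character_le_two {B : Type*} [CommGroup B] [Fintype B] (ρ : Representation ℂ B V)
    (hd : Module.finrank ℂ V + 2 = 2 * Nat.card B)
    (hsum : ∑ x, ‖ρ.character x‖ ^ 2 ≤ Nat.card B * (4 * Nat.card B - 6 : ℝ)) {z : B}
    (hz : z ≠ 1) : ‖ρ.character z‖ ≤ 2 := by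
  obtain ⟨m, -, hm⟩ := exists_trace_mul_eq_sum (additiveAction ρ) IsIdempotentElem.one
    fun _ => Commute.one_right _
  replace hm : ∀ x : Additive B, ρ.character x.toMul = ∑ ψ, (m ψ : ℂ) * ψ x := fun x => by
    rw [← hm, mul_one]
    rfl
  have hcard : Nat.card B = Fintype.card (Additive B) := by
    rw [Nat.card_eq_fintype_card, Fintype.card_congr Additive.toMul]
  have hfinrank : Module.finrank ℂ V = ∑ ψ, m ψ := by
    have := hm 0
    simp only [toMul_zero, Representation.char_one, AddChar.map_zero_eq_one, mul_one] at this
    exact_mod_cast this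
  rw [hcard] at hd hsum
  rw [← toMul_ofMul z, hm]
  refine norm_sum_mul_addChar_le_two (hfinrank ▸ hd) ?_ hz
  simp only [← hm]
  rwa [Fintype.sum_equiv Additive.toMul _ (fun x => ‖ρ.character x‖ ^ 2) fun _ => rfl]

lemma sum_norm_character_lt_two_mul_finrank {B : Type*} [Group B] [Fintype B] [Nontrivial B]
    (ρ : Representation ℂ B V) (hd : Module.finrank ℂ V + 2 = 2 * Nat.card B)
    (hsum : ∑ x, ‖ρ.character x‖ ^ 2 ≤ Nat.card B * (4 * Nat.card B - 6 : ℝ)) :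
    ∑ x, ‖ρ.character x‖ < 2 * Module.finrank ℂ V := by
  have hn : (2 : ℝ) ≤ Nat.card B := by exact_mod_cast Finite.one_lt_card (α := B)
  have hd' : (Module.finrank ℂ V : ℝ) = 2 * Nat.card B - 2 := by
    rw [eq_sub_iff_add_eq]
    exact_mod_cast hd
  rw [← Finset.add_sum_erase _ _ (Finset.mem_univ (1 : B)), ρ.char_one, Complex.norm_natCast]
    at hsum ⊢
  have hcauchy := sq_sum_le_card_mul_sum_sq (s := Finset.univ.erase (1 : B))
    (f := fun x => ‖ρ.character x‖)
  rw [Finset.card_erase_of_mem (Finset.mem_univ 1), Finset.card_univ,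
    ← Nat.card_eq_fintype_card, Nat.cast_sub Nat.card_pos, Nat.cast_one] at hcauchy
  rw [two_mul]
  gcongr
  refine lt_of_pow_lt_pow_left₀ 2 (by linarith) (hcauchy.trans_lt ?_)
  rw [hd'] at hsum ⊢
  nlinarith

end NearRegular

section NonsplitTorus

variable {F : Type*} [Field F]

/-- The subgroup of rotation matrices, with rows `(a, -c)` and `(c, a)`. It is a nonsplit torus
when `-1` is not a square. -/
def nonsplitTorus (F : Type*) [Field F] : Subgroup SL(2, F) where
  carrier := {g | g 0 0 = g 1 1 ∧ g 0 1 = -g 1 0}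
  one_mem' := by simp
  mul_mem' := by
    rintro g h ⟨hg, hg'⟩ ⟨hh, hh'⟩
    constructor <;> simp only [SL2_mul_apply, *] <;> ring
  inv_mem' := by
    rintro g ⟨hg, hg'⟩
    simp [Set.mem_ofPred_eq, SL2_inv_apply, *]

lemma mem_nonsplitTorus {g : SL(2, F)} :
    g ∈ nonsplitTorus F ↔ g 0 0 = g 1 1 ∧ g 0 1 = -g 1 0 := Iff.rfl

/-- The subgroup generated by the rotation matrices and the matrices with rows `(a, b)` and
`(b, -a)`. It is the normalizer of the rotation group in odd characteristic. -/
def nonsplitNormalizer (F : Type*) [Field F] : Subgroup SL(2, F) where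
  carrier := {g | (g 0 0 = g 1 1 ∧ g 0 1 = -g 1 0) ∨ (g 0 0 = -g 1 1 ∧ g 0 1 = g 1 0)}
  one_mem' := by simp
  mul_mem' := by
    rintro g h (⟨hg, hg'⟩ | ⟨hg, hg'⟩) (⟨hh, hh'⟩ | ⟨hh, hh'⟩)
    · left; constructor <;> simp only [SL2_mul_apply, *] <;> ring
    · right; constructor <;> simp only [SL2_mul_apply, *] <;> ring
    · right; constructor <;> simp only [SL2_mul_apply, *] <;> ring
    · left; constructor <;> simp only [SL2_mul_apply, *] <;> ring
  inv_mem' := by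
    rintro g (⟨hg, hg'⟩ | ⟨hg, hg'⟩) <;> simp [Set.mem_ofPred_eq, SL2_inv_apply, *]

lemma mem_nonsplitNormalizer {g : SL(2, F)} :
    g ∈ nonsplitNormalizer F ↔
      (g 0 0 = g 1 1 ∧ g 0 1 = -g 1 0) ∨ (g 0 0 = -g 1 1 ∧ g 0 1 = g 1 0) := Iff.rfl

lemma nonsplitTorus_le_nonsplitNormalizer : nonsplitTorus F ≤ nonsplitNormalizer F :=
  fun _ hg => Or.inl hg

lemma center_le_nonsplitTorus : Subgroup.center SL(2, F) ≤ nonsplitTorus F := fun g hg => by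
  obtain ⟨h01, h10, hdiag⟩ := mem_center_SL2.1 hg
  exact mem_nonsplitTorus.2 ⟨hdiag, by rw [h01, h10, neg_zero]⟩

lemma weyl_mem_nonsplitTorus : weyl F ∈ nonsplitTorus F := by simp [mem_nonsplitTorus]

lemma weyl_notMem_center : weyl F ∉ Subgroup.center SL(2, F) := by simp [mem_center_SL2]

lemma sq_add_sq_eq_one_of_mem_nonsplitTorus {g : SL(2, F)} (hg : g ∈ nonsplitTorus F) :
    g 0 0 ^ 2 + g 1 0 ^ 2 = 1 := by
  obtain ⟨hdiag, hoff⟩ := hg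
  linear_combination SL2_det g + g 0 0 * hdiag + g 1 0 * hoff

lemma lower_ne_zero_of_mem_nonsplitTorus {g : SL(2, F)} (hg : g ∈ nonsplitTorus F)
    (hcenter : g ∉ Subgroup.center SL(2, F)) : g 1 0 ≠ 0 := fun h10 =>
  hcenter (mem_center_SL2.2 ⟨by rw [hg.2, h10, neg_zero], h10, hg.1⟩)

lemma neg_diag_of_mem_nonsplitNormalizer {g : SL(2, F)} (hg : g ∈ nonsplitNormalizer F)
    (hgT : g ∉ nonsplitTorus F) : g 0 0 = -g 1 1 ∧ g 0 1 = g 1 0 :=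
  (mem_nonsplitNormalizer.1 hg).resolve_left hgT

lemma mul_mem_nonsplitTorus {g h : SL(2, F)} (hg : g ∈ nonsplitNormalizer F)
    (hh : h ∈ nonsplitNormalizer F) (hgT : g ∉ nonsplitTorus F) (hhT : h ∉ nonsplitTorus F) :
    g * h ∈ nonsplitTorus F := by
  obtain ⟨hg, hg'⟩ := neg_diag_of_mem_nonsplitNormalizer hg hgT
  obtain ⟨hh, hh'⟩ := neg_diag_of_mem_nonsplitNormalizer hh hhT
  constructor <;> simp only [SL2_mul_apply, *] <;> ring

lemma trace_eq_zero_of_mem_nonsplitNormalizer {g : SL(2, F)} (hg : g ∈ nonsplitNormalizer F)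
    (hgT : g ∉ nonsplitTorus F) : (g : Matrix (Fin 2) (Fin 2) F).trace = 0 := by
  rw [Matrix.trace_fin_two, (neg_diag_of_mem_nonsplitNormalizer hg hgT).1, neg_add_cancel]

lemma ext_of_mem_nonsplitTorus {g h : SL(2, F)} (hg : g ∈ nonsplitTorus F)
    (hh : h ∈ nonsplitTorus F) (h00 : g 0 0 = h 0 0) (h10 : g 1 0 = h 1 0) : g = h :=
  SL2_ext h00 (by rw [hg.2, hh.2, h10]) h10 (by rw [← hg.1, ← hh.1, h00])

lemma eq_neg_one_of_mem_nonsplitTorus {g : SL(2, F)} (hg : g ∈ nonsplitTorus F)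
    (h00 : 1 + g 0 0 = 0) : g = -1 := by
  have h00' : g 0 0 = -1 := by linear_combination h00
  have h10 : g 1 0 ^ 2 = 0 := by
    linear_combination sq_add_sq_eq_one_of_mem_nonsplitTorus hg - (g 0 0 - 1) * h00
  exact ext_of_mem_nonsplitTorus hg (by simp [mem_nonsplitTorus]) (by simp [h00'])
    (by simpa using h10)

end NonsplitTorus

section Order

variable {F : Type*} [Field F]

lemma two_ne_zero_of_forall_sq_ne_neg_one (hneg : ∀ x : F, x ^ 2 ≠ -1) : (2 : F) ≠ 0 :=
  fun h => hneg 1 (by linear_combination h)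

/-- The stereographic projection of the conic `a ^ 2 + c ^ 2 = 1` from the point `(-1, 0)`. -/
def nonsplitTorusEquiv (hneg : ∀ x : F, x ^ 2 ≠ -1) :
    ↥((nonsplitTorus F : Set SL(2, F)) \ {-1}) ≃ F :=
  have hden : ∀ m : F, 1 + m ^ 2 ≠ 0 := fun m h => hneg m (by linear_combination h)
  have h2 : (2 : F) ≠ 0 := two_ne_zero_of_forall_sq_ne_neg_one hneg
  { toFun := fun g => g.1 1 0 / (1 + g.1 0 0)
    invFun := fun m =>
      ⟨mkSL2 ((1 - m ^ 2) / (1 + m ^ 2)) (-(2 * m / (1 + m ^ 2))) (2 * m / (1 + m ^ 2))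
        ((1 - m ^ 2) / (1 + m ^ 2)) (by have := hden m; field_simp; ring), by
        refine ⟨by simp [mem_nonsplitTorus], fun h => h2 ?_⟩
        have h00 := congrArg (fun g : SL(2, F) => g 0 0) h
        simp only [coe_mkSL2, Matrix.of_apply, Matrix.cons_val, Matrix.SpecialLinearGroup.coe_neg,
          Matrix.SpecialLinearGroup.coe_one, Matrix.neg_apply, Matrix.one_apply_eq,
          div_eq_iff (hden m)] at h00
        linear_combination h00⟩
    left_inv := fun ⟨g, hg, hg1⟩ => by
      have hA : 1 + g 0 0 ≠ 0 := fun h => hg1 (eq_neg_one_of_mem_nonsplitTorus hg h)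
      have hsq := sq_add_sq_eq_one_of_mem_nonsplitTorus hg
      have hnorm : 1 + (g 1 0 / (1 + g 0 0)) ^ 2 = 2 / (1 + g 0 0) := by
        field_simp
        linear_combination hsq
      refine Subtype.ext (ext_of_mem_nonsplitTorus (by simp [mem_nonsplitTorus]) hg ?_ ?_) <;>
        simp only [hnorm, coe_mkSL2, Matrix.of_apply, Matrix.cons_val] <;> field_simp
      linear_combination -hsq
    right_inv := fun m => by
      have hm := hden m
      have hA : 1 + (1 - m ^ 2) / (1 + m ^ 2) = 2 / (1 + m ^ 2) := by field_simp; ring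
      simp only [coe_mkSL2, Matrix.of_apply, Matrix.cons_val, hA]
      field_simp }

lemma card_nonsplitTorus [Fintype F] (hneg : ∀ x : F, x ^ 2 ≠ -1) :
    Nat.card (nonsplitTorus F) = Fintype.card F + 1 := by
  have hmem : (-1 : SL(2, F)) ∈ (nonsplitTorus F : Set SL(2, F)) := by simp [mem_nonsplitTorus]
  rw [← SetLike.coe_sort_coe, Nat.card_coe_set_eq, ← Set.ncard_sdiff_singleton_add_one hmem,
    ← Nat.card_coe_set_eq, Nat.card_congr (nonsplitTorusEquiv hneg), Nat.card_eq_fintype_card]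

lemma card_nonsplitNormalizer [Fintype F] (hneg : ∀ x : F, x ^ 2 ≠ -1) :
    Nat.card (nonsplitNormalizer F) = 2 * (Fintype.card F + 1) := by
  rw [← card_nonsplitTorus hneg]
  obtain ⟨a, b, hab⟩ := exists_sq_add_sq_eq (-1 : F)
  refine card_eq_two_mul_card_of_mul_mem nonsplitTorus_le_nonsplitNormalizer
    (s := mkSL2 a b b (-a) (by linear_combination -hab)) (by simp [mem_nonsplitNormalizer])
    (fun hs => ?_) fun _ hg _ hh => mul_mem_nonsplitTorus hg hh
  have hb : b = -b := by simpa using hs.2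
  have hb0 : b = 0 := mul_left_cancel₀ (two_ne_zero_of_forall_sq_ne_neg_one hneg)
    (by linear_combination hb)
  exact hneg a (by linear_combination hab - b * hb0)

lemma two_mul_index_nonsplitNormalizer [Fintype F] (hneg : ∀ x : F, x ^ 2 ≠ -1) :
    2 * (nonsplitNormalizer F).index = Fintype.card F * (Fintype.card F - 1) := by
  have h := (nonsplitNormalizer F).card_mul_index
  rw [card_SL2, card_nonsplitNormalizer hneg] at h
  refine Nat.eq_of_mul_eq_mul_left (show 0 < Fintype.card F + 1 by omega) ?_
  linear_combination h

/-- The matrix with rows `(a, -c)` and `(c, a)` acts as multiplication by `a + i c`. -/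
def rotationHom (F : Type*) [Field F] {K : Type*} [Field K] [Algebra F K] {i : K}
    (hi : i ^ 2 = -1) : nonsplitTorus F →* K where
  toFun g := algebraMap F K (g.1 0 0) + i * algebraMap F K (g.1 1 0)
  map_one' := by simp
  map_mul' := by
    rintro ⟨g, hg, hg'⟩ ⟨h, hh, hh'⟩
    simp only [Subgroup.coe_mul, SL2_mul_apply, hg', ← hg, map_add, map_mul, map_neg]
    linear_combination -algebraMap F K (g 1 0) * algebraMap F K (h 1 0) * hi

lemma rotationHom_injective {K : Type*} [Field K] [Algebra F K] {i : K} (hi : i ^ 2 = -1)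
    (h2 : (2 : F) ≠ 0) : Function.Injective (rotationHom F hi) := fun g h hgh => by
  let φ := algebraMap F K
  have h2' : (2 : K) ≠ 0 := map_ofNat φ 2 ▸ (map_ne_zero φ).2 h2
  have hi0 : i ≠ 0 := by rintro rfl; norm_num at hi
  have hnorm : ∀ g : nonsplitTorus F,
      (φ (g.1 0 0) + i * φ (g.1 1 0)) * (φ (g.1 0 0) - i * φ (g.1 1 0)) = 1 := fun g => by
    have := congrArg φ (sq_add_sq_eq_one_of_mem_nonsplitTorus g.2)
    simp only [map_add, map_pow, map_one] at this
    linear_combination this - φ (g.1 1 0) ^ 2 * hi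
  replace hgh : φ (g.1 0 0) + i * φ (g.1 1 0) = φ (h.1 0 0) + i * φ (h.1 1 0) := hgh
  have hconj : φ (g.1 0 0) - i * φ (g.1 1 0) = φ (h.1 0 0) - i * φ (h.1 1 0) :=
    mul_left_cancel₀ (left_ne_zero_of_mul_eq_one (hnorm h)) (by rw [hnorm h, ← hgh, hnorm g])
  refine Subtype.ext (ext_of_mem_nonsplitTorus g.2 h.2 (φ.injective ?_) (φ.injective ?_))
  · exact mul_left_cancel₀ h2' (by linear_combination hgh + hconj)
  · exact mul_left_cancel₀ (mul_ne_zero h2' hi0) (by linear_combination hgh - hconj)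

lemma isCyclic_nonsplitTorus [Finite F] (h2 : (2 : F) ≠ 0) : IsCyclic (nonsplitTorus F) := by
  obtain ⟨i, hi⟩ := IsAlgClosed.exists_pow_nat_eq (-1 : AlgebraicClosure F) two_pos
  exact isCyclic_of_injective_ringHom _ (rotationHom_injective hi h2)

end Order

section Conjugacy

variable {F : Type*} [Field F]

/-- The noncentral elements of the nonsplit torus. -/
def nonsplitSet (F : Type*) [Field F] : Set SL(2, F) :=
  {g | g ∈ nonsplitTorus F ∧ g ∉ Subgroup.center SL(2, F)}

lemma isElliptic_of_mem_nonsplitTorus (hneg : ∀ x : F, x ^ 2 ≠ -1) {g : SL(2, F)}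
    (hg : g ∈ nonsplitTorus F) (hcenter : g ∉ Subgroup.center SL(2, F)) : IsElliptic g := by
  intro l hl
  have h10 := lower_ne_zero_of_mem_nonsplitTorus hg hcenter
  refine hneg ((l - g 0 0) / g 1 0) ?_
  rw [Matrix.trace_fin_two, ← hg.1] at hl
  field_simp
  linear_combination hl + sq_add_sq_eq_one_of_mem_nonsplitTorus hg

lemma mem_nonsplitNormalizer_of_conj_mem (h2 : (2 : F) ≠ 0) {h : SL(2, F)}
    (hh : h ∈ nonsplitTorus F) (hcenter : h ∉ Subgroup.center SL(2, F)) {x : SL(2, F)}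
    (hx : x * h * x⁻¹ ∈ nonsplitTorus F) : x ∈ nonsplitNormalizer F := by
  obtain ⟨k, hk⟩ : ∃ k, k = x * h * x⁻¹ := ⟨_, rfl⟩
  have htrace := trace_eq_of_isConj (isConj_iff.2 ⟨x, hk.symm⟩)
  rw [← hk] at hx
  have hcomm : x * h = k * x := by rw [hk, inv_mul_cancel_right]
  rw [Matrix.trace_fin_two, Matrix.trace_fin_two, ← hh.1, ← hx.1] at htrace
  have h00 : k 0 0 = h 0 0 := mul_left_cancel₀ h2 (by linear_combination -htrace)
  have hlower : (k 1 0 - h 1 0) * (k 1 0 + h 1 0) = 0 := by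
    linear_combination sq_add_sq_eq_one_of_mem_nonsplitTorus hx -
      sq_add_sq_eq_one_of_mem_nonsplitTorus hh - (k 0 0 + h 0 0) * h00
  have hc := lower_ne_zero_of_mem_nonsplitTorus hh hcenter
  have e00 := congrArg (fun g : SL(2, F) => g 0 0) hcomm
  have e01 := congrArg (fun g : SL(2, F) => g 0 1) hcomm
  simp only [SL2_mul_apply, hh.2, hx.2, ← hh.1, h00] at e00 e01
  rcases mul_eq_zero.1 hlower with hsame | hopp
  · exact Or.inl ⟨mul_left_cancel₀ hc (by linear_combination -e01 + x 1 1 * hsame),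
      mul_left_cancel₀ hc (by linear_combination e00 - x 1 0 * hsame)⟩
  · exact Or.inr ⟨mul_left_cancel₀ hc (by linear_combination -e01 + x 1 1 * hopp),
      mul_left_cancel₀ hc (by linear_combination e00 - x 1 0 * hopp)⟩

lemma sum_norm_sq_nonsplitSet_le [Fintype F] (hneg : ∀ x : F, x ^ 2 ≠ -1)
    {V : Type*} [AddCommGroup V] [Module ℂ V] {ρ : Representation ℂ SL(2, F) V}
    (hell : ∑ g with IsElliptic g, ‖ρ.character g‖ ^ 2 ≤
      Fintype.card F * ((Fintype.card F : ℝ) - 1) * (Fintype.card F - 3)) :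
    ∑ g with g ∈ nonsplitSet F, ‖ρ.character g‖ ^ 2 ≤ 2 * ((Fintype.card F : ℝ) - 3) := by
  have hconj := index_mul_sum_le_sum_conjugatesOfSet (f := fun g => ‖ρ.character g‖ ^ 2)
    (fun _ => sq_nonneg _) (fun x g => by rw [ρ.char_conj])
    (X := nonsplitSet F)
    fun h hh x hx => mem_nonsplitNormalizer_of_conj_mem
      (two_ne_zero_of_forall_sq_ne_neg_one hneg) hh.1 hh.2 hx.1
  have hsub : ∑ g with g ∈ Group.conjugatesOfSet (nonsplitSet F), ‖ρ.character g‖ ^ 2 ≤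
      ∑ g with IsElliptic g, ‖ρ.character g‖ ^ 2 := by
    refine Finset.sum_le_sum_of_subset_of_nonneg
      (Finset.monotone_filter_right _ fun g _ hg l => ?_) fun _ _ _ => sq_nonneg _
    obtain ⟨h, hh, hgh⟩ := Group.mem_conjugatesOfSet_iff.1 hg
    rw [← trace_eq_of_isConj hgh]
    exact isElliptic_of_mem_nonsplitTorus hneg hh.1 hh.2 l
  have hq : (1 : ℝ) < Fintype.card F := by exact_mod_cast Fintype.one_lt_card
  have hindex : 2 * ((nonsplitNormalizer F).index : ℝ) =
      Fintype.card F * ((Fintype.card F : ℝ) - 1) := by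
    have := congrArg (Nat.cast (R := ℝ)) (two_mul_index_nonsplitNormalizer hneg)
    rwa [Nat.cast_mul, Nat.cast_mul, Nat.cast_two, Nat.cast_pred Fintype.card_pos] at this
  refine le_of_mul_le_mul_left ?_ (mul_pos (by linarith) (by linarith) :
    (0 : ℝ) < Fintype.card F * ((Fintype.card F : ℝ) - 1))
  rw [← hindex] at hell ⊢
  linarith

end Conjugacy

section NonsplitDihedral

variable {F : Type} [Field F] [Fintype F] {V : Type} [AddCommGroup V] [Module ℂ V]
  [FiniteDimensional ℂ V]

lemma sum_nonsplitTorus_eq (f : SL(2, F) → ℝ) :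
    ∑ h : nonsplitTorus F, f h =
      ∑ z : Subgroup.center SL(2, F), f z + ∑ g with g ∈ nonsplitSet F, f g := by
  rw [← Finset.sum_subtype (Finset.univ.filter (· ∈ nonsplitTorus F)) (by simp) f,
    ← Finset.sum_subtype (Finset.univ.filter (· ∈ Subgroup.center SL(2, F))) (by simp) f,
    ← Finset.sum_filter_add_sum_filter_not _ (· ∈ Subgroup.center SL(2, F)),
    Finset.filter_filter, Finset.filter_filter]
  congr 2 <;> ext g
  · simpa only [Finset.mem_filter_univ, and_iff_right_iff_imp] using
      fun hg => center_le_nonsplitTorus hg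
  · simp only [Finset.mem_filter_univ]
    exact Iff.rfl

lemma odd_card_of_forall_sq_ne_neg_one (hneg : ∀ x : F, x ^ 2 ≠ -1) : Odd (Fintype.card F) :=
  Nat.odd_iff.2 (FiniteField.odd_card_of_char_ne_two fun h =>
    two_ne_zero_of_forall_sq_ne_neg_one hneg (by
      have := ringChar.of_eq h
      exact CharTwo.two_eq_zero))

lemma sum_norm_sq_map_nonsplitTorus_le (hneg : ∀ x : F, x ^ 2 ≠ -1)
    (ρ : Representation ℂ PSL(2, F) V)
    (hell : ∑ g with IsElliptic g, ‖ρ.character (toPSL F g)‖ ^ 2 ≤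
      Fintype.card F * ((Fintype.card F : ℝ) - 1) * (Fintype.card F - 3)) :
    ∑ x : (nonsplitTorus F).map (toPSL F), ‖ρ.character x‖ ^ 2 ≤
      (Module.finrank ℂ V : ℝ) ^ 2 + (Fintype.card F - 3) := by
  have hε := centerOrder_eq_two (odd_card_of_forall_sq_ne_neg_one hneg)
  have hmap := sum_comp_eq_card_ker_nsmul_sum_map (ker_toPSL.trans_le center_le_nonsplitTorus)
    fun x => ‖ρ.character x‖ ^ 2
  have hcenter : ∀ z : Subgroup.center SL(2, F),
      ‖ρ.character (toPSL F z)‖ ^ 2 = (Module.finrank ℂ V : ℝ) ^ 2 := fun z => by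
    rw [toPSL_eq_one_iff.2 z.2, ρ.char_one, Complex.norm_natCast]
  rw [sum_nonsplitTorus_eq fun g => ‖ρ.character (toPSL F g)‖ ^ 2,
    Finset.sum_congr rfl fun z _ => hcenter z, Finset.sum_const, Finset.card_univ,
    ← Nat.card_eq_fintype_card, ker_toPSL, card_center_SL2, hε, nsmul_eq_mul, nsmul_eq_mul,
    Nat.cast_two] at hmap
  have hnoncentral : ∑ g with g ∈ nonsplitSet F, ‖ρ.character (toPSL F g)‖ ^ 2 ≤
      2 * ((Fintype.card F : ℝ) - 3) :=
    sum_norm_sq_nonsplitSet_le hneg (ρ := MonoidHom.comp ρ (toPSL F)) hell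
  linarith

lemma two_mul_card_map_nonsplitTorus (hneg : ∀ x : F, x ^ 2 ≠ -1) :
    2 * Nat.card ((nonsplitTorus F).map (toPSL F)) = Fintype.card F + 1 := by
  rw [← card_nonsplitTorus hneg, ← centerOrder_mul_card_map center_le_nonsplitTorus,
    centerOrder_eq_two (odd_card_of_forall_sq_ne_neg_one hneg)]

lemma sumInducedProperty_of_nonsplit (P : Sylow 2 PSL(2, F)) (ρ : Representation ℂ PSL(2, F) V)
    (hneg : ∀ x : F, x ^ 2 ≠ -1) (hd : Module.finrank ℂ V + 1 = Fintype.card F)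
    (hell : ∑ g with IsElliptic g, ‖ρ.character (toPSL F g)‖ ^ 2 ≤
      Fintype.card F * ((Fintype.card F : ℝ) - 1) * (Fintype.card F - 3)) :
    SumInducedProperty 2 (P : Subgroup PSL(2, F)) ρ.character (Module.finrank ℂ V) := by
  have hF := odd_card_of_forall_sq_ne_neg_one hneg
  have hcyclic := isCyclic_nonsplitTorus (two_ne_zero_of_forall_sq_ne_neg_one hneg)
  have hq : Fintype.card F % 4 = 3 := by
    by_contra h
    obtain ⟨x, hx⟩ := FiniteField.isSquare_neg_one_iff.2 h
    exact hneg x (by rw [hx, sq])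
  let T := (nonsplitTorus F).map (toPSL F)
  have hT : 2 * Nat.card T = Fintype.card F + 1 := two_mul_card_map_nonsplitTorus hneg
  let σ : Representation ℂ T V := MonoidHom.comp ρ T.subtype
  have hdT : Module.finrank ℂ V + 2 = 2 * Nat.card T := by omega
  have hsum : ∑ x, ‖σ.character x‖ ^ 2 ≤ Nat.card T * (4 * Nat.card T - 6 : ℝ) := by
    refine (sum_norm_sq_map_nonsplitTorus_le hneg ρ hell).trans_eq ?_
    have hT' : 2 * (Nat.card T : ℝ) = Fintype.card F + 1 := by exact_mod_cast hT
    have hd' : (Module.finrank ℂ V : ℝ) + 1 = Fintype.card F := by exact_mod_cast hd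
    rw [← hd'] at hT' ⊢
    rw [show (Module.finrank ℂ V : ℝ) = 2 * Nat.card T - 2 by linarith]
    ring
  have : IsCyclic T := isCyclic_of_surjective _ ((toPSL F).subgroupMap_surjective _)
  have : Nontrivial T := Finite.one_lt_card_iff_nontrivial.1 (by omega)
  let _ : CommGroup T := IsCyclic.commGroup
  refine sumInducedProperty_of_dihedral_SL2 P ρ hF center_le_nonsplitTorus ?_
    (fun _ hx _ hy => mul_mem_nonsplitTorus hx hy)
    (fun _ => trace_eq_zero_of_mem_nonsplitNormalizer)
    (by rw [card_nonsplitNormalizer hneg, card_nonsplitTorus hneg]) ?_ (by omega)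
    (sum_norm_character_lt_two_mul_finrank σ hdT hsum)
  · obtain ⟨j, hj⟩ : ∃ j, Fintype.card F = 4 * j + 3 := ⟨Fintype.card F / 4, by omega⟩
    have hindex := two_mul_index_nonsplitNormalizer hneg
    rw [hj, show 4 * j + 3 - 1 = 2 * (2 * j + 1) by omega, mul_left_comm] at hindex
    rw [Nat.eq_of_mul_eq_mul_left two_pos hindex, ← even_iff_two_dvd, Nat.not_even_iff_odd]
    exact Odd.mul ⟨2 * j + 1, by ring⟩ ⟨j, rfl⟩
  · exact norm_character_le_two σ hdT hsum
      (z := ⟨_, Subgroup.mem_map_of_mem _ weyl_mem_nonsplitTorus⟩)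
      fun h => weyl_notMem_center (toPSL_eq_one_iff.1 (congrArg Subtype.val h))

end NonsplitDihedral

/-! ### Restriction to Sylow subgroups, shape by shape -/

section Weyl

variable {F : Type*} [Field F] [Fintype F]

lemma exists_isConj_weyl_diag (hq : Fintype.card F % 4 = 1) :
    ∃ b : Fˣ, b ^ 2 ≠ 1 ∧ IsConj (weyl F) (diag b) := by
  have hodd : Odd (Fintype.card F) := Nat.odd_iff.2 (by omega)
  have htwo := two_ne_zero_of_odd_card hodd
  obtain ⟨i, hi⟩ := FiniteField.isSquare_neg_one_iff.2 (show Fintype.card F % 4 ≠ 3 by omega)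
  have hunit : i * -i = 1 := by linear_combination hi
  refine ⟨Units.mkOfMulEqOne i (-i) hunit, fun h => htwo ?_, isConj_weyl hodd ?_⟩
  · have : i ^ 2 = 1 := by simpa [Units.ext_iff] using h
    linear_combination -hi - this
  · simp [Matrix.trace_fin_two, Units.mkOfMulEqOne]

end Weyl

section Index

variable {F : Type*} [Field F] [Fintype F]

lemma index_torus : (torus F).index = Fintype.card F * (Fintype.card F + 1) := by
  have hpos : 0 < Fintype.card F - 1 := Nat.sub_pos_of_lt Fintype.one_lt_card
  refine Nat.eq_of_mul_eq_mul_left hpos ?_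
  conv_lhs => rw [← card_torus]
  rw [Subgroup.card_mul_index, card_SL2]
  ring

/-- The subgroup of upper unitriangular matrices. -/
def unipotent (F : Type*) [Field F] : Subgroup SL(2, F) := unip.toMonoidHom.range

lemma index_unipotent :
    (unipotent F).index = (Fintype.card F - 1) * (Fintype.card F + 1) := by
  have hinj : Function.Injective (unip (F := F)).toMonoidHom := fun x y h => by
    simpa using congrArg (fun g : SL(2, F) => g 0 1) h
  have hcard : Nat.card (unipotent F) = Fintype.card F := by
    rw [← Nat.card_eq_fintype_card]
    exact (Nat.card_congr (MonoidHom.ofInjective hinj).toEquiv).symm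
  have hindex := (unipotent F).card_mul_index
  rw [hcard, card_SL2, mul_assoc] at hindex
  exact Nat.eq_of_mul_eq_mul_left Fintype.card_pos hindex

lemma odd_index_monomial (hq : Fintype.card F % 4 = 1) : Odd (monomial F).index := by
  obtain ⟨j, hj⟩ : ∃ j, Fintype.card F = 4 * j + 1 := ⟨Fintype.card F / 4, by omega⟩
  have hindex := two_mul_index_monomial (F := F)
  rw [hj, show 4 * j + 1 + 1 = 2 * (2 * j + 1) by ring, mul_left_comm] at hindex
  rw [Nat.eq_of_mul_eq_mul_left two_pos hindex]
  exact Odd.mul ⟨2 * j, by ring⟩ ⟨j, rfl⟩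

end Index

section Vanishing

variable {F V : Type*} [Field F] [AddCommGroup V] [Module ℂ V] {ρ : Representation ℂ PSL(2, F) V}

lemma character_eq_zero_of_mem_torus (hdiag : ∀ b : Fˣ, b ^ 2 ≠ 1 →
    ρ.character (toPSL F (diag b)) = 0) {g : SL(2, F)} (hg : g ∈ torus F) (hg1 : toPSL F g ≠ 1) :
    ρ.character (toPSL F g) = 0 := by
  obtain ⟨b, rfl⟩ := hg
  exact hdiag b fun hb => hg1 (toPSL_eq_one_iff.2 (diag_mem_center_iff.2 hb))

lemma character_eq_zero_of_mem_monomial [Fintype F] (hq : Fintype.card F % 4 = 1)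
    (hdiag : ∀ b : Fˣ, b ^ 2 ≠ 1 → ρ.character (toPSL F (diag b)) = 0) {g : SL(2, F)}
    (hg : g ∈ monomial F) (hg1 : toPSL F g ≠ 1) : ρ.character (toPSL F g) = 0 := by
  by_cases hgT : g ∈ torus F
  · exact character_eq_zero_of_mem_torus hdiag hgT hg1
  obtain ⟨b, hb, hconj⟩ := exists_isConj_weyl_diag hq
  have hweyl := isConj_weyl (Nat.odd_iff.2 (by omega)) (trace_eq_zero_of_mem_monomial hg hgT)
  rw [character_eq_of_isConj (hweyl.symm.trans hconj), hdiag b hb]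

end Vanishing

section Cases

variable {F : Type} [Field F] [Fintype F] {V : Type} [AddCommGroup V] [Module ℂ V]
  [FiniteDimensional ℂ V] {p : ℕ} [Fact p.Prime] {ρ : Representation ℂ PSL(2, F) V}

lemma sumInducedProperty_of_steinberg (P : Sylow p PSL(2, F))
    (hd : Module.finrank ℂ V = Fintype.card F)
    (hunip : ∀ x ≠ 0, ρ.character (toPSL F (unip x)) = 0) :
    SumInducedProperty p (P : Subgroup PSL(2, F)) ρ.character (Module.finrank ℂ V) := by
  have hp : p.Prime := Fact.out
  by_cases hpq : p ∣ Fintype.card F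
  swap
  · exact sumInducedProperty_of_not_dvd_finrank _ ρ (hd ▸ hpq)
  obtain ⟨k, hk⟩ := exists_card_eq_centerOrder_mul_add_one F
  refine sumInducedProperty_of_vanishing P ρ ?_ fun x => ?_
  · rw [hd, card_PSL2 hk, mul_assoc]
    exact dvd_mul_right _ _
  refine character_eq_zero_of_mem_of_not_dvd_index toPSL_surjective P.isPGroup'
    (H := unipotent F) ?_ ?_
  · rw [index_unipotent, hp.dvd_mul, not_or]
    refine ⟨fun h => hp.one_lt.ne' (Nat.dvd_one.1 ?_),
      fun h => hp.one_lt.ne' (Nat.dvd_one.1 ((Nat.dvd_add_right hpq).1 h))⟩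
    rwa [← Nat.dvd_add_right h, Nat.sub_add_cancel Fintype.card_pos]
  · rintro _ ⟨x, rfl⟩ hx
    exact hunip x.toAdd fun h => hx (by rw [AddChar.toMonoidHom_apply, h, unip.map_zero_eq_one,
      map_one])

lemma sumInducedProperty_of_halfPrincipal (P : Sylow p PSL(2, F)) (hcenter : centerOrder F = 2)
    (hd : 2 * Module.finrank ℂ V = Fintype.card F + 1)
    (hell : ∀ g, IsElliptic g → ρ.character (toPSL F g) = 0) :
    SumInducedProperty p (P : Subgroup PSL(2, F)) ρ.character (Module.finrank ℂ V) := by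
  have hp : p.Prime := Fact.out
  by_cases hpd : p ∣ Module.finrank ℂ V
  swap
  · exact sumInducedProperty_of_not_dvd_finrank _ ρ hpd
  obtain ⟨k, hk⟩ := exists_card_eq_centerOrder_mul_add_one F
  have hdk : Module.finrank ℂ V = k + 1 := by rw [hcenter] at hk; omega
  refine sumInducedProperty_of_isElliptic P ρ hk ?_ hell ?_
  · rw [card_PSL2 hk, ← hd]
    exact (dvd_mul_left _ _).mul_left _
  · rw [hp.dvd_mul, not_or]
    constructor <;> intro h
    · exact hp.one_lt.ne' (Nat.dvd_one.1 ((Nat.dvd_add_right h).1 (hdk ▸ hpd)))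
    · exact hp.one_lt.ne' (Nat.dvd_one.1 ((Nat.dvd_add_right h).1 (hd ▸ hpd.mul_left 2)))

lemma sum_norm_map_torus_le (hχ : ∀ b : Fˣ, b ^ 2 ≠ 1 → ‖ρ.character (toPSL F (diag b))‖ ≤ 2) :
    ∑ x : (torus F).map (toPSL F), ‖ρ.character x‖ ≤
      Module.finrank ℂ V + 2 * (Nat.card ((torus F).map (toPSL F)) - 1) := by
  have hle : ∀ x : (torus F).map (toPSL F), x ≠ 1 → ‖ρ.character x‖ ≤ 2 := by
    rintro ⟨_, _, ⟨b, rfl⟩, rfl⟩ hx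
    exact hχ b fun hb => hx (Subtype.ext (toPSL_eq_one_iff.2 (diag_mem_center_iff.2 hb)))
  rw [← Finset.add_sum_erase _ _ (Finset.mem_univ 1), Subgroup.coe_one, ρ.char_one,
    Complex.norm_natCast]
  gcongr
  refine (Finset.sum_le_card_nsmul _ _ 2 fun x hx => hle x (Finset.ne_of_mem_erase hx)).trans_eq ?_
  rw [Finset.card_erase_of_mem (Finset.mem_univ _), Finset.card_univ, ← Nat.card_eq_fintype_card,
    nsmul_eq_mul, Nat.cast_pred Nat.card_pos, mul_comm]

lemma sumInducedProperty_two_of_principal (P : Sylow 2 PSL(2, F))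
    (hq : Fintype.card F % 4 = 1) (hd : Module.finrank ℂ V = Fintype.card F + 1)
    (hχ : ∀ b : Fˣ, b ^ 2 ≠ 1 → ‖ρ.character (toPSL F (diag b))‖ ≤ 2) :
    SumInducedProperty 2 (P : Subgroup PSL(2, F)) ρ.character (Module.finrank ℂ V) := by
  have hF : Odd (Fintype.card F) := Nat.odd_iff.2 (by omega)
  have : IsCyclic (torus F) := isCyclic_of_surjective _ (diag (F := F)).rangeRestrict_surjective
  refine sumInducedProperty_of_dihedral_SL2 P ρ hF center_le_torus (N := monomial F) ?_
    (fun _ hx _ hy => mul_mem_torus hx hy) (fun _ => trace_eq_zero_of_mem_monomial)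
    (by rw [card_monomial, card_torus]) ?_ (by omega) ?_
  · exact (odd_index_monomial hq).not_two_dvd_nat
  · obtain ⟨b, hb, hconj⟩ := exists_isConj_weyl_diag hq
    rw [character_eq_of_isConj hconj]
    exact hχ b hb
  · obtain ⟨k, hk⟩ := exists_card_eq_centerOrder_mul_add_one F
    have hT := card_map_torus hk
    rw [centerOrder_eq_two hF] at hk
    have hd' : (Module.finrank ℂ V : ℝ) = 2 * Nat.card ((torus F).map (toPSL F)) + 2 := by
      rw [hd, hT, hk]
      push_cast
      ring
    linarith [sum_norm_map_torus_le hχ]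

lemma sumInducedProperty_of_principal (P : Sylow p PSL(2, F))
    (hd : Module.finrank ℂ V = Fintype.card F + 1)
    (hell : ∀ g, IsElliptic g → ρ.character (toPSL F g) = 0)
    (hχ : ∀ b : Fˣ, b ^ 2 ≠ 1 → ‖ρ.character (toPSL F (diag b))‖ ≤ 2) :
    SumInducedProperty p (P : Subgroup PSL(2, F)) ρ.character (Module.finrank ℂ V) := by
  have hp : p.Prime := Fact.out
  by_cases hpd : p ∣ Fintype.card F + 1
  swap
  · exact sumInducedProperty_of_not_dvd_finrank _ ρ (hd ▸ hpd)
  obtain ⟨k, hk⟩ := exists_card_eq_centerOrder_mul_add_one F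
  by_cases hpk : p ∣ k
  · have hp2 : p ∣ 2 := by
      rw [hk, add_assoc] at hpd
      exact (Nat.dvd_add_right (hpk.mul_left _)).1 hpd
    obtain rfl := (Nat.prime_dvd_prime_iff_eq hp Nat.prime_two).1 hp2
    have hε : centerOrder F = 2 := centerOrder_eq_two (Nat.odd_iff.2 (by omega))
    exact sumInducedProperty_two_of_principal P (by rw [hε] at hk; omega) hd hχ
  · refine sumInducedProperty_of_isElliptic P ρ hk ?_ hell ?_
    · rw [hd, card_PSL2 hk]
      exact dvd_mul_left _ _
    · rw [hp.dvd_mul, not_or]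
      exact ⟨hpk, fun h => hp.one_lt.ne' (Nat.dvd_one.1 ((Nat.dvd_add_right h).1 hpd))⟩

lemma sumInducedProperty_of_discrete_of_dvd (P : Sylow p PSL(2, F)) {k : ℕ}
    (hk : Fintype.card F = centerOrder F * k + 1) (hpk : p ∣ k)
    (hd : Module.finrank ℂ V ∣ Nat.card PSL(2, F))
    (hdiag : ∀ b : Fˣ, b ^ 2 ≠ 1 → ρ.character (toPSL F (diag b)) = 0) :
    SumInducedProperty p (P : Subgroup PSL(2, F)) ρ.character (Module.finrank ℂ V) := by
  have hp : p.Prime := Fact.out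
  refine sumInducedProperty_of_vanishing P ρ hd fun x => ?_
  rcases hp.eq_two_or_odd' with rfl | hodd
  · have hq : Fintype.card F % 4 = 1 := by
      obtain ⟨j, rfl⟩ := hpk
      have hε : centerOrder F = 2 :=
        centerOrder_eq_two ⟨centerOrder F * j, by rw [hk]; ring⟩
      rw [hε] at hk
      omega
    exact character_eq_zero_of_mem_of_not_dvd_index toPSL_surjective P.isPGroup'
      (odd_index_monomial hq).not_two_dvd_nat fun _ => character_eq_zero_of_mem_monomial hq hdiag
  · refine character_eq_zero_of_mem_of_not_dvd_index toPSL_surjective P.isPGroup' ?_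
      fun _ => character_eq_zero_of_mem_torus hdiag
    rw [index_torus, hk, hp.dvd_mul, not_or, add_assoc, Nat.dvd_add_right (hpk.mul_left _),
      Nat.dvd_add_right (hpk.mul_left _)]
    exact ⟨hp.not_dvd_one, fun h => hp.one_lt.ne' (Nat.dvd_one.1 (hodd.coprime_two_right ▸
      Nat.dvd_gcd dvd_rfl h))⟩

lemma sumInducedProperty_of_discrete (P : Sylow p PSL(2, F)) (hd0 : Module.finrank ℂ V ≠ 0) {s : ℕ}
    (hd : centerOrder F * Module.finrank ℂ V = s * (Fintype.card F - 1)) (hs : s ≤ centerOrder F)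
    (hdiag : ∀ b : Fˣ, b ^ 2 ≠ 1 → ρ.character (toPSL F (diag b)) = 0)
    (hell : s = 2 → ∑ g with IsElliptic g, ‖ρ.character (toPSL F g)‖ ^ 2 ≤
      Fintype.card F * ((Fintype.card F : ℝ) - 1) * (Fintype.card F - 3)) :
    SumInducedProperty p (P : Subgroup PSL(2, F)) ρ.character (Module.finrank ℂ V) := by
  have hp : p.Prime := Fact.out
  obtain ⟨k, hk⟩ := exists_card_eq_centerOrder_mul_add_one F
  have hdk : Module.finrank ℂ V = s * k := by
    rw [hk, Nat.add_sub_cancel, mul_left_comm] at hd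
    exact Nat.eq_of_mul_eq_mul_left centerOrder_pos hd
  have hs0 : s ≠ 0 := fun h => hd0 (by rw [hdk, h, zero_mul])
  have hsε : s = 1 ∨ s = 2 ∧ centerOrder F = 2 := by
    have := centerOrder_eq_one_or_two (F := F)
    omega
  by_cases hpk : p ∣ k
  · refine sumInducedProperty_of_discrete_of_dvd P hk hpk ?_ hdiag
    have hs_dvd : s ∣ Fintype.card F + 1 := by
      obtain rfl | ⟨rfl, hε⟩ := hsε
      · exact one_dvd _
      · rw [hε] at hk
        omega
    rw [card_PSL2 hk, hdk, mul_comm s, mul_assoc]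
    exact (mul_dvd_mul_left k hs_dvd).mul_left _
  by_cases hps : p ∣ s
  · obtain rfl | ⟨rfl, hε⟩ := hsε
    · exact absurd hps hp.not_dvd_one
    obtain rfl := (Nat.prime_dvd_prime_iff_eq hp Nat.prime_two).1 hps
    rw [hε] at hk
    refine sumInducedProperty_of_nonsplit P ρ (fun x hx => ?_) (by omega) (hell rfl)
    exact FiniteField.isSquare_neg_one_iff.1 ⟨x, by rw [← hx, sq]⟩ (by omega)
  · exact sumInducedProperty_of_not_dvd_finrank _ ρ (by rw [hdk, hp.dvd_mul]; tauto)

theorem NormOne.sumInducedProperty (hρ : NormOne ρ) (P : Sylow p PSL(2, F)) :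
    SumInducedProperty p (P : Subgroup PSL(2, F)) ρ.character (Module.finrank ℂ V) := by
  have hcenter : ∀ z ∈ Subgroup.center SL(2, F), ρ (toPSL F z) = 1 := fun z hz => by
    rw [toPSL_eq_one_iff.2 hz, map_one]
  have hσ := hρ.comp_surjective (toPSL_surjective (F := F))
  cases hσ.seriesType hcenter with
  | linear hd =>
    exact sumInducedProperty_of_not_dvd_finrank _ ρ (hd ▸ (Fact.out : p.Prime).not_dvd_one)
  | steinberg hd hunip => exact sumInducedProperty_of_steinberg P hd hunip
  | halfPrincipal hε hd hell => exact sumInducedProperty_of_halfPrincipal P hε hd hell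
  | principal hd hell m hm hdiag =>
    refine sumInducedProperty_of_principal P hd hell fun b hb => ?_
    calc ‖ρ.character (toPSL F (diag b))‖ = ‖∑ ψ, (m ψ : ℂ) * ψ (Additive.ofMul b)‖ :=
          congrArg norm (hdiag b hb)
      _ ≤ ∑ ψ, (m ψ : ℝ) := norm_sum_mul_addChar_le m _
      _ = 2 := mod_cast hm
  | discrete s hd hs hdiag hell =>
    exact sumInducedProperty_of_discrete P (Nat.cast_ne_zero.1 hρ.finrank_ne_zero) hd hs hdiag hell

end Cases

end PSL2Restriction

end

theorem strong_form_for_PSL2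
    (q : ℕ) (hq : IsPrimePow q)
    (F : Type) [Field F] [Fintype F] (hF : Fintype.card F = q)
    (p : ℕ) [Fact p.Prime]
    (P : Sylow p (Matrix.SpecialLinearGroup (Fin 2) F ⧸
      Subgroup.center (Matrix.SpecialLinearGroup (Fin 2) F))) :
    ∀ (V : FDRep ℂ (Matrix.SpecialLinearGroup (Fin 2) F ⧸
        Subgroup.center (Matrix.SpecialLinearGroup (Fin 2) F))),
      CategoryTheory.Simple V →
      SumInducedProperty p
        (P : Subgroup (Matrix.SpecialLinearGroup (Fin 2) F ⧸
          Subgroup.center (Matrix.SpecialLinearGroup (Fin 2) F)))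
        V.character (Module.finrank ℂ V) := by
  intro V hV
  have hρ : PSL2Restriction.NormOne V.ρ := by
    rw [PSL2Restriction.NormOne, ← Nat.card_eq_fintype_card]
    exact (FDRep.simple_iff_char_is_norm_one V).1 hV
  exact hρ.sumInducedProperty P
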